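/- arXiv:1906.02675 — 6 statements merged into one kernel-verified Lean document; each statement's English description precedes it below -/
import Mathlib

section
/- Let n ≥ 1 and let U be an open subset of ℝⁿ that is star-shaped about one of its points. If F : U → ℝⁿ is a smooth vector field whose Jacobian is symmetric, i.e. ∂_i F_j (x) = ∂_j F_i (x) for all x ∈ U and all indices i, j, then there exists a smooth function φ : U → ℝ such that F_i = ∂_i φ on U for every i. (Poincaré lemma for 1-forms.) -/
/-!
The vector field is turned into the 1-form `ω x = ⟪F x, ·⟫`; symmetry of the Jacobian says that the
bilinear form `fderiv ℝ ω x` is symmetric, i.e. that `ω` is closed. The potential is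
`φ x = ∫ᶜ z in Path.segment c x, ω z`, with `c` the centre of the star.

If the whole segment `[b, y]` lies in `U`, star-convexity puts the triangle with vertices `c`, `b`,
`y` inside `U`. This triangle is the image of the affine homotopy between the segments `[c, b]` and
`[c, y]`, so the homotopy form of Stokes' theorem for closed 1-forms gives
`φ y = φ b + ∫ᶜ z in Path.segment b y, ω z` (`StarConvex.curveIntegral_segment_add_eq`).
Every `y` in a small ball around `b` qualifies, and differentiating at `y = b` yields `dφ = ω`.
Smoothness of `φ` then follows from that of `ω`.
-/

/-- Partial derivative of `f` at `x` in direction `v`. -/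
noncomputable def pd {E F : Type*} [NormedAddCommGroup E] [NormedSpace ℝ E]
    [NormedAddCommGroup F] [NormedSpace ℝ F] (f : E → F) (v : E) (x : E) : F :=
  fderiv ℝ f x v

open scoped unitInterval Topology
open AffineMap Set

section ClosedForm

variable {E : Type*} [NormedAddCommGroup E] [NormedSpace ℝ E] {U : Set E} {c : E}
  {ω : E → E →L[ℝ] ℝ} {dω : E → E →L[ℝ] E →L[ℝ] ℝ}

/-- A closed 1-form on a star-shaped set integrates to zero along the boundary of a triangle having
one vertex at the centre `c` and the opposite side in the set. -/
theorem StarConvex.curveIntegral_segment_add_eq (hstar : StarConvex ℝ c U)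
    (hω : ∀ x ∈ U, HasFDerivAt ω (dω x) x)
    (hdω : ∀ x ∈ U, ∀ u v, dω x u v = dω x v u)
    {b y : E} (hby : segment ℝ b y ⊆ U) :
    (∫ᶜ x in .segment c b, ω x) + ∫ᶜ x in .segment b y, ω x = ∫ᶜ x in .segment c y, ω x := by
  set φ := ContinuousMap.Homotopy.affine (Path.segment c b : C(I, E)) (Path.segment c y)
  have hφU : range φ ⊆ U := by
    rw [range_subset_iff]
    rintro ⟨s, t⟩
    -- The homotopy at `(s, t)` is also the point at time `t` of the segment from `c` to a point
    -- of `[b, y]`.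
    have h1 : φ (s, t) = lineMap c (lineMap b y (s : ℝ)) (t : ℝ) := by
      simp only [φ, ContinuousMap.Homotopy.affine_apply, ContinuousMap.coe_coe, Path.segment_apply,
        lineMap_apply_module]
      module
    have h2 : lineMap b y (s : ℝ) ∈ U :=
      hby (segment_eq_image_lineMap ℝ b y ▸ mem_image_of_mem _ s.2)
    rw [h1]
    exact hstar.segment_subset h2
      (segment_eq_image_lineMap ℝ c _ ▸ mem_image_of_mem _ t.2)
  have key := φ.curveIntegral_add_curveIntegral_eq_of_hasFDerivWithinAt (t := range φ) (ω := ω)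
    (dω := dω) (fun _ _ _ _ ↦ mem_range_self _)
    (fun x hx ↦ (hω x (hφU hx)).hasFDerivWithinAt)
    (by
      rw [(isCompact_range <| map_continuous _).isClosed.closure_eq]
      exact fun x hx ↦ (hω x <| hφU hx).continuousAt.continuousWithinAt)
    (fun x hx u _ v _ ↦ hdω x (hφU hx) u v)
    (by
      have : EqOn (fun x : ℝ × ℝ ↦ IccExtend zero_le_one (φ.extend x.1) x.2)
          (fun x ↦ lineMap (lineMap c b x.2) (lineMap c y x.2) x.1) (Icc 0 1) := by
        rw [Icc_prod_eq]
        rintro ⟨x, y⟩ ⟨hx, hy⟩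
        lift x to I using hx
        lift y to I using hy
        simp [φ]
      exact .congr (by fun_prop) this)
  convert! key using 2
  · dsimp [φ]
    rw [← Path.cast_segment (Path.segment c b).target (Path.segment c y).target, curveIntegral_cast]
  · dsimp [φ]
    rw [← Path.cast_segment (Path.segment c b).source (Path.segment c y).source]
    simp

theorem StarConvex.hasFDerivAt_curveIntegral_segment (hstar : StarConvex ℝ c U) (hU : IsOpen U)
    (hω : ∀ x ∈ U, HasFDerivAt ω (dω x) x)
    (hdω : ∀ x ∈ U, ∀ u v, dω x u v = dω x v u) {b : E} (hb : b ∈ U) :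
    HasFDerivAt (fun y ↦ ∫ᶜ x in .segment c y, ω x) (ω b) b := by
  obtain ⟨r, hr, hball⟩ := Metric.isOpen_iff.1 hU b hb
  have h1 : HasFDerivAt (fun y ↦ ∫ᶜ x in .segment b y, ω x) (ω b) b :=
    .curveIntegral_segment_source' <| by
      filter_upwards [hU.mem_nhds hb] with z hz using (hω z hz).continuousAt
  refine (h1.const_add (∫ᶜ x in .segment c b, ω x)).congr_of_eventuallyEq ?_
  filter_upwards [Metric.ball_mem_nhds b hr] with y hy
  exact (hstar.curveIntegral_segment_add_eq hω hdω
    (((convex_ball b r).segment_subset (Metric.mem_ball_self hr) hy).trans hball)).symm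

end ClosedForm

/-- **Poincaré lemma for 1-forms.** On an open star-shaped subset `U` of `ℝⁿ`, a smooth
vector field with symmetric Jacobian is the gradient of a smooth function. -/
theorem poincare_lemma_one_forms (n : ℕ) (hn : 1 ≤ n)
    (U : Set (EuclideanSpace ℝ (Fin n))) (hU : IsOpen U)
    (c : EuclideanSpace ℝ (Fin n)) (hc : c ∈ U) (hstar : StarConvex ℝ c U)
    (F : EuclideanSpace ℝ (Fin n) → EuclideanSpace ℝ (Fin n))
    (hF : ContDiffOn ℝ (⊤ : ℕ∞) F U)
    (hsym : ∀ x ∈ U, ∀ i j : Fin n,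
      pd (fun y => F y j) (EuclideanSpace.single i 1) x
        = pd (fun y => F y i) (EuclideanSpace.single j 1) x) :
    ∃ φ : EuclideanSpace ℝ (Fin n) → ℝ, ContDiffOn ℝ (⊤ : ℕ∞) φ U ∧
      ∀ x ∈ U, ∀ i : Fin n, F x i = pd φ (EuclideanSpace.single i 1) x := by
  set L : EuclideanSpace ℝ (Fin n) →L[ℝ] EuclideanSpace ℝ (Fin n) →L[ℝ] ℝ := innerSL ℝ with hL
  have hLsingle (v : EuclideanSpace ℝ (Fin n)) (i : Fin n) :
      L v (EuclideanSpace.single i 1) = v i := by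
    rw [hL, innerSL_apply_apply, EuclideanSpace.inner_single_right]
    simp
  have hFd : ∀ x ∈ U, HasFDerivAt F (fderiv ℝ F x) x := fun x hx ↦
    ((hF.differentiableOn (by simp)).differentiableAt (hU.mem_nhds hx)).hasFDerivAt
  have hω : ∀ x ∈ U, HasFDerivAt (fun y ↦ L (F y)) (L ∘L fderiv ℝ F x) x := fun x hx ↦
    L.hasFDerivAt.comp x (hFd x hx)
  have hpd : ∀ x ∈ U, ∀ i v, pd (fun y ↦ F y i) v x = fderiv ℝ F x v i := by
    intro x hx i v
    have := ((EuclideanSpace.proj (𝕜 := ℝ) i).hasFDerivAt.comp x (hFd x hx)).fderiv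
    exact congrArg (fun T ↦ T v) this
  have hdω : ∀ x ∈ U, ∀ u v, (L ∘L fderiv ℝ F x) u v = (L ∘L fderiv ℝ F x) v u := by
    intro x hx u v
    set B := (L ∘L fderiv ℝ F x).toLinearMap₁₂ with hB
    have : B = B.flip := by
      refine LinearMap.ext_basis (EuclideanSpace.basisFun (Fin n) ℝ).toBasis
        (EuclideanSpace.basisFun (Fin n) ℝ).toBasis fun i j ↦ ?_
      have := hsym x hx i j
      rw [hpd x hx, hpd x hx] at this
      simpa [hB, hLsingle] using this
    exact LinearMap.congr_fun₂ this u v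
  have hφ : ∀ x ∈ U, HasFDerivAt (fun y ↦ ∫ᶜ z in .segment c y, L (F z)) (L (F x)) x :=
    fun x hx ↦ hstar.hasFDerivAt_curveIntegral_segment hU hω hdω hx
  refine ⟨fun y ↦ ∫ᶜ z in .segment c y, L (F z), ?_, fun x hx i ↦ ?_⟩
  · rw [contDiffOn_infty_iff_fderiv_of_isOpen hU]
    refine ⟨fun x hx ↦ (hφ x hx).differentiableAt.differentiableWithinAt, ?_⟩
    exact (L.contDiff.comp_contDiffOn hF).congr fun x hx ↦ (hφ x hx).fderiv
  · rw [pd, (hφ x hx).fderiv, hLsingle]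
end

section
/- Let n ≥ 1 and let U be an open subset of ℝⁿ that is star-shaped about one of its points. Let F be a smooth antisymmetric 2-tensor field on U (F_{ij} = −F_{ji}) that is closed, i.e. ∂_k F_{ij} + ∂_i F_{jk} + ∂_j F_{ki} = 0 on U for all i, j, k. Then there exists a smooth vector field A : U → ℝⁿ with F_{ij} = ∂_i A_j − ∂_j A_i on U for all i, j. (Poincaré lemma for 2-forms.) -/
open Set Topology MeasureTheory Interval in
/-- Differentiation under the integral sign over `[0, 1]`. The integrand need only be `C¹` on an
open neighbourhood `W` of the segment `{x₀} × [0, 1]`: by the tube lemma, `W` and a uniform bound on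
the derivative persist over a neighbourhood of `x₀`. -/
theorem hasFDerivAt_integral_Icc {E G : Type*} [NormedAddCommGroup E] [NormedSpace ℝ E]
    [NormedAddCommGroup G] [NormedSpace ℝ G] {W : Set (E × ℝ)} (hW : IsOpen W)
    {f : E × ℝ → G} (hf : ContDiffOn ℝ 1 f W) {x₀ : E}
    (hx : ∀ t ∈ Icc (0 : ℝ) 1, (x₀, t) ∈ W) :
    HasFDerivAt (fun x => ∫ t in (0 : ℝ)..1, f (x, t))
      (∫ t in (0 : ℝ)..1, (fderiv ℝ f (x₀, t)).comp (ContinuousLinearMap.inl ℝ E ℝ)) x₀ := by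
  set f' : E × ℝ → E →L[ℝ] G :=
    fun p => (fderiv ℝ f p).comp (ContinuousLinearMap.inl ℝ E ℝ) with hf'
  have hf'c : ContinuousOn f' W :=
    (hf.continuousOn_fderiv_of_isOpen hW le_rfl).clm_comp continuousOn_const
  have hsub : Ι (0 : ℝ) 1 ⊆ Icc 0 1 := by
    rw [uIoc_of_le zero_le_one]; exact Ioc_subset_Icc_self
  have hmaps : ∀ x : E, Continuous (fun t : ℝ => (x, t)) := fun x => by fun_prop
  obtain ⟨C, hC⟩ := (isCompact_Icc (a := (0 : ℝ)) (b := 1)).exists_bound_of_continuousOn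
    (hf'c.comp (hmaps x₀).continuousOn hx)
  have hW' : IsOpen (W ∩ f' ⁻¹' {L | ‖L‖ < C + 1}) :=
    hf'c.isOpen_inter_preimage hW (isOpen_lt continuous_norm continuous_const)
  obtain ⟨u, v, hu, -, hxu, hv, huv⟩ := generalized_tube_lemma (isCompact_singleton (x := x₀))
    (isCompact_Icc (a := (0 : ℝ)) (b := 1)) hW' (by
      rintro ⟨x, t⟩ ⟨hx', ht⟩
      obtain rfl : x = x₀ := hx'
      exact ⟨hx t ht, (hC t ht).trans_lt (lt_add_one C)⟩)
  have hu' : u ∈ 𝓝 x₀ := hu.mem_nhds (hxu rfl)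
  have key : ∀ x ∈ u, ∀ t ∈ Icc (0 : ℝ) 1, (x, t) ∈ W ∧ ‖f' (x, t)‖ < C + 1 :=
    fun x hx t ht => huv (mk_mem_prod hx (hv ht))
  have hcont : ∀ x ∈ u, ContinuousOn (fun t => f (x, t)) (Icc 0 1) := fun x hx =>
    hf.continuousOn.comp (hmaps x).continuousOn fun t ht => (key x hx t ht).1
  refine intervalIntegral.hasFDerivAt_integral_of_dominated_of_fderiv_le (μ := volume)
    (F' := fun x t => f' (x, t)) (bound := fun _ => C + 1) hu' ?_ ?_ ?_ ?_ ?_ ?_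
  · filter_upwards [hu'] with x hx
    exact ((hcont x hx).mono hsub).aestronglyMeasurable measurableSet_uIoc
  · exact ContinuousOn.intervalIntegrable_of_Icc zero_le_one (hcont x₀ (hxu rfl))
  · exact ((hf'c.comp (hmaps x₀).continuousOn hx).mono hsub).aestronglyMeasurable
      measurableSet_uIoc
  · exact .of_forall fun t ht x hx => (key x hx t (hsub ht)).2.le
  · exact intervalIntegrable_const
  · refine .of_forall fun t ht x hx => ?_
    have h1 : HasFDerivAt f (fderiv ℝ f (x, t)) (x, t) :=
      ((hf.differentiableOn one_ne_zero).differentiableAt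
        (hW.mem_nhds (key x hx t (hsub ht)).1)).hasFDerivAt
    exact h1.comp x (hasFDerivAt_prodMk_left x t)

open Set in
/-- A parametric integral over `[0, 1]` of a smooth integrand is smooth in the parameter. The target
`G` shares the universe of `E` because the induction replaces `G` by `E →L[ℝ] G`. -/
theorem contDiffOn_integral_Icc.{u} {E : Type u} [NormedAddCommGroup E] [NormedSpace ℝ E]
    {W : Set (E × ℝ)} (hW : IsOpen W) {U : Set E} (hU : IsOpen U)
    (hUW : ∀ x ∈ U, ∀ t ∈ Icc (0 : ℝ) 1, (x, t) ∈ W) (m : ℕ) :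
    ∀ {G : Type u} [NormedAddCommGroup G] [NormedSpace ℝ G] {f : E × ℝ → G},
      ContDiffOn ℝ (⊤ : ℕ∞) f W →
      ContDiffOn ℝ m (fun x => ∫ t in (0 : ℝ)..1, f (x, t)) U := by
  induction m with
  | zero =>
    intro G _ _ f hf
    refine contDiffOn_zero.2 fun x hx => ?_
    exact (hasFDerivAt_integral_Icc hW (hf.of_le (by exact_mod_cast le_top))
      (hUW x hx)).continuousAt.continuousWithinAt
  | succ m ih =>
    intro G _ _ f hf
    have hd := fun x (hx : x ∈ U) =>
      hasFDerivAt_integral_Icc hW (hf.of_le (by exact_mod_cast le_top)) (hUW x hx)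
    push_cast
    rw [contDiffOn_succ_iff_fderiv_of_isOpen hU]
    refine ⟨fun x hx => (hd x hx).differentiableAt.differentiableWithinAt, by simp, ?_⟩
    refine ContDiffOn.congr (ih (f := fun p =>
      (fderiv ℝ f p).comp (ContinuousLinearMap.inl ℝ E ℝ)) ?_) fun x hx => (hd x hx).fderiv
    exact (hf.fderiv_of_isOpen hW (by simp)).clm_comp contDiffOn_const

/-- A continuous linear functional on `ℝⁿ` is determined by its values on the standard basis. -/
theorem clm_apply_eq_sum_single {n : ℕ} (L : EuclideanSpace ℝ (Fin n) →L[ℝ] ℝ)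
    (v : EuclideanSpace ℝ (Fin n)) :
    L v = ∑ i, v i * L (EuclideanSpace.single i 1) := by
  conv_lhs => rw [← (EuclideanSpace.basisFun (Fin n) ℝ).sum_repr v]
  simp [map_sum]

/-- **Poincaré lemma for 2-forms.** On an open star-shaped subset `U` of `ℝⁿ`, a smooth
closed antisymmetric 2-tensor field has a smooth vector potential. -/
theorem poincare_lemma_two_forms (n : ℕ) (hn : 1 ≤ n)
    (U : Set (EuclideanSpace ℝ (Fin n))) (hU : IsOpen U)
    (c : EuclideanSpace ℝ (Fin n)) (hc : c ∈ U) (hstar : StarConvex ℝ c U)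
    (F : EuclideanSpace ℝ (Fin n) → Fin n → Fin n → ℝ)
    (hF : ContDiffOn ℝ (⊤ : ℕ∞) F U)
    (hanti : ∀ x ∈ U, ∀ i j : Fin n, F x i j = - F x j i)
    (hclosed : ∀ x ∈ U, ∀ i j k : Fin n,
      pd (fun y => F y i j) (EuclideanSpace.single k 1) x
        + pd (fun y => F y j k) (EuclideanSpace.single i 1) x
        + pd (fun y => F y k i) (EuclideanSpace.single j 1) x = 0) :
    ∃ A : EuclideanSpace ℝ (Fin n) → EuclideanSpace ℝ (Fin n), ContDiffOn ℝ (⊤ : ℕ∞) A U ∧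
      ∀ x ∈ U, ∀ i j : Fin n,
        F x i j = pd (fun y => A y j) (EuclideanSpace.single i 1) x
          - pd (fun y => A y i) (EuclideanSpace.single j 1) x := by
  have hγ : ContDiff ℝ (⊤ : ℕ∞)
      (fun p : EuclideanSpace ℝ (Fin n) × ℝ => c + p.2 • (p.1 - c)) := by fun_prop
  set W : Set (EuclideanSpace ℝ (Fin n) × ℝ) := {p | c + p.2 • (p.1 - c) ∈ U} with hWdef
  have hW : IsOpen W := hU.preimage hγ.continuous
  have hUW : ∀ x ∈ U, ∀ t ∈ Set.Icc (0 : ℝ) 1, (x, t) ∈ W :=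
    fun x hx t ht => hstar.add_smul_sub_mem hx ht.1 ht.2
  have hFij : ∀ i j, ContDiffOn ℝ (⊤ : ℕ∞) (fun y => F y i j) U := fun i j =>
    contDiffOn_pi.1 (contDiffOn_pi.1 hF i) j
  have hFd : ∀ i j, ∀ y ∈ U, HasFDerivAt (fun y => F y i j) (fderiv ℝ (fun y => F y i j) y) y :=
    fun i j y hy => (((hFij i j).differentiableOn (by simp)).differentiableAt
      (hU.mem_nhds hy)).hasFDerivAt
  set f : Fin n → EuclideanSpace ℝ (Fin n) × ℝ → ℝ :=
    fun j p => ∑ i, p.2 * (p.1 i - c i) * F (c + p.2 • (p.1 - c)) i j with hfdef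
  have hf : ∀ j, ContDiffOn ℝ (⊤ : ℕ∞) (f j) W := fun j => by
    refine ContDiffOn.sum fun i _ => ContDiffOn.mul ?_ ?_
    · have : ContDiff ℝ (⊤ : ℕ∞)
          (fun p : EuclideanSpace ℝ (Fin n) × ℝ => p.2 * (p.1 i - c i)) := by fun_prop
      exact this.contDiffOn
    · exact (hFij i j).comp hγ.contDiffOn fun p hp => hp
  have hder : ∀ x ∈ U, ∀ t ∈ Set.Icc (0 : ℝ) 1, ∀ j k,
      fderiv ℝ (f j) (x, t) (EuclideanSpace.single k 1, 0) =
        t * F (c + t • (x - c)) k j + t ^ 2 * ∑ i, (x i - c i) *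
          pd (fun y => F y i j) (EuclideanSpace.single k 1) (c + t • (x - c)) := by
    intro x hx t ht j k
    have h1 : HasFDerivAt (f j) (fderiv ℝ (f j) (x, t)) (x, t) :=
      (((hf j).differentiableOn (by simp)).differentiableAt
        (hW.mem_nhds (hUW x hx t ht))).hasFDerivAt
    -- Both sides are the derivative at `s = 0` of `s ↦ f j (x + s e_k, t)`.
    have hline : HasDerivAt (fun s : ℝ => x + s • EuclideanSpace.single k (1 : ℝ))
        (EuclideanSpace.single k 1) 0 := by
      simpa using ((hasDerivAt_id (0 : ℝ)).smul_const
        (EuclideanSpace.single k (1 : ℝ))).const_add x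
    have h2 : HasDerivAt (fun s : ℝ => f j (x + s • EuclideanSpace.single k 1, t))
        (fderiv ℝ (f j) (x, t) (EuclideanSpace.single k 1, 0)) 0 := by
      refine HasFDerivAt.comp_hasDerivAt (l := f j) (0 : ℝ) ?_
        (hline.prodMk (hasDerivAt_const (0 : ℝ) t))
      simpa using h1
    have hγ' : HasDerivAt
        (fun s : ℝ => c + t • (x + s • EuclideanSpace.single k (1 : ℝ) - c))
        (t • EuclideanSpace.single k 1) 0 := ((hline.sub_const c).const_smul t).const_add c
    have h3 : HasDerivAt (fun s : ℝ => f j (x + s • EuclideanSpace.single k 1, t))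
        (∑ i, (t * (EuclideanSpace.single k (1 : ℝ) : EuclideanSpace ℝ (Fin n)) i
            * F (c + t • (x - c)) i j + t * (x i - c i) *
          fderiv ℝ (fun y => F y i j) (c + t • (x - c)) (t • EuclideanSpace.single k 1))) 0 := by
      refine HasDerivAt.fun_sum fun i _ => ?_
      have ha : HasDerivAt
          (fun s : ℝ => t * ((x + s • EuclideanSpace.single k (1 : ℝ)) i - c i))
          (t * (EuclideanSpace.single k (1 : ℝ) : EuclideanSpace ℝ (Fin n)) i) 0 := by
        have := (EuclideanSpace.proj (𝕜 := ℝ) i).hasFDerivAt.comp_hasDerivAt (0 : ℝ) hline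
        exact (this.sub_const (c i)).const_mul t
      have hb : HasDerivAt
          (fun s : ℝ => F (c + t • (x + s • EuclideanSpace.single k (1 : ℝ) - c)) i j)
          (fderiv ℝ (fun y => F y i j) (c + t • (x - c)) (t • EuclideanSpace.single k 1)) 0 := by
        refine HasFDerivAt.comp_hasDerivAt (l := fun y => F y i j) (0 : ℝ) ?_ hγ'
        simpa using hFd i j _ (hUW x hx t ht)
      exact (ha.fun_mul hb).congr_deriv (by simp)
    rw [h2.unique h3, Finset.sum_add_distrib, Finset.mul_sum]
    congr 1
    · rw [Finset.sum_eq_single k]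
      · simp
      · intro i _ hi
        simp [hi]
      · simp
    · refine Finset.sum_congr rfl fun i _ => ?_
      simp only [pd, map_smul, smul_eq_mul]
      ring
  have hcontd : ∀ x ∈ U, ∀ j, ContinuousOn (fun t : ℝ =>
      (fderiv ℝ (f j) (x, t)).comp (ContinuousLinearMap.inl ℝ (EuclideanSpace ℝ (Fin n)) ℝ))
      (Set.Icc 0 1) := fun x hx j =>
    (((hf j).continuousOn_fderiv_of_isOpen hW (by simp)).comp
      (Continuous.continuousOn (by fun_prop)) (hUW x hx)).clm_comp continuousOn_const
  have hint : ∀ x ∈ U, ∀ j k, IntervalIntegrable (fun t : ℝ =>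
      fderiv ℝ (f j) (x, t) (EuclideanSpace.single k 1, 0)) MeasureTheory.volume 0 1 :=
    fun x hx j k => ContinuousOn.intervalIntegrable_of_Icc zero_le_one <| by
      simpa using (hcontd x hx j).clm_apply
        (continuousOn_const (c := EuclideanSpace.single k (1 : ℝ)))
  have hpd : ∀ x ∈ U, ∀ j k,
      pd (fun y => ∫ t in (0 : ℝ)..1, f j (y, t)) (EuclideanSpace.single k 1) x =
        ∫ t in (0 : ℝ)..1, fderiv ℝ (f j) (x, t) (EuclideanSpace.single k 1, 0) := by
    intro x hx j k
    rw [pd, (hasFDerivAt_integral_Icc hW ((hf j).of_le (by exact_mod_cast le_top))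
      (hUW x hx)).fderiv, ContinuousLinearMap.intervalIntegral_apply
        ((hcontd x hx j).intervalIntegrable_of_Icc zero_le_one)]
    simp
  refine ⟨fun x => WithLp.toLp 2 fun j => ∫ t in (0 : ℝ)..1, f j (x, t), ?_, ?_⟩
  · exact contDiffOn_euclidean.2 fun j => contDiffOn_infty.2 fun m =>
      contDiffOn_integral_Icc hW hU hUW m (hf j)
  intro x hx k j
  change F x k j = pd (fun y => ∫ t in (0 : ℝ)..1, f j (y, t)) (EuclideanSpace.single k 1) x
    - pd (fun y => ∫ t in (0 : ℝ)..1, f k (y, t)) (EuclideanSpace.single j 1) x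
  rw [hpd x hx j k, hpd x hx k j, ← intervalIntegral.integral_sub (hint x hx j k) (hint x hx k j),
    intervalIntegral.integral_eq_sub_of_hasDerivAt
      (f := fun t => t ^ 2 * F (c + t • (x - c)) k j) ?_ ((hint x hx j k).sub (hint x hx k j))]
  · simp
  intro t ht
  rw [Set.uIcc_of_le zero_le_one] at ht
  have hy : c + t • (x - c) ∈ U := hUW x hx t ht
  have hγ' : HasDerivAt (fun s : ℝ => c + s • (x - c)) (x - c) t := by
    simpa using ((hasDerivAt_id t).smul_const (x - c)).const_add c
  have hprod := (hasDerivAt_pow 2 t).mul ((hFd k j _ hy).comp_hasDerivAt t hγ')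
  refine hprod.congr_deriv ?_
  rw [hder x hx t ht j k, hder x hx t ht k j, clm_apply_eq_sum_single, hanti _ hy j k]
  -- Closedness in the form `∂_k F_{ij} - ∂_j F_{ik} = ∂_i F_{kj}`.
  have hcl : ∀ i, pd (fun y => F y i j) (EuclideanSpace.single k 1) (c + t • (x - c)) -
      pd (fun y => F y i k) (EuclideanSpace.single j 1) (c + t • (x - c)) =
      pd (fun y => F y k j) (EuclideanSpace.single i 1) (c + t • (x - c)) := by
    have hneg : ∀ a b : Fin n, ∀ v, pd (fun y => F y a b) v (c + t • (x - c)) =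
        - pd (fun y => F y b a) v (c + t • (x - c)) := by
      intro a b v
      have he : (fun y => F y a b) =ᶠ[nhds (c + t • (x - c))] fun y => - F y b a := by
        filter_upwards [hU.mem_nhds hy] with y hy using hanti y hy a b
      rw [pd, he.fderiv_eq, fderiv_fun_neg]
      rfl
    intro i
    linarith [hclosed _ hy i j k, hneg i k (EuclideanSpace.single j 1),
      hneg k j (EuclideanSpace.single i 1)]
  have hsum : ∑ i, (x - c) i * fderiv ℝ (fun y => F y k j) (c + t • (x - c))
        (EuclideanSpace.single i 1) =
      ∑ i, (x i - c i) * pd (fun y => F y i j) (EuclideanSpace.single k 1) (c + t • (x - c)) -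
      ∑ i, (x i - c i) * pd (fun y => F y i k) (EuclideanSpace.single j 1) (c + t • (x - c)) := by
    rw [← Finset.sum_sub_distrib]
    refine Finset.sum_congr rfl fun i _ => ?_
    rw [← mul_sub, hcl i]
    rfl
  rw [hsum]
  simp only [Function.comp]
  push_cast
  ring
end

section
/- Let n ≥ 1, 1 ≤ k ≤ n, and let U be an open subset of ℝⁿ that is star-shaped about one of its points. Every closed antisymmetric k-tensor field F on U is exact: there exists an antisymmetric (k−1)-tensor field A on U with F = dA on U. (Poincaré lemma for k-forms in coordinates.) -/
/-- A `k`-tensor field is antisymmetric on `U` if permuting its indices multiplies it by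
the sign of the permutation. -/
def IsAntisymmOn (n k : ℕ) (U : Set (EuclideanSpace ℝ (Fin n)))
    (F : EuclideanSpace ℝ (Fin n) → (Fin k → Fin n) → ℝ) : Prop :=
  ∀ x ∈ U, ∀ i : Fin k → Fin n, ∀ σ : Equiv.Perm (Fin k),
    F x (i ∘ σ) = ((Equiv.Perm.sign σ : ℤ) : ℝ) * F x i

/-- The exterior derivative of a `k`-tensor field, in coordinates:
`(dF)_{j₀…j_k} = Σ_m (−1)^m ∂_{j_m} F_{j₀…ĵ_m…j_k}`. -/
noncomputable def extDer (n k : ℕ)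
    (F : EuclideanSpace ℝ (Fin n) → (Fin k → Fin n) → ℝ) :
    EuclideanSpace ℝ (Fin n) → (Fin (k + 1) → Fin n) → ℝ :=
  fun x j => ∑ m : Fin (k + 1),
    (-1 : ℝ) ^ (m : ℕ) * pd (fun y => F y (j ∘ m.succAbove)) (EuclideanSpace.single (j m) 1) x

/-- The divergence of a `(k+1)`-tensor field, in coordinates:
`(δF)_{i₂…i_k} = Σ_j ∂_j F_{j i₂…i_k}`. -/
noncomputable def divg (n k : ℕ)
    (F : EuclideanSpace ℝ (Fin n) → (Fin (k + 1) → Fin n) → ℝ) :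
    EuclideanSpace ℝ (Fin n) → (Fin k → Fin n) → ℝ :=
  fun x i => ∑ j : Fin n, pd (fun y => F y (Fin.cons j i)) (EuclideanSpace.single j 1) x

open Set Topology MeasureTheory

/-! ### Integrals over `[0, 1]` depending on a parameter -/

/-- Differentiation under the integral sign for a `C¹` integrand on an open set. The tube lemma
provides a neighbourhood of `x₀` on which the partial derivative is bounded uniformly in
`t ∈ [0, 1]`. -/
theorem hasFDerivAt_paramIntegral {E G : Type*} [NormedAddCommGroup E] [NormedSpace ℝ E]
    [NormedAddCommGroup G] [NormedSpace ℝ G] {W : Set (E × ℝ)} (hW : IsOpen W)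
    {H : E × ℝ → G} (hH : ContDiffOn ℝ 1 H W) {x₀ : E}
    (hx₀ : ∀ t ∈ Icc (0 : ℝ) 1, (x₀, t) ∈ W) :
    IntervalIntegrable (fun t => (fderiv ℝ H (x₀, t)).comp (.inl ℝ E ℝ)) volume 0 1 ∧
    HasFDerivAt (fun x => ∫ t in (0 : ℝ)..1, H (x, t))
      (∫ t in (0 : ℝ)..1, (fderiv ℝ H (x₀, t)).comp (.inl ℝ E ℝ)) x₀ := by
  set D : E × ℝ → E →L[ℝ] G := fun p => (fderiv ℝ H p).comp (.inl ℝ E ℝ) with hD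
  have hDc : ContinuousOn D W :=
    (hH.continuousOn_fderiv_of_isOpen hW le_rfl).clm_comp continuousOn_const
  have hslice : ∀ x : E, ContinuousOn (fun t : ℝ => (x, t)) (Icc 0 1) := fun x =>
    (continuous_const.prodMk continuous_id).continuousOn
  obtain ⟨C, hC⟩ := (isCompact_Icc (a := (0 : ℝ)) (b := 1)).exists_bound_of_continuousOn
    (hDc.comp (hslice x₀) hx₀)
  have hopen : IsOpen (W ∩ D ⁻¹' Metric.ball 0 (C + 1)) :=
    hDc.isOpen_inter_preimage hW Metric.isOpen_ball
  obtain ⟨u, v, hu, -, hxu, hv, huv⟩ := generalized_tube_lemma (s := {x₀}) isCompact_singleton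
    (t := Icc (0 : ℝ) 1) isCompact_Icc hopen (by
      rintro ⟨x, t⟩ ⟨hx, ht⟩
      obtain rfl : x = x₀ := hx
      refine ⟨hx₀ t ht, ?_⟩
      have := hC t ht
      simp only [mem_preimage, Metric.mem_ball, dist_zero_right]
      simp only [Function.comp_apply] at this
      linarith)
  have hmem : ∀ x ∈ u, ∀ t ∈ Icc (0 : ℝ) 1, (x, t) ∈ W ∧ ‖D (x, t)‖ ≤ C + 1 := fun x hx t ht => by
    have h := huv (mk_mem_prod hx (hv ht))
    exact ⟨h.1, by simpa using (mem_ball_zero_iff.1 h.2).le⟩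
  have hun : u ∈ 𝓝 x₀ := hu.mem_nhds (hxu rfl)
  have hI : uIoc (0 : ℝ) 1 ⊆ Icc 0 1 := by
    rw [uIoc_of_le zero_le_one]; exact Ioc_subset_Icc_self
  have hHx : ∀ x ∈ u, ContinuousOn (fun t => H (x, t)) (Icc 0 1) := fun x hx =>
    hH.continuousOn.comp (hslice x) fun t ht => (hmem x hx t ht).1
  have hDx : ContinuousOn (fun t => D (x₀, t)) (Icc 0 1) := hDc.comp (hslice x₀) hx₀
  refine ⟨hDx.intervalIntegrable_of_Icc zero_le_one, ?_⟩
  refine intervalIntegral.hasFDerivAt_integral_of_dominated_of_fderiv_le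
    (F := fun x t => H (x, t)) (F' := fun x t => D (x, t)) (bound := fun _ => C + 1) hun
    ?_ ?_ ?_ ?_ ?_ ?_
  · filter_upwards [hun] with x hx
    exact ((hHx x hx).mono hI).aestronglyMeasurable measurableSet_uIoc
  · exact (hHx x₀ (hxu rfl)).intervalIntegrable_of_Icc zero_le_one
  · exact (hDx.mono hI).aestronglyMeasurable measurableSet_uIoc
  · exact .of_forall fun t ht x hx => (hmem x hx t (hI ht)).2
  · exact intervalIntegrable_const
  · refine .of_forall fun t ht x hx => ?_
    have h1 : HasFDerivAt H (fderiv ℝ H (x, t)) (x, t) :=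
      ((hH.differentiableOn one_ne_zero).differentiableAt
        (hW.mem_nhds (hmem x hx t (hI ht)).1)).hasFDerivAt
    exact h1.comp x (hasFDerivAt_prodMk_left x t)

/-- A parametric integral of a smooth function over `[0, 1]` is smooth. The universes of `E` and
`G` agree because the induction replaces `G` by `E →L[ℝ] G`. -/
theorem contDiffOn_paramIntegral {E G : Type} [NormedAddCommGroup E] [NormedSpace ℝ E]
    [NormedAddCommGroup G] [NormedSpace ℝ G] {W : Set (E × ℝ)} (hW : IsOpen W)
    {U : Set E} (hU : IsOpen U) (hUW : ∀ x ∈ U, ∀ t ∈ Icc (0 : ℝ) 1, (x, t) ∈ W)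
    {H : E × ℝ → G} (hH : ContDiffOn ℝ (⊤ : ℕ∞) H W) :
    ContDiffOn ℝ (⊤ : ℕ∞) (fun x => ∫ t in (0 : ℝ)..1, H (x, t)) U := by
  refine contDiffOn_infty.2 fun k => ?_
  induction k generalizing G with
  | zero =>
    refine contDiffOn_zero.2 fun x hx => ?_
    exact (hasFDerivAt_paramIntegral hW (hH.of_le (by exact_mod_cast le_top))
      (hUW x hx)).2.continuousAt.continuousWithinAt
  | succ k ih =>
    have hd := fun x hx => (hasFDerivAt_paramIntegral hW
      (hH.of_le (by exact_mod_cast le_top)) (hUW x hx)).2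
    rw [Nat.cast_succ, contDiffOn_succ_iff_fderiv_of_isOpen hU]
    refine ⟨fun x hx => (hd x hx).differentiableAt.differentiableWithinAt, by simp, ?_⟩
    refine (ih (H := fun p => (fderiv ℝ H p).comp (.inl ℝ E ℝ)) ?_).congr
      fun x hx => (hd x hx).fderiv
    exact ((contDiffOn_infty_iff_fderiv_of_isOpen hW).1 hH).2.clm_comp contDiffOn_const

/-! ### Alternating sums of components -/

/-- Moving the `p`-th index to the front costs the sign `(-1)^p`, so all `m + 1` terms of the
alternating sum equal the original component. -/
theorem sum_sign_mul_cons {n m : ℕ} {U : Set (EuclideanSpace ℝ (Fin n))}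
    {F : EuclideanSpace ℝ (Fin n) → (Fin (m + 1) → Fin n) → ℝ}
    (hanti : IsAntisymmOn n (m + 1) U F) {x : EuclideanSpace ℝ (Fin n)} (hx : x ∈ U)
    (J : Fin (m + 1) → Fin n) :
    ∑ p : Fin (m + 1), (-1 : ℝ) ^ (p : ℕ) * F x (Fin.cons (J p) (J ∘ p.succAbove)) =
      (m + 1) * F x J := by
  have h : ∀ p : Fin (m + 1),
      (-1 : ℝ) ^ (p : ℕ) * F x (Fin.cons (J p) (J ∘ p.succAbove)) = F x J := fun p => by
    have e : (Fin.cons (J p) (J ∘ p.succAbove) : Fin (m + 1) → Fin n) =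
      J ∘ p.cycleRange.symm := Fin.cons_removeNth_eq_comp_cycleRange_symm J p
    rw [e, hanti x hx, Equiv.Perm.sign_symm, Fin.sign_cycleRange]
    push_cast
    rw [← mul_assoc, ← mul_pow]
    simp
  simp [h]

/-- Closedness for the index tuple `(a, J)`, solved for the term `∂ₐ F_J`. -/
theorem sum_sign_mul_pd_cons {n m : ℕ}
    {F : EuclideanSpace ℝ (Fin n) → (Fin (m + 1) → Fin n) → ℝ} {x : EuclideanSpace ℝ (Fin n)}
    (hclosed : ∀ j : Fin (m + 2) → Fin n, extDer n (m + 1) F x j = 0)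
    (a : Fin n) (J : Fin (m + 1) → Fin n) :
    ∑ p : Fin (m + 1), (-1 : ℝ) ^ (p : ℕ) *
        pd (fun y => F y (Fin.cons a (J ∘ p.succAbove))) (EuclideanSpace.single (J p) 1) x =
      pd (fun y => F y J) (EuclideanSpace.single a 1) x := by
  have h := hclosed (Fin.cons a J)
  have e0 : (Fin.cons a J : Fin (m + 2) → Fin n) ∘ Fin.succAbove 0 = J := by
    ext i; simp
  have e1 : ∀ p : Fin (m + 1), (Fin.cons a J : Fin (m + 2) → Fin n) ∘ p.succ.succAbove =
      Fin.cons a (J ∘ p.succAbove) := fun p => by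
    funext i
    refine Fin.cases ?_ (fun i => ?_) i <;> simp
  rw [extDer, Fin.sum_univ_succ] at h
  simp only [e0, e1, Fin.cons_zero, Fin.cons_succ, Fin.val_succ, Fin.val_zero, pow_zero, one_mul,
    pow_succ, mul_neg, mul_one, neg_mul, Finset.sum_neg_distrib] at h
  linarith

/-! ### The cone operator -/

/-- The integrand of the cone operator: `t^m ∑ₐ (x - c)ₐ F_{aI}(c + t (x - c))` at `(x, t)`. -/
noncomputable def coneIntegrand {n m : ℕ} (c : EuclideanSpace ℝ (Fin n))
    (F : EuclideanSpace ℝ (Fin n) → (Fin (m + 1) → Fin n) → ℝ) (I : Fin m → Fin n)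
    (p : EuclideanSpace ℝ (Fin n) × ℝ) : ℝ :=
  p.2 ^ m * ∑ a : Fin n, (p.1 - c) a * F (c + p.2 • (p.1 - c)) (Fin.cons a I)

theorem contDiffOn_coneIntegrand {n m : ℕ} {U : Set (EuclideanSpace ℝ (Fin n))}
    (c : EuclideanSpace ℝ (Fin n))
    {F : EuclideanSpace ℝ (Fin n) → (Fin (m + 1) → Fin n) → ℝ}
    (hF : ContDiffOn ℝ (⊤ : ℕ∞) F U) (I : Fin m → Fin n) :
    ContDiffOn ℝ (⊤ : ℕ∞) (coneIntegrand c F I)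
      {p : EuclideanSpace ℝ (Fin n) × ℝ | c + p.2 • (p.1 - c) ∈ U} := by
  unfold coneIntegrand
  refine ContDiffOn.mul (by fun_prop) (ContDiffOn.sum fun a _ => ContDiffOn.mul ?_ ?_)
  · exact ((EuclideanSpace.proj (𝕜 := ℝ) a).contDiff.comp
      (contDiff_fst.sub contDiff_const)).contDiffOn
  · exact ((contDiffOn_pi.1 hF _).comp (f := fun p : EuclideanSpace ℝ (Fin n) × ℝ =>
      c + p.2 • (p.1 - c)) (by fun_prop) fun p hp => hp)

/-- The partial derivative of the cone integrand in the direction `e_b` of the space variable. -/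
theorem fderiv_coneIntegrand {n m : ℕ} {U : Set (EuclideanSpace ℝ (Fin n))} (hU : IsOpen U)
    (c : EuclideanSpace ℝ (Fin n))
    {F : EuclideanSpace ℝ (Fin n) → (Fin (m + 1) → Fin n) → ℝ}
    (hF : ContDiffOn ℝ (⊤ : ℕ∞) F U) (I : Fin m → Fin n) (b : Fin n)
    {x : EuclideanSpace ℝ (Fin n)} {t : ℝ} (hxt : c + t • (x - c) ∈ U) :
    fderiv ℝ (coneIntegrand c F I) (x, t) (EuclideanSpace.single b 1, 0) =
      t ^ m * F (c + t • (x - c)) (Fin.cons b I) +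
      t ^ (m + 1) * ∑ a : Fin n, (x - c) a *
        pd (fun y => F y (Fin.cons a I)) (EuclideanSpace.single b 1) (c + t • (x - c)) := by
  have hW : IsOpen {p : EuclideanSpace ℝ (Fin n) × ℝ | c + p.2 • (p.1 - c) ∈ U} :=
    hU.preimage (by fun_prop)
  have h1 : HasFDerivAt (coneIntegrand c F I) (fderiv ℝ (coneIntegrand c F I) (x, t)) (x, t) :=
    (((contDiffOn_coneIntegrand c hF I).differentiableOn (by simp)).differentiableAt
      (hW.mem_nhds hxt)).hasFDerivAt
  have h2 := HasFDerivAt.comp (f := fun y => (y, t)) x h1 (hasFDerivAt_prodMk_left x t)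
  have hφ : HasFDerivAt (fun y : EuclideanSpace ℝ (Fin n) => c + t • (y - c))
      (t • ContinuousLinearMap.id ℝ (EuclideanSpace ℝ (Fin n))) x :=
    (((hasFDerivAt_id x).sub_const c).const_smul t).const_add c
  have hFa : ∀ J, HasFDerivAt (fun y => F y J) (fderiv ℝ (fun y => F y J) (c + t • (x - c)))
      (c + t • (x - c)) := fun J =>
    (((contDiffOn_pi.1 hF J).differentiableOn (by simp)).differentiableAt
      (hU.mem_nhds hxt)).hasFDerivAt
  have hc : ∀ a : Fin n, HasFDerivAt (fun y : EuclideanSpace ℝ (Fin n) => (y - c) a)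
      (EuclideanSpace.proj a : EuclideanSpace ℝ (Fin n) →L[ℝ] ℝ) x := fun a =>
    (EuclideanSpace.proj (𝕜 := ℝ) a).hasFDerivAt.comp x ((hasFDerivAt_id x).sub_const c)
  have h3 := (HasFDerivAt.fun_sum (u := Finset.univ) fun a _ =>
    (hc a).mul ((hFa (Fin.cons a I)).comp x hφ)).const_mul (t ^ m)
  have h4 := congrArg (fun L => L (EuclideanSpace.single b 1)) (h2.unique h3)
  simp only [ContinuousLinearMap.comp_apply, ContinuousLinearMap.inl_apply] at h4
  rw [h4]
  simp only [_root_.smul_apply, _root_.sum_apply,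
    _root_.add_apply, ContinuousLinearMap.comp_apply, ContinuousLinearMap.id_apply,
    map_smul, smul_eq_mul, Finset.sum_add_distrib, mul_add, pd, Function.comp_apply,
    PiLp.proj_apply, PiLp.single_apply, mul_ite, mul_one, mul_zero, Finset.sum_ite_eq',
    Finset.mem_univ, if_true]
  rw [add_comm]
  congr 1
  rw [Finset.mul_sum, Finset.mul_sum]
  refine Finset.sum_congr rfl fun a _ => ?_
  ring

/-- **Poincaré lemma for `k`-forms in coordinates** (here `k = m + 1` with `1 ≤ k ≤ n`).
On an open star-shaped subset `U` of `ℝⁿ`, every smooth closed antisymmetric `k`-tensor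
field is the exterior derivative of a smooth antisymmetric `(k−1)`-tensor field. -/
theorem poincare_lemma_k_forms (n m : ℕ) (hk : m + 1 ≤ n)
    (U : Set (EuclideanSpace ℝ (Fin n))) (hU : IsOpen U)
    (c : EuclideanSpace ℝ (Fin n)) (hc : c ∈ U) (hstar : StarConvex ℝ c U)
    (F : EuclideanSpace ℝ (Fin n) → (Fin (m + 1) → Fin n) → ℝ)
    (hF : ContDiffOn ℝ (⊤ : ℕ∞) F U)
    (hanti : IsAntisymmOn n (m + 1) U F)
    (hclosed : ∀ x ∈ U, ∀ j : Fin (m + 2) → Fin n, extDer n (m + 1) F x j = 0) :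
    ∃ A : EuclideanSpace ℝ (Fin n) → (Fin m → Fin n) → ℝ, ContDiffOn ℝ (⊤ : ℕ∞) A U ∧
      IsAntisymmOn n m U A ∧
      ∀ x ∈ U, ∀ i : Fin (m + 1) → Fin n, F x i = extDer n m A x i := by
  set W : Set (EuclideanSpace ℝ (Fin n) × ℝ) := {p | c + p.2 • (p.1 - c) ∈ U} with hWdef
  have hW : IsOpen W := hU.preimage (by fun_prop)
  have hUW : ∀ x ∈ U, ∀ t ∈ Icc (0 : ℝ) 1, (x, t) ∈ W := fun x hx t ht =>
    hstar.add_smul_sub_mem hx ht.1 ht.2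
  have hH := contDiffOn_coneIntegrand c hF
  refine ⟨fun x I => ∫ t in (0 : ℝ)..1, coneIntegrand c F I (x, t), ?_, ?_, ?_⟩
  · exact contDiffOn_pi.2 fun I => contDiffOn_paramIntegral hW hU hUW (hH I)
  · intro x hx I σ
    simp only
    rw [← intervalIntegral.integral_const_mul]
    refine intervalIntegral.integral_congr fun t ht => ?_
    rw [uIcc_of_le zero_le_one] at ht
    have hy : c + t • (x - c) ∈ U := hUW x hx t ht
    -- `σ` extends to a permutation of `Fin (m + 1)` fixing `0`, with the same sign.
    have e : ∀ a, F (c + t • (x - c)) (Fin.cons a (I ∘ σ)) =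
        ((Equiv.Perm.sign σ : ℤ) : ℝ) * F (c + t • (x - c)) (Fin.cons a I) := fun a => by
      have e1 : (Fin.cons a (I ∘ σ) : Fin (m + 1) → Fin n) =
          Fin.cons a I ∘ Equiv.Perm.decomposeFin.symm (0, σ) := by
        funext i
        refine Fin.cases ?_ (fun i => ?_) i <;> simp
      rw [e1, hanti _ hy, Equiv.Perm.decomposeFin.symm_sign]
      simp
    simp only [coneIntegrand, e, Finset.mul_sum]
    exact Finset.sum_congr rfl fun a _ => by ring
  · intro x hx J
    have hA := fun I => hasFDerivAt_paramIntegral hW ((hH I).of_le (by exact_mod_cast le_top))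
      (hUW x hx)
    have hint : ∀ I b, IntervalIntegrable (fun t => fderiv ℝ (coneIntegrand c F I) (x, t)
        (EuclideanSpace.single b 1, 0)) volume 0 1 := fun I b =>
      ⟨(hA I).1.1.apply_continuousLinearMap (EuclideanSpace.single b 1),
        (hA I).1.2.apply_continuousLinearMap (EuclideanSpace.single b 1)⟩
    have hpd : ∀ I b, pd (fun y => ∫ t in (0 : ℝ)..1, coneIntegrand c F I (y, t))
        (EuclideanSpace.single b 1) x = ∫ t in (0 : ℝ)..1,
          fderiv ℝ (coneIntegrand c F I) (x, t) (EuclideanSpace.single b 1, 0) := fun I b => by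
      rw [pd, (hA I).2.fderiv, ContinuousLinearMap.intervalIntegral_apply (hA I).1]
      rfl
    have hterm := fun p : Fin (m + 1) =>
      (hint (J ∘ p.succAbove) (J p)).const_mul ((-1 : ℝ) ^ (p : ℕ))
    simp only [extDer, hpd, ← intervalIntegral.integral_const_mul]
    rw [← intervalIntegral.integral_finsetSum fun p _ => hterm p]
    have hsum : IntervalIntegrable (fun t => ∑ p : Fin (m + 1), (-1 : ℝ) ^ (p : ℕ) *
        fderiv ℝ (coneIntegrand c F (J ∘ p.succAbove)) (x, t)
          (EuclideanSpace.single (J p) 1, 0)) volume 0 1 := by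
      simpa [Finset.sum_fn] using IntervalIntegrable.sum Finset.univ fun p _ => hterm p
    -- The alternating sum of the integrands is the `t`-derivative of `t^(m+1) F_J(c + t (x - c))`,
    -- a function that vanishes at `t = 0` and equals `F_J(x)` at `t = 1`.
    rw [intervalIntegral.integral_eq_sub_of_hasDerivAt
      (f := fun t : ℝ => t ^ (m + 1) * F (c + t • (x - c)) J) ?_ hsum]
    · simp
    intro t ht
    rw [uIcc_of_le zero_le_one] at ht
    have hy : c + t • (x - c) ∈ U := hUW x hx t ht
    have hFJ : HasFDerivAt (fun y => F y J) (fderiv ℝ (fun y => F y J) (c + t • (x - c)))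
        (c + t • (x - c)) :=
      (((contDiffOn_pi.1 hF J).differentiableOn (by simp)).differentiableAt
        (hU.mem_nhds hy)).hasFDerivAt
    have hline : HasDerivAt (fun s : ℝ => c + s • (x - c)) (x - c) t := by
      simpa using ((hasDerivAt_id t).smul_const (x - c)).const_add c
    refine ((hasDerivAt_pow (m + 1) t).mul (hFJ.comp_hasDerivAt t hline)).congr_deriv (Eq.symm ?_)
    -- Expand the radial derivative in the standard basis.
    have hrad : fderiv ℝ (fun y => F y J) (c + t • (x - c)) (x - c) =
        ∑ a, (x - c) a * pd (fun y => F y J) (EuclideanSpace.single a 1) (c + t • (x - c)) := by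
      conv_lhs => arg 2; rw [← (EuclideanSpace.basisFun (Fin n) ℝ).sum_repr (x - c)]
      simp [pd]
    rw [hrad]
    simp only [fderiv_coneIntegrand hU c hF _ _ hy, mul_add, Finset.sum_add_distrib]
    congr 1
    · simp only [mul_left_comm _ (t ^ m), ← Finset.mul_sum, sum_sign_mul_cons hanti hy]
      push_cast
      simp only [Function.comp_apply]
      ring
    · simp only [mul_left_comm _ (t ^ (m + 1)), ← Finset.mul_sum]
      congr 1
      simp only [Finset.mul_sum]
      rw [Finset.sum_comm]
      refine Finset.sum_congr rfl fun a _ => ?_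
      rw [← sum_sign_mul_pd_cons (hclosed _ hy), Finset.mul_sum]
      exact Finset.sum_congr rfl fun p _ => by ring
end

section
/- Let n ≥ 2 and let U be an open subset of ℝⁿ that is star-shaped about one of its points. If F : U → ℝⁿ is a smooth vector field with vanishing divergence, Σ_{i} ∂_i F_i = 0 on U, then there exists a smooth antisymmetric 2-tensor field B on U (B_{ij} = −B_{ji}) such that F_i = Σ_j ∂_j B_{ji} on U for every i. (Dual Poincaré lemma: co-closed vector fields are locally co-exact.) -/
open Set Filter Topology MeasureTheory Interval

section Radial

variable {E G : Type} [NormedAddCommGroup E] [NormedSpace ℝ E]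
  [NormedAddCommGroup G] [NormedSpace ℝ G]

/-- The weighted average `∫₀¹ t ^ m f (c + t (x - c)) dt` of `f` along the segment from the
centre `c` to `x`. -/
noncomputable def radialInt (c : E) (m : ℕ) (f : E → G) (x : E) : G :=
  ∫ t in (0 : ℝ)..1, t ^ m • f (c + t • (x - c))

lemma continuousOn_radial {U : Set E} {c : E} (hstar : StarConvex ℝ c U) {f : E → G}
    (hf : ContinuousOn f U) (m : ℕ) :
    ContinuousOn (fun p : ℝ × E => p.1 ^ m • f (c + p.1 • (p.2 - c))) (Icc 0 1 ×ˢ U) := by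
  refine ContinuousOn.smul (by fun_prop) (hf.comp (by fun_prop) ?_)
  rintro ⟨t, x⟩ ⟨ht, hx⟩
  exact hstar.add_smul_sub_mem hx ht.1 ht.2

lemma continuousOn_radial_left {U : Set E} {c : E} (hstar : StarConvex ℝ c U) {f : E → G}
    (hf : ContinuousOn f U) (m : ℕ) {x : E} (hx : x ∈ U) :
    ContinuousOn (fun t : ℝ => t ^ m • f (c + t • (x - c))) (Icc 0 1) :=
  (continuousOn_radial hstar hf m).comp (f := fun t : ℝ => (t, x)) (by fun_prop)
    fun _ ht => ⟨ht, hx⟩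

lemma intervalIntegrable_radial {U : Set E} {c : E} (hstar : StarConvex ℝ c U) {f : E → G}
    (hf : ContinuousOn f U) (m : ℕ) {x : E} (hx : x ∈ U) :
    IntervalIntegrable (fun t : ℝ => t ^ m • f (c + t • (x - c))) volume 0 1 :=
  (continuousOn_radial_left hstar hf m hx).intervalIntegrable_of_Icc zero_le_one

lemma hasFDerivAt_radialInt [FiniteDimensional ℝ E] {U : Set E} (hU : IsOpen U) {c : E}
    (hstar : StarConvex ℝ c U) {f : E → G} (hf : ContDiffOn ℝ (⊤ : ℕ∞) f U) (m : ℕ)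
    {x : E} (hx : x ∈ U) :
    HasFDerivAt (radialInt c m f) (radialInt c (m + 1) (fderiv ℝ f) x) x := by
  have : ProperSpace E := FiniteDimensional.proper ℝ E
  have hf' : ContinuousOn (fderiv ℝ f) U := hf.continuousOn_fderiv_of_isOpen hU (by simp)
  obtain ⟨ε, hε, hball⟩ := Metric.nhds_basis_closedBall.mem_iff.1 (hU.mem_nhds hx)
  -- compactness of `[0, 1] × closedBall x ε` provides the uniform bound for domination
  obtain ⟨C, hC⟩ := (isCompact_Icc.prod (isCompact_closedBall x ε)).exists_bound_of_continuousOn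
    ((continuousOn_radial hstar hf' (m + 1)).mono (prod_mono (Subset.refl (Icc (0 : ℝ) 1)) hball))
  have hIoc : ∀ t : ℝ, t ∈ Ι (0 : ℝ) 1 → t ∈ Icc (0 : ℝ) 1 := fun t ht => by
    rw [uIoc_of_le zero_le_one] at ht
    exact ⟨ht.1.le, ht.2⟩
  refine intervalIntegral.hasFDerivAt_integral_of_dominated_of_fderiv_le
    (F' := fun z t => t ^ (m + 1) • fderiv ℝ f (c + t • (z - c))) (bound := fun _ => C)
    (Metric.closedBall_mem_nhds x hε) ?_ (intervalIntegrable_radial hstar hf.continuousOn m hx)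
    ?_ ?_ intervalIntegrable_const ?_
  · filter_upwards [hU.mem_nhds hx] with z hz
    have := (intervalIntegrable_radial hstar hf.continuousOn m hz).aestronglyMeasurable
    rwa [uIoc_of_le zero_le_one]
  · have := (intervalIntegrable_radial hstar hf' (m + 1) hx).aestronglyMeasurable
    rwa [uIoc_of_le zero_le_one]
  · exact ae_of_all _ fun t ht z hz => hC (t, z) ⟨hIoc t ht, hz⟩
  · refine ae_of_all _ fun t ht z hz => ?_
    have hmem := hstar.add_smul_sub_mem (hball hz) (hIoc t ht).1 (hIoc t ht).2
    have h1 : HasFDerivAt f (fderiv ℝ f (c + t • (z - c))) (c + t • (z - c)) :=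
      ((hf.contDiffAt (hU.mem_nhds hmem)).differentiableAt (by simp)).hasFDerivAt
    have h2 : HasFDerivAt (fun w : E => c + t • (w - c)) (t • ContinuousLinearMap.id ℝ E) z :=
      (((hasFDerivAt_id z).sub_const c).const_smul t).const_add c
    refine ((h1.comp z h2).const_smul (t ^ m)).congr_fderiv ?_
    ext v
    simp [pow_succ, mul_smul]

/-- Each derivative of a radial average is again a radial average, with one more power of `t`;
hence the quantification over `m` and over the codomain in the induction. -/
lemma contDiffOn_radialInt_nat [FiniteDimensional ℝ E] {U : Set E} (hU : IsOpen U) {c : E}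
    (hstar : StarConvex ℝ c U) (k : ℕ) :
    ∀ (G : Type) [NormedAddCommGroup G] [NormedSpace ℝ G] (f : E → G) (m : ℕ),
      ContDiffOn ℝ (⊤ : ℕ∞) f U → ContDiffOn ℝ k (radialInt c m f) U := by
  induction k with
  | zero =>
    intro G _ _ f m hf
    rw [Nat.cast_zero, contDiffOn_zero]
    exact fun x hx => (hasFDerivAt_radialInt hU hstar hf m hx).continuousAt.continuousWithinAt
  | succ k ih =>
    intro G _ _ f m hf
    rw [Nat.cast_succ, contDiffOn_succ_iff_fderiv_of_isOpen hU]
    refine ⟨fun x hx => (hasFDerivAt_radialInt hU hstar hf m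
      hx).differentiableAt.differentiableWithinAt, by simp, ?_⟩
    exact (ih _ (fderiv ℝ f) (m + 1) ((contDiffOn_infty_iff_fderiv_of_isOpen hU).1 hf).2).congr
      fun x hx => (hasFDerivAt_radialInt hU hstar hf m hx).fderiv

lemma contDiffOn_radialInt [FiniteDimensional ℝ E] {U : Set E} (hU : IsOpen U) {c : E}
    (hstar : StarConvex ℝ c U) {f : E → G} (hf : ContDiffOn ℝ (⊤ : ℕ∞) f U) (m : ℕ) :
    ContDiffOn ℝ (⊤ : ℕ∞) (radialInt c m f) U :=
  contDiffOn_infty.2 fun k => contDiffOn_radialInt_nat hU hstar k G f m hf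

/-- Euler-type identity: the fundamental theorem of calculus applied to
`t ↦ t ^ (m + 1) f (c + t (x - c))` on `[0, 1]`. -/
lemma radialInt_euler [CompleteSpace G] {U : Set E} (hU : IsOpen U) {c : E}
    (hstar : StarConvex ℝ c U) {f : E → G} (hf : ContDiffOn ℝ (⊤ : ℕ∞) f U) (m : ℕ)
    {x : E} (hx : x ∈ U) :
    ((m : ℝ) + 1) • radialInt c m f x + radialInt c (m + 1) (fderiv ℝ f) x (x - c) = f x := by
  have hf' : ContinuousOn (fderiv ℝ f) U := hf.continuousOn_fderiv_of_isOpen hU (by simp)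
  have hi := intervalIntegrable_radial hstar hf.continuousOn m hx
  have hi' := intervalIntegrable_radial hstar hf' (m + 1) hx
  have hi'' : IntervalIntegrable (fun t : ℝ =>
      (t ^ (m + 1) • fderiv ℝ f (c + t • (x - c))) (x - c)) volume 0 1 :=
    (((continuousOn_radial_left hstar hf' (m + 1) hx).clm_apply
      continuousOn_const)).intervalIntegrable_of_Icc zero_le_one
  have hd : ∀ t ∈ uIcc (0 : ℝ) 1,
      HasDerivAt (fun t : ℝ => t ^ (m + 1) • f (c + t • (x - c)))
        (((m : ℝ) + 1) • (t ^ m • f (c + t • (x - c))) +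
          (t ^ (m + 1) • fderiv ℝ f (c + t • (x - c))) (x - c)) t := by
    intro t ht
    rw [uIcc_of_le zero_le_one] at ht
    have hmem := hstar.add_smul_sub_mem hx ht.1 ht.2
    have h1 : HasFDerivAt f (fderiv ℝ f (c + t • (x - c))) (c + t • (x - c)) :=
      ((hf.contDiffAt (hU.mem_nhds hmem)).differentiableAt (by simp)).hasFDerivAt
    have h2 : HasDerivAt (fun t : ℝ => c + t • (x - c)) ((1 : ℝ) • (x - c)) t :=
      ((hasDerivAt_id t).smul_const (x - c)).const_add c
    have h3 := (hasDerivAt_pow (m + 1) t).smul (h1.comp_hasDerivAt t h2)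
    refine h3.congr_deriv ?_
    simp [mul_smul, add_comm]
  have hs : IntervalIntegrable (fun t : ℝ => ((m : ℝ) + 1) • (t ^ m • f (c + t • (x - c))))
      volume 0 1 := hi.smul ((m : ℝ) + 1)
  have hftc := intervalIntegral.integral_eq_sub_of_hasDerivAt hd (hs.add hi'')
  rw [intervalIntegral.integral_add hs hi'',
    intervalIntegral.integral_smul] at hftc
  unfold radialInt
  rw [ContinuousLinearMap.intervalIntegral_apply hi', hftc]
  simp

end Radial

/-- **Dual Poincaré lemma for vector fields.** On an open star-shaped subset `U` of `ℝⁿ`,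
a smooth divergence-free vector field is the divergence of a smooth antisymmetric
2-tensor field. -/
theorem dual_poincare_lemma_vector_fields (n : ℕ) (hn : 2 ≤ n)
    (U : Set (EuclideanSpace ℝ (Fin n))) (hU : IsOpen U)
    (c : EuclideanSpace ℝ (Fin n)) (hc : c ∈ U) (hstar : StarConvex ℝ c U)
    (F : EuclideanSpace ℝ (Fin n) → EuclideanSpace ℝ (Fin n))
    (hF : ContDiffOn ℝ (⊤ : ℕ∞) F U)
    (hdiv : ∀ x ∈ U, ∑ i : Fin n, pd (fun y => F y i) (EuclideanSpace.single i 1) x = 0) :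
    ∃ B : EuclideanSpace ℝ (Fin n) → Fin n → Fin n → ℝ, ContDiffOn ℝ (⊤ : ℕ∞) B U ∧
      (∀ x ∈ U, ∀ i j : Fin n, B x i j = - B x j i) ∧
      ∀ x ∈ U, ∀ i : Fin n,
        F x i = ∑ j : Fin n, pd (fun y => B y j i) (EuclideanSpace.single j 1) x := by
  obtain ⟨m, rfl⟩ : ∃ m, n = m + 2 := ⟨n - 2, by omega⟩
  set H := radialInt c m F with hH
  have hHs : ContDiffOn ℝ (⊤ : ℕ∞) H U := contDiffOn_radialInt hU hstar hF m
  have hcoord : ∀ i : Fin (m + 2), ContDiffOn ℝ (⊤ : ℕ∞) (fun y => H y i) U := fun i =>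
    (EuclideanSpace.proj (𝕜 := ℝ) i).contDiff.comp_contDiffOn hHs
  have hcoord' : ∀ i : Fin (m + 2),
      ContDiff ℝ (⊤ : ℕ∞) (fun y : EuclideanSpace ℝ (Fin (m + 2)) => y i - c i) := fun i =>
    (EuclideanSpace.proj (𝕜 := ℝ) i).contDiff.sub contDiff_const
  refine ⟨fun x j i => (x j - c j) * H x i - (x i - c i) * H x j, ?_, fun x _ i j => by ring, ?_⟩
  · refine contDiffOn_pi.2 fun j => contDiffOn_pi.2 fun i => ?_
    exact ((hcoord' j).contDiffOn.mul (hcoord i)).sub ((hcoord' i).contDiffOn.mul (hcoord j))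
  intro x hx i
  set D := radialInt c (m + 1) (fderiv ℝ F) x with hD
  have hHD : HasFDerivAt H D x := hasFDerivAt_radialInt hU hstar hF m hx
  have hHi : ∀ i, HasFDerivAt (fun y => H y i) ((EuclideanSpace.proj (𝕜 := ℝ) i).comp D) x :=
    fun i => (EuclideanSpace.proj (𝕜 := ℝ) i).hasFDerivAt.comp x hHD
  have hyi : ∀ i : Fin (m + 2), HasFDerivAt
      (fun y : EuclideanSpace ℝ (Fin (m + 2)) => y i - c i) (EuclideanSpace.proj (𝕜 := ℝ) i) x :=
    fun i => (EuclideanSpace.proj (𝕜 := ℝ) i).hasFDerivAt.sub_const _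
  have hpd : ∀ j, pd (fun y => (y j - c j) * H y i - (y i - c i) * H y j)
      (EuclideanSpace.single j 1) x =
      (x j - c j) * D (EuclideanSpace.single j 1) i + H x i
        - ((x i - c i) * D (EuclideanSpace.single j 1) j + if i = j then H x j else 0) := by
    intro j
    have hB : HasFDerivAt (fun y => (y j - c j) * H y i - (y i - c i) * H y j) _ x :=
      ((hyi j).mul (hHi i)).sub ((hyi i).mul (hHi j))
    rw [pd, hB.fderiv]
    simp
  -- `div H = 0`: the trace of the integral is the integral of the trace
  have hdivH : ∑ j, D (EuclideanSpace.single j 1) j = 0 := by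
    let T : (EuclideanSpace ℝ (Fin (m + 2)) →L[ℝ] EuclideanSpace ℝ (Fin (m + 2))) →L[ℝ] ℝ :=
      ∑ j, (EuclideanSpace.proj (𝕜 := ℝ) j).comp
        (ContinuousLinearMap.apply ℝ (EuclideanSpace ℝ (Fin (m + 2)))
          (EuclideanSpace.single j (1 : ℝ)))
    have hT : ∀ A, T A = ∑ j, A (EuclideanSpace.single j 1) j := fun A => by
      simp [T]
    rw [← hT, hD, radialInt, ← T.intervalIntegral_comp_comm (intervalIntegrable_radial hstar
      (hF.continuousOn_fderiv_of_isOpen hU (by simp)) (m + 1) hx)]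
    refine (intervalIntegral.integral_congr (g := fun _ => (0 : ℝ)) fun t ht => ?_).trans (by simp)
    rw [uIcc_of_le zero_le_one] at ht
    have hmem := hstar.add_smul_sub_mem hx ht.1 ht.2
    have hFd : HasFDerivAt F _ (c + t • (x - c)) :=
      ((hF.contDiffAt (hU.mem_nhds hmem)).differentiableAt (by simp)).hasFDerivAt
    have hz : T (fderiv ℝ F (c + t • (x - c))) = 0 := by
      rw [hT, ← hdiv _ hmem]
      refine Finset.sum_congr rfl fun j _ => ?_
      have hj : HasFDerivAt (fun y => F y j) _ (c + t • (x - c)) :=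
        (EuclideanSpace.proj (𝕜 := ℝ) j).hasFDerivAt.comp _ hFd
      rw [pd, hj.fderiv]
      rfl
    simp only [map_smul, hz, smul_zero]
  have hradial : ∑ j, (x j - c j) * D (EuclideanSpace.single j 1) i = D (x - c) i := by
    have hx' : x - c = ∑ j, (x j - c j) • EuclideanSpace.single j (1 : ℝ) := by
      ext k
      simp [Finset.sum_apply, Pi.single_apply]
    conv_rhs => rw [hx']
    simp [map_sum]
  have heuler := congrArg (fun v : EuclideanSpace ℝ (Fin (m + 2)) => v i)
    (radialInt_euler hU hstar hF m hx)
  simp only [← hH, ← hD, PiLp.add_apply, PiLp.smul_apply, smul_eq_mul] at heuler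
  simp only [hpd, Finset.sum_sub_distrib, Finset.sum_add_distrib, ← Finset.mul_sum, hdivH, hradial]
  simp only [Finset.sum_const, Finset.card_univ, Fintype.card_fin, nsmul_eq_mul, mul_zero,
    Finset.sum_ite_eq, Finset.mem_univ, if_true, zero_add]
  push_cast
  linarith
end

section
/- Let n ≥ 1, 1 ≤ k ≤ n−1, and let U be an open subset of ℝⁿ that is star-shaped about one of its points. Every divergence-free antisymmetric k-tensor field F on U is the divergence of an antisymmetric (k+1)-tensor field: there exists an antisymmetric (k+1)-tensor field B on U with F = δB on U. (Dual Poincaré lemma for fields.) -/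
/-! ### Weighted averages along the segments from the centre -/

/-- The weighted average `∫₀¹ t^p H(c + t (x - c)) dt` of `H` along the segment from `c` to `x`. -/
noncomputable def coneInt {E V : Type*} [NormedAddCommGroup E] [NormedSpace ℝ E]
    [NormedAddCommGroup V] [NormedSpace ℝ V] (c : E) (p : ℕ) (H : E → V) (x : E) : V :=
  ∫ t in (0 : ℝ)..1, t ^ p • H (c + t • (x - c))

section Cone

variable {E V : Type*} [NormedAddCommGroup E] [NormedSpace ℝ E]
  [NormedAddCommGroup V] [NormedSpace ℝ V] {U : Set E} {c : E}

theorem cone_mem (hstar : StarConvex ℝ c U) {x : E} (hx : x ∈ U) {t : ℝ}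
    (ht : t ∈ Set.Icc (0 : ℝ) 1) : c + t • (x - c) ∈ U :=
  hstar.add_smul_sub_mem hx ht.1 ht.2

theorem cone_continuousOn (hstar : StarConvex ℝ c U) {H : E → V} (hH : ContinuousOn H U)
    (p : ℕ) {x : E} (hx : x ∈ U) :
    ContinuousOn (fun t : ℝ => t ^ p • H (c + t • (x - c))) (Set.Icc 0 1) := by
  refine ContinuousOn.smul (by fun_prop) (hH.comp (by fun_prop) ?_)
  intro t ht
  exact cone_mem hstar hx ht

theorem cone_intervalIntegrable (hstar : StarConvex ℝ c U) {H : E → V} (hH : ContinuousOn H U)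
    (p : ℕ) {x : E} (hx : x ∈ U) :
    IntervalIntegrable (fun t : ℝ => t ^ p • H (c + t • (x - c))) MeasureTheory.volume 0 1 :=
  ContinuousOn.intervalIntegrable_of_Icc zero_le_one (cone_continuousOn hstar hH p hx)

/-- Local uniform bound for the integrand, which dominates in differentiation under the integral
sign; properness of `E` supplies a compact neighbourhood of `x`. -/
theorem cone_bound {V : Type*} [NormedAddCommGroup V] [ProperSpace E] (hU : IsOpen U) (hstar : StarConvex ℝ c U) {H : E → V}
    (hH : ContinuousOn H U) {x : E} (hx : x ∈ U) :
    ∃ s ∈ nhds x, s ⊆ U ∧ ∃ C : ℝ, ∀ y ∈ s, ∀ t ∈ Set.Icc (0 : ℝ) 1,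
      ‖H (c + t • (y - c))‖ ≤ C := by
  obtain ⟨r, hr, hrU⟩ := Metric.nhds_basis_closedBall.mem_iff.1 (hU.mem_nhds hx)
  have hK : IsCompact (Metric.closedBall x r ×ˢ Set.Icc (0 : ℝ) 1) :=
    (isCompact_closedBall x r).prod isCompact_Icc
  have hc : ContinuousOn (fun q : E × ℝ => H (c + q.2 • (q.1 - c)))
      (Metric.closedBall x r ×ˢ Set.Icc (0 : ℝ) 1) := by
    refine hH.comp (by fun_prop) ?_
    intro q hq
    exact cone_mem hstar (hrU hq.1) hq.2
  obtain ⟨C, hC⟩ := hK.exists_bound_of_continuousOn hc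
  exact ⟨_, Metric.closedBall_mem_nhds x hr, hrU, C, fun y hy t ht => hC (y, t) ⟨hy, ht⟩⟩

theorem cone_hasFDerivAt [ProperSpace E] (hU : IsOpen U) (hstar : StarConvex ℝ c U) {H : E → V}
    (hH : ContDiffOn ℝ 1 H U) (p : ℕ) {x : E} (hx : x ∈ U) :
    HasFDerivAt (coneInt c p H) (coneInt c (p + 1) (fderiv ℝ H) x) x := by
  have hH' : ContinuousOn (fderiv ℝ H) U := hH.continuousOn_fderiv_of_isOpen hU le_rfl
  obtain ⟨s, hs, hsU, C, hC⟩ := cone_bound hU hstar hH' hx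
  have hsub : Set.uIoc (0 : ℝ) 1 ⊆ Set.Icc 0 1 := by
    rw [Set.uIoc_of_le zero_le_one]; exact Set.Ioc_subset_Icc_self
  refine intervalIntegral.hasFDerivAt_integral_of_dominated_of_fderiv_le
    (F := fun x (t : ℝ) => t ^ p • H (c + t • (x - c)))
    (F' := fun x (t : ℝ) => t ^ (p + 1) • fderiv ℝ H (c + t • (x - c)))
    (bound := fun _ => C) hs ?_ ?_ ?_ ?_ ?_ ?_
  · filter_upwards [hs] with y hy
    exact ((cone_continuousOn hstar hH.continuousOn p (hsU hy)).mono hsub).aestronglyMeasurable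
      measurableSet_uIoc
  · exact cone_intervalIntegrable hstar hH.continuousOn p hx
  · exact ((cone_continuousOn hstar hH' (p + 1) hx).mono hsub).aestronglyMeasurable
      measurableSet_uIoc
  · refine Filter.Eventually.of_forall fun t ht y hy => ?_
    have ht' := hsub ht
    rw [norm_smul, norm_pow, Real.norm_of_nonneg ht'.1]
    calc t ^ (p + 1) * ‖fderiv ℝ H (c + t • (y - c))‖
        ≤ 1 * ‖fderiv ℝ H (c + t • (y - c))‖ := by
          gcongr
          exact pow_le_one₀ ht'.1 ht'.2
      _ ≤ C := by rw [one_mul]; exact hC y hy t ht'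
  · exact intervalIntegrable_const
  · refine Filter.Eventually.of_forall fun t ht y hy => ?_
    have hmem := cone_mem hstar (hsU hy) (hsub ht)
    have h1 : HasFDerivAt H (fderiv ℝ H (c + t • (y - c))) (c + t • (y - c)) :=
      ((hH.differentiableOn one_ne_zero).differentiableAt (hU.mem_nhds hmem)).hasFDerivAt
    have h2 : HasFDerivAt (fun y : E => c + t • (y - c)) (t • ContinuousLinearMap.id ℝ E) y :=
      (((hasFDerivAt_id y).sub_const c).const_smul t).const_add c
    refine ((h1.comp y h2).const_smul (t ^ p)).congr_fderiv ?_
    ext v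
    simp [pow_succ, mul_smul]

theorem cone_pd [ProperSpace E] [CompleteSpace V] (hU : IsOpen U) (hstar : StarConvex ℝ c U)
    {H : E → V} (hH : ContDiffOn ℝ 1 H U) (p : ℕ) {x : E} (hx : x ∈ U) (v : E) :
    pd (coneInt c p H) v x = coneInt c (p + 1) (pd H v) x := by
  have hH' : ContinuousOn (fderiv ℝ H) U := hH.continuousOn_fderiv_of_isOpen hU le_rfl
  unfold pd
  rw [(cone_hasFDerivAt hU hstar hH p hx).fderiv]
  unfold coneInt
  rw [ContinuousLinearMap.intervalIntegral_apply (cone_intervalIntegrable hstar hH' (p + 1) hx)]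
  simp

/-- Euler's identity for cone averages: integrate `d/dt (t^(p+1) H(c + t (x - c)))` over
`[0, 1]`. -/
theorem cone_euler [ProperSpace E] [CompleteSpace V] (hU : IsOpen U) (hstar : StarConvex ℝ c U)
    {H : E → V} (hH : ContDiffOn ℝ 1 H U) (p : ℕ) {x : E} (hx : x ∈ U) :
    ((p : ℝ) + 1) • coneInt c p H x + pd (coneInt c p H) (x - c) x = H x := by
  have hH' : ContinuousOn (fderiv ℝ H) U := hH.continuousOn_fderiv_of_isOpen hU le_rfl
  have hpd : ContinuousOn (pd H (x - c)) U := hH'.clm_apply continuousOn_const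
  have i1 : IntervalIntegrable (fun t : ℝ => ((p : ℝ) + 1) • t ^ p • H (c + t • (x - c)))
      MeasureTheory.volume 0 1 :=
    (cone_intervalIntegrable hstar hH.continuousOn p hx).smul ((p : ℝ) + 1)
  have i2 := cone_intervalIntegrable hstar hpd (p + 1) hx
  have key := intervalIntegral.integral_eq_sub_of_hasDerivAt
    (f := fun t : ℝ => t ^ (p + 1) • H (c + t • (x - c))) (fun t ht => ?_) (i1.add i2)
  · rw [cone_pd hU hstar hH p hx]
    unfold coneInt
    rw [← intervalIntegral.integral_smul, ← intervalIntegral.integral_add i1 i2]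
    refine Eq.trans ?_ (key.trans ?_)
    · rfl
    · simp
  · rw [Set.uIcc_of_le zero_le_one] at ht
    have h1 : HasFDerivAt H (fderiv ℝ H (c + t • (x - c))) (c + t • (x - c)) :=
      ((hH.differentiableOn one_ne_zero).differentiableAt
        (hU.mem_nhds (cone_mem hstar hx ht))).hasFDerivAt
    have h2 : HasDerivAt (fun t : ℝ => c + t • (x - c)) ((1 : ℝ) • (x - c)) t :=
      ((hasDerivAt_id t).smul_const (x - c)).const_add c
    have h3 := (hasDerivAt_pow (p + 1) t).smul (h1.comp_hasDerivAt t h2)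
    refine h3.congr_deriv ?_
    simp [pd, smul_smul, add_comm]

end Cone

/-- The derivative of a cone average is a cone average of the derivative, so smoothness follows by
induction; the codomain changes with each step, whence the common universe. -/
theorem cone_contDiffOn_nat.{u} {E : Type u} [NormedAddCommGroup E] [NormedSpace ℝ E]
    [ProperSpace E] {U : Set E} {c : E} (hU : IsOpen U) (hstar : StarConvex ℝ c U) (N : ℕ) :
    ∀ {V : Type u} [NormedAddCommGroup V] [NormedSpace ℝ V] (H : E → V) (p : ℕ),
      ContDiffOn ℝ (⊤ : ℕ∞) H U → ContDiffOn ℝ N (coneInt c p H) U := by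
  have h1 : (1 : WithTop ℕ∞) ≤ ((⊤ : ℕ∞) : WithTop ℕ∞) := by exact_mod_cast le_top
  induction N with
  | zero =>
    intro V _ _ H p hH
    rw [Nat.cast_zero, contDiffOn_zero]
    exact fun x hx =>
      (cone_hasFDerivAt hU hstar (hH.of_le h1) p hx).continuousAt.continuousWithinAt
  | succ N ih =>
    intro V _ _ H p hH
    rw [Nat.cast_succ, contDiffOn_succ_iff_fderiv_of_isOpen hU]
    refine ⟨fun x hx =>
      (cone_hasFDerivAt hU hstar (hH.of_le h1) p hx).differentiableAt.differentiableWithinAt,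
      by simp, ?_⟩
    refine (ih (fderiv ℝ H) (p + 1) (hH.fderiv_of_isOpen hU (by simp))).congr fun x hx => ?_
    exact (cone_hasFDerivAt hU hstar (hH.of_le h1) p hx).fderiv

theorem cone_contDiffOn.{u} {E V : Type u} [NormedAddCommGroup E] [NormedSpace ℝ E]
    [ProperSpace E] [NormedAddCommGroup V] [NormedSpace ℝ V] {U : Set E} {c : E}
    (hU : IsOpen U) (hstar : StarConvex ℝ c U) {H : E → V} (hH : ContDiffOn ℝ (⊤ : ℕ∞) H U)
    (p : ℕ) : ContDiffOn ℝ (⊤ : ℕ∞) (coneInt c p H) U :=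
  contDiffOn_infty.2 fun N => cone_contDiffOn_nat hU hstar N H p hH

/-! ### Antisymmetry of the wedge with a vector -/

/-- Deleting position `a` after permuting by `σ` amounts to deleting position `σ a` and permuting
the rest by some `τ`. Moving `a` and `σ a` to the front by cycles computes the sign of `τ`. -/
theorem exists_succAbove_perm {k : ℕ} (σ : Equiv.Perm (Fin (k + 1))) (a : Fin (k + 1)) :
    ∃ τ : Equiv.Perm (Fin k), (∀ b, σ (a.succAbove b) = (σ a).succAbove (τ b)) ∧
      (-1 : ℝ) ^ (a : ℕ) * ((Equiv.Perm.sign τ : ℤ) : ℝ)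
        = ((Equiv.Perm.sign σ : ℤ) : ℝ) * (-1) ^ ((σ a : Fin (k + 1)) : ℕ) := by
  set ρ : Equiv.Perm (Fin (k + 1)) := (σ a).cycleRange * σ * a.cycleRange⁻¹ with hρ
  obtain ⟨⟨q, τ⟩, hq⟩ := (Equiv.Perm.decomposeFin (n := k)).symm.surjective ρ
  have hρ0 : ρ 0 = 0 := by
    simp [hρ, Equiv.Perm.mul_apply, Equiv.Perm.inv_def]
  have hq0 : q = 0 := by
    rw [← hq, Equiv.Perm.decomposeFin_symm_apply_zero] at hρ0
    exact hρ0
  subst hq0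
  refine ⟨τ, fun b => ?_, ?_⟩
  · have h := congrArg (fun π : Equiv.Perm (Fin (k + 1)) => π b.succ) hq
    simp only [Equiv.Perm.decomposeFin_symm_apply_succ, Equiv.swap_self, Equiv.refl_apply, hρ,
      Equiv.Perm.mul_apply, Equiv.Perm.inv_def, Fin.cycleRange_symm_succ] at h
    rw [← Fin.cycleRange_symm_succ (σ a), h, Equiv.symm_apply_apply]
  · have h := congrArg Equiv.Perm.sign hq
    rw [Equiv.Perm.decomposeFin.symm_sign, hρ] at h
    simp only [if_true, one_mul, map_mul, Fin.sign_cycleRange, Equiv.Perm.sign_inv] at h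
    rw [h]
    push_cast
    have h2 : ((-1 : ℝ) ^ (a : ℕ)) * (-1) ^ (a : ℕ) = 1 := by
      rw [← mul_pow]; simp
    linear_combination ((-1 : ℝ) ^ ((σ a : Fin (k + 1)) : ℕ)
      * ((Equiv.Perm.sign σ : ℤ) : ℝ)) * h2

theorem wedge_antisymm {ι : Type*} {k : ℕ} (v : ι → ℝ) (g : (Fin k → ι) → ℝ)
    (hg : ∀ (i : Fin k → ι) (σ : Equiv.Perm (Fin k)),
      g (i ∘ σ) = ((Equiv.Perm.sign σ : ℤ) : ℝ) * g i)
    (j : Fin (k + 1) → ι) (σ : Equiv.Perm (Fin (k + 1))) :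
    ∑ a : Fin (k + 1), (-1 : ℝ) ^ (a : ℕ) * v ((j ∘ σ) a) * g ((j ∘ σ) ∘ a.succAbove)
      = ((Equiv.Perm.sign σ : ℤ) : ℝ) *
        ∑ a : Fin (k + 1), (-1 : ℝ) ^ (a : ℕ) * v (j a) * g (j ∘ a.succAbove) := by
  rw [Finset.mul_sum, ← Equiv.sum_comp σ (fun a => ((Equiv.Perm.sign σ : ℤ) : ℝ) *
    ((-1 : ℝ) ^ (a : ℕ) * v (j a) * g (j ∘ a.succAbove)))]
  refine Finset.sum_congr rfl fun a _ => ?_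
  obtain ⟨τ, hτ, hs⟩ := exists_succAbove_perm σ a
  have h1 : (j ∘ σ) ∘ a.succAbove = (j ∘ (σ a).succAbove) ∘ τ := by
    funext b
    simp [hτ]
  rw [h1, hg, Function.comp_apply]
  linear_combination (v (j (σ a)) * g (j ∘ (σ a).succAbove)) * hs

/-- Bringing the index in position `a` to the front costs the sign `(-1)^a`. -/
theorem antisymm_cons {ι : Type*} {k : ℕ} (g : (Fin (k + 1) → ι) → ℝ)
    (hg : ∀ (i : Fin (k + 1) → ι) (σ : Equiv.Perm (Fin (k + 1))),
      g (i ∘ σ) = ((Equiv.Perm.sign σ : ℤ) : ℝ) * g i)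
    (i : Fin (k + 1) → ι) (a : Fin (k + 1)) :
    (-1 : ℝ) ^ (a : ℕ) * g (Fin.cons (i a) (i ∘ a.succAbove)) = g i := by
  have h1 : (Fin.cons (i a) (i ∘ a.succAbove) : Fin (k + 1) → ι) = i ∘ a.cycleRange.symm := by
    funext b
    refine Fin.cases ?_ (fun b => ?_) b <;> simp
  rw [h1, hg]
  simp only [Equiv.Perm.sign_symm, Fin.sign_cycleRange]
  push_cast
  rw [← mul_assoc, ← mul_pow]
  simp

/-! ### The divergence of the wedge -/

theorem pd_wedge_cons {n m : ℕ} (c x : EuclideanSpace ℝ (Fin n))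
    (G : (Fin (m + 1) → Fin n) → EuclideanSpace ℝ (Fin n) → ℝ)
    (hG : ∀ i, DifferentiableAt ℝ (G i) x) (i : Fin (m + 1) → Fin n) (j : Fin n) :
    pd (fun y => ∑ a : Fin (m + 2), (-1 : ℝ) ^ (a : ℕ) *
        (y - c) ((Fin.cons j i : Fin (m + 2) → Fin n) a) *
        G ((Fin.cons j i : Fin (m + 2) → Fin n) ∘ a.succAbove) y) (EuclideanSpace.single j 1) x
      = G i x + (x - c) j * pd (G i) (EuclideanSpace.single j 1) x
        - ∑ a : Fin (m + 1), (-1 : ℝ) ^ (a : ℕ) *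
          ((if i a = j then 1 else 0) * G (Fin.cons j (i ∘ a.succAbove)) x
            + (x - c) (i a) * pd (G (Fin.cons j (i ∘ a.succAbove)))
              (EuclideanSpace.single j 1) x) := by
  have hcoord : ∀ l : Fin n, HasFDerivAt (fun y : EuclideanSpace ℝ (Fin n) => (y - c) l)
      (EuclideanSpace.proj l : EuclideanSpace ℝ (Fin n) →L[ℝ] ℝ) x := fun l => by
    simpa using ((EuclideanSpace.proj l : EuclideanSpace ℝ (Fin n) →L[ℝ] ℝ).hasFDerivAt
      (x := x)).sub_const (c l)
  have hproj : ∀ l : Fin n, (EuclideanSpace.proj l : EuclideanSpace ℝ (Fin n) →L[ℝ] ℝ)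
      (EuclideanSpace.single j 1) = if l = j then 1 else 0 := fun l => by
    simp
  have hc0 : ∀ a : Fin (m + 1), (Fin.cons j i : Fin (m + 2) → Fin n) ∘ a.succ.succAbove
      = Fin.cons j (i ∘ a.succAbove) := by
    intro a
    funext b
    refine Fin.cases ?_ (fun b => ?_) b <;> simp
  have hc1 : (Fin.cons j i : Fin (m + 2) → Fin n) ∘ (0 : Fin (m + 2)).succAbove = i := by
    funext b
    simp
  have hsum := HasFDerivAt.fun_sum (u := Finset.univ) (fun (a : Fin (m + 2)) _ =>
    (((hcoord ((Fin.cons j i : Fin (m + 2) → Fin n) a)).const_mul ((-1 : ℝ) ^ (a : ℕ))).fun_mul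
      (hG ((Fin.cons j i : Fin (m + 2) → Fin n) ∘ a.succAbove)).hasFDerivAt))
  unfold pd
  rw [hsum.fderiv, Fin.sum_univ_succ]
  simp only [hc0, hc1, Fin.cons_zero, Fin.cons_succ]
  simp only [add_apply, sum_apply, smul_apply, smul_eq_mul,
    hproj, Fin.val_zero, Fin.val_succ, pow_zero, pow_succ]
  rw [sub_eq_add_neg _ (Finset.sum _ _), ← Finset.sum_neg_distrib]
  congr 1
  · simp; ring
  · refine Finset.sum_congr rfl fun a _ => ?_
    ring

theorem sum_coord_mul_pd {n : ℕ} (f : EuclideanSpace ℝ (Fin n) → ℝ)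
    (v x : EuclideanSpace ℝ (Fin n)) :
    ∑ j, v j * pd f (EuclideanSpace.single j 1) x = pd f v x := by
  unfold pd
  have hv : v = ∑ j, v j • EuclideanSpace.single j (1 : ℝ) := by
    ext l
    simp [Pi.single_apply]
  conv_rhs => rw [hv]
  simp

/-- **Dual Poincaré lemma for fields** (here `k = m + 1` with `1 ≤ k ≤ n − 1`).
On an open star-shaped subset `U` of `ℝⁿ`, every smooth divergence-free antisymmetric
`k`-tensor field is the divergence of a smooth antisymmetric `(k+1)`-tensor field. -/
theorem dual_poincare_lemma_fields (n m : ℕ) (hk : m + 2 ≤ n)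
    (U : Set (EuclideanSpace ℝ (Fin n))) (hU : IsOpen U)
    (c : EuclideanSpace ℝ (Fin n)) (hc : c ∈ U) (hstar : StarConvex ℝ c U)
    (F : EuclideanSpace ℝ (Fin n) → (Fin (m + 1) → Fin n) → ℝ)
    (hF : ContDiffOn ℝ (⊤ : ℕ∞) F U)
    (hanti : IsAntisymmOn n (m + 1) U F)
    (hdivfree : ∀ x ∈ U, ∀ i : Fin m → Fin n, divg n m F x i = 0) :
    ∃ B : EuclideanSpace ℝ (Fin n) → (Fin (m + 2) → Fin n) → ℝ, ContDiffOn ℝ (⊤ : ℕ∞) B U ∧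
      IsAntisymmOn n (m + 2) U B ∧
      ∀ x ∈ U, ∀ i : Fin (m + 1) → Fin n, F x i = divg n (m + 1) B x i := by
  obtain ⟨p, rfl⟩ := Nat.exists_eq_add_of_le hk
  have h1 : (1 : WithTop ℕ∞) ≤ ((⊤ : ℕ∞) : WithTop ℕ∞) := by exact_mod_cast le_top
  have hFi : ∀ i, ContDiffOn ℝ (⊤ : ℕ∞) (fun y => F y i) U := fun i => contDiffOn_pi.1 hF i
  have hFi1 : ∀ i, ContDiffOn ℝ 1 (fun y => F y i) U := fun i => (hFi i).of_le h1
  set G : (Fin (m + 1) → Fin (m + 2 + p)) → EuclideanSpace ℝ (Fin (m + 2 + p)) → ℝ :=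
    fun i => coneInt c p (fun y => F y i) with hGdef
  have hG : ∀ i, ContDiffOn ℝ (⊤ : ℕ∞) (G i) U := fun i => cone_contDiffOn hU hstar (hFi i) p
  have hGanti : ∀ x ∈ U, ∀ (i : Fin (m + 1) → Fin (m + 2 + p)) (σ : Equiv.Perm (Fin (m + 1))),
      G (i ∘ σ) x = ((Equiv.Perm.sign σ : ℤ) : ℝ) * G i x := by
    intro x hx i σ
    simp only [hGdef, coneInt]
    rw [← intervalIntegral.integral_const_mul]
    refine intervalIntegral.integral_congr fun t ht => ?_
    rw [Set.uIcc_of_le zero_le_one] at ht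
    simp only [smul_eq_mul]
    rw [hanti _ (cone_mem hstar hx ht) i σ]
    ring
  have hGdiv : ∀ x ∈ U, ∀ l : Fin m → Fin (m + 2 + p),
      ∑ j, pd (G (Fin.cons j l)) (EuclideanSpace.single j 1) x = 0 := by
    intro x hx l
    have hcont : ∀ j : Fin (m + 2 + p), ContinuousOn
        (pd (fun y => F y (Fin.cons j l)) (EuclideanSpace.single j 1)) U := fun j =>
      ((hFi1 (Fin.cons j l)).continuousOn_fderiv_of_isOpen hU le_rfl).clm_apply continuousOn_const
    simp only [hGdef, cone_pd hU hstar (hFi1 _) p hx]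
    unfold coneInt
    rw [← intervalIntegral.integral_finsetSum
      fun j _ => cone_intervalIntegrable hstar (hcont j) (p + 1) hx]
    refine (intervalIntegral.integral_congr (g := fun _ => (0 : ℝ)) fun t ht => ?_).trans (by simp)
    rw [Set.uIcc_of_le zero_le_one] at ht
    have h := hdivfree _ (cone_mem hstar hx ht) l
    simp only [divg] at h
    simp only [← Finset.smul_sum, h, smul_zero]
  refine ⟨fun y j => ∑ a : Fin (m + 2), (-1 : ℝ) ^ (a : ℕ) * (y - c) (j a) *
    G (j ∘ a.succAbove) y, ?_, ?_, ?_⟩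
  · refine contDiffOn_pi.2 fun j => ContDiffOn.sum fun a _ => ?_
    refine ContDiffOn.mul (ContDiff.contDiffOn ?_) (hG _)
    simp only [PiLp.sub_apply]
    fun_prop
  · intro x hx j σ
    exact wedge_antisymm (fun l => (x - c) l) (fun i => G i x) (hGanti x hx) j σ
  · intro x hx i
    have hd : ∀ i, DifferentiableAt ℝ (G i) x := fun i =>
      (cone_hasFDerivAt hU hstar (hFi1 i) p hx).differentiableAt
    have hE := cone_euler hU hstar (hFi1 i) p hx
    unfold divg
    simp only [pd_wedge_cons c x G hd i, Finset.sum_sub_distrib, Finset.sum_add_distrib]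
    -- The derivatives that fall on the coordinate factors contribute `(m + 1) G_i`.
    have hdiag : ∑ j, ∑ a : Fin (m + 1), (-1 : ℝ) ^ (a : ℕ) *
          ((if i a = j then 1 else 0) * G (Fin.cons j (i ∘ a.succAbove)) x
            + (x - c) (i a) * pd (G (Fin.cons j (i ∘ a.succAbove)))
              (EuclideanSpace.single j 1) x) = (m + 1) * G i x := by
      rw [Finset.sum_comm]
      have : ∀ a : Fin (m + 1), ∑ j, (-1 : ℝ) ^ (a : ℕ) *
          ((if i a = j then 1 else 0) * G (Fin.cons j (i ∘ a.succAbove)) x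
            + (x - c) (i a) * pd (G (Fin.cons j (i ∘ a.succAbove)))
              (EuclideanSpace.single j 1) x) = G i x := by
        intro a
        rw [← Finset.mul_sum, Finset.sum_add_distrib, ← Finset.mul_sum, hGdiv x hx, mul_zero,
          add_zero]
        simp only [ite_mul, one_mul, zero_mul, Finset.sum_ite_eq, Finset.mem_univ, if_true]
        exact antisymm_cons (fun i => G i x) (hGanti x hx) i a
      rw [Finset.sum_congr rfl fun a _ => this a]
      simp
    rw [hdiag, sum_coord_mul_pd, ← hE]
    simp only [hGdef, Finset.sum_const, Finset.card_univ, Fintype.card_fin, nsmul_eq_mul,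
      smul_eq_mul]
    push_cast
    ring
end

section
/- Let n ≥ 2 and let U be an open subset of ℝⁿ that is star-shaped about one of its points. If F : U → ℝⁿ is a smooth vector field with vanishing divergence, Σ_i ∂_i F_i = 0 on U, then there exists a smooth antisymmetric 2-tensor field B on U (B_{ij} = −B_{ji}) that is simultaneously a potential for F, namely F_i = Σ_j ∂_j B_{ji} on U for every i, and closed, namely ∂_k B_{ij} + ∂_i B_{jk} + ∂_j B_{ki} = 0 on U for all i, j, k. (Strong dual Poincaré lemma for divergence-free vector fields.) -/
namespace DualPoincare

open Set Filter Topology MeasureTheory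
open scoped ContDiff Convolution

/-! ### Calculus of partial derivatives and the Laplacian -/

/-- Euclidean space `ℝⁿ`. -/
abbrev Euc (n : ℕ) := EuclideanSpace ℝ (Fin n)

/-- The `i`-th standard basis vector. -/
noncomputable abbrev bv {n : ℕ} (i : Fin n) : Euc n := EuclideanSpace.single i 1

/-- The Laplacian `∑ᵢ ∂ᵢ∂ᵢ f`; like `pd`, it is meaningful where `f` is twice differentiable. -/
noncomputable def lap {n : ℕ} (f : Euc n → ℝ) (x : Euc n) : ℝ :=
  ∑ i, pd (pd f (bv i)) (bv i) x

section Calculus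

variable {E F : Type*} [NormedAddCommGroup E] [NormedSpace ℝ E]
    [NormedAddCommGroup F] [NormedSpace ℝ F]

lemma pd_contDiffOn {f : E → F} {U : Set E} (hU : IsOpen U) (hf : ContDiffOn ℝ ∞ f U) (v : E) :
    ContDiffOn ℝ ∞ (pd f v) U := by
  have h : ContDiffOn ℝ ∞ (fderiv ℝ f) U := hf.fderiv_of_isOpen hU (by simp)
  exact h.clm_apply contDiffOn_const

lemma pd_contDiff {f : E → F} (hf : ContDiff ℝ ∞ f) (v : E) : ContDiff ℝ ∞ (pd f v) :=
  contDiffOn_univ.1 (pd_contDiffOn isOpen_univ hf.contDiffOn v)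

lemma diffAt_of_smooth {f : E → F} {U : Set E} (hU : IsOpen U) (hf : ContDiffOn ℝ ∞ f U) {x : E}
    (hx : x ∈ U) : DifferentiableAt ℝ f x :=
  (hf.contDiffAt (hU.mem_nhds hx)).differentiableAt (by simp)

lemma pd_eventuallyEq {f g : E → F} {x : E} (h : f =ᶠ[𝓝 x] g) (v : E) :
    pd f v =ᶠ[𝓝 x] pd g v := by
  filter_upwards [h.fderiv (𝕜 := ℝ)] with y hy
  simp [pd, hy]

lemma pd_add {f g : E → F} {x : E} (hf : DifferentiableAt ℝ f x) (hg : DifferentiableAt ℝ g x)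
    (v : E) : pd (fun y => f y + g y) v x = pd f v x + pd g v x := by
  simp [pd, fderiv_fun_add hf hg]

lemma pd_sub {f g : E → F} {x : E} (hf : DifferentiableAt ℝ f x) (hg : DifferentiableAt ℝ g x)
    (v : E) : pd (fun y => f y - g y) v x = pd f v x - pd g v x := by
  simp [pd, fderiv_fun_sub hf hg]

lemma pd_const_mul {f : E → ℝ} {x : E} (c : ℝ) (hf : DifferentiableAt ℝ f x)
    (v : E) : pd (fun y => c * f y) v x = c * pd f v x := by
  simp [pd, fderiv_const_mul hf]

lemma pd_mul {f g : E → ℝ} {x : E} (hf : DifferentiableAt ℝ f x) (hg : DifferentiableAt ℝ g x)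
    (v : E) : pd (fun y => f y * g y) v x = f x * pd g v x + g x * pd f v x := by
  simp [pd, fderiv_fun_mul hf hg]

lemma pd_sum {ι : Type*} (s : Finset ι) {f : ι → E → F} {x : E}
    (hf : ∀ i ∈ s, DifferentiableAt ℝ (f i) x)
    (v : E) : pd (fun y => ∑ i ∈ s, f i y) v x = ∑ i ∈ s, pd (f i) v x := by
  simp [pd, fderiv_fun_sum hf]

lemma pd_comm {f : E → F} {U : Set E} (hU : IsOpen U) (hf : ContDiffOn ℝ ∞ f U) {x : E}
    (hx : x ∈ U) (v w : E) : pd (pd f v) w x = pd (pd f w) v x := by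
  have hd : DifferentiableAt ℝ (fderiv ℝ f) x :=
    diffAt_of_smooth hU (hf.fderiv_of_isOpen hU (by simp)) hx
  have key : ∀ v w, pd (pd f v) w x = fderiv ℝ (fderiv ℝ f) x w v := by
    intro v w
    have : fderiv ℝ (fun y => fderiv ℝ f y v) x = _ :=
      fderiv_clm_apply hd (differentiableAt_const v)
    change fderiv ℝ (fun y => fderiv ℝ f y v) x w = _
    rw [this]
    simp
  rw [key, key]
  have := (hf.contDiffAt (hU.mem_nhds hx)).isSymmSndFDerivAt
    (by simp only [minSmoothness_of_isRCLikeNormedField]; exact ENat.LEInfty.out)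
  exact this _ _

lemma pd_comp_sub_left (f : E → F) (a v x : E) :
    pd (fun y => f (a - y)) v x = - pd f v (a - x) := by
  have h2 := (ContinuousLinearEquiv.neg ℝ (M := E)).comp_right_fderiv (f := fun z => f (a + z))
    (x := x)
  have h3 : ((fun z => f (a + z)) ∘ (ContinuousLinearEquiv.neg ℝ (M := E))) = fun y => f (a - y) := by
    ext y; simp [sub_eq_add_neg]
  rw [h3, fderiv_comp_add_left] at h2
  rw [pd, h2]
  simp [pd, sub_eq_add_neg]

lemma pd_hasCompactSupport {f : E → F} (hf : HasCompactSupport f) (v : E) :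
    HasCompactSupport (pd f v) :=
  hf.fderiv_apply ℝ v

end Calculus

section Lap

variable {n : ℕ}

lemma lap_contDiffOn {f : Euc n → ℝ} {U : Set (Euc n)} (hU : IsOpen U) (hf : ContDiffOn ℝ ∞ f U) :
    ContDiffOn ℝ ∞ (lap f) U :=
  ContDiffOn.sum fun _ _ => pd_contDiffOn hU (pd_contDiffOn hU hf _) _

lemma lap_contDiff {f : Euc n → ℝ} (hf : ContDiff ℝ ∞ f) : ContDiff ℝ ∞ (lap f) :=
  contDiffOn_univ.1 (lap_contDiffOn isOpen_univ hf.contDiffOn)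

lemma lap_eventuallyEq {f g : Euc n → ℝ} {x : Euc n} (h : f =ᶠ[𝓝 x] g) :
    lap f =ᶠ[𝓝 x] lap g := by
  have : ∀ᶠ y in 𝓝 x, ∀ i : Fin n, pd (pd f (bv i)) (bv i) y = pd (pd g (bv i)) (bv i) y :=
    eventually_all.2 fun i => pd_eventuallyEq (pd_eventuallyEq h _) _
  filter_upwards [this] with y hy
  simp [lap, hy]

lemma lap_zero_of_eventually {f : Euc n → ℝ} {x : Euc n} (h : ∀ᶠ y in 𝓝 x, f y = 0) :
    lap f x = 0 := by
  have h2 : f =ᶠ[𝓝 x] fun _ => (0 : ℝ) := h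
  rw [(lap_eventuallyEq h2).self_of_nhds]
  have : ∀ v : Euc n, pd (fun _ : Euc n => (0 : ℝ)) v = fun _ => 0 := fun v => by ext; simp [pd]
  simp [lap, this]

lemma lap_add {f g : Euc n → ℝ} {U : Set (Euc n)} (hU : IsOpen U) (hf : ContDiffOn ℝ ∞ f U)
    (hg : ContDiffOn ℝ ∞ g U) {x : Euc n} (hx : x ∈ U) :
    lap (fun y => f y + g y) x = lap f x + lap g x := by
  simp only [lap]
  rw [← Finset.sum_add_distrib]
  refine Finset.sum_congr rfl fun i _ => ?_
  have h1 : pd (fun y => f y + g y) (bv i) =ᶠ[𝓝 x] fun y => pd f (bv i) y + pd g (bv i) y := by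
    filter_upwards [hU.mem_nhds hx] with y hy
    exact pd_add (diffAt_of_smooth hU hf hy) (diffAt_of_smooth hU hg hy) _
  rw [(pd_eventuallyEq h1 _).self_of_nhds]
  exact pd_add (diffAt_of_smooth hU (pd_contDiffOn hU hf _) hx)
    (diffAt_of_smooth hU (pd_contDiffOn hU hg _) hx) _

lemma lap_const_mul {f : Euc n → ℝ} {U : Set (Euc n)} (c : ℝ) (hU : IsOpen U)
    (hf : ContDiffOn ℝ ∞ f U) {x : Euc n} (hx : x ∈ U) :
    lap (fun y => c * f y) x = c * lap f x := by
  simp only [lap]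
  rw [Finset.mul_sum]
  refine Finset.sum_congr rfl fun i _ => ?_
  have h1 : pd (fun y => c * f y) (bv i) =ᶠ[𝓝 x] fun y => c * pd f (bv i) y := by
    filter_upwards [hU.mem_nhds hx] with y hy
    exact pd_const_mul c (diffAt_of_smooth hU hf hy) _
  rw [(pd_eventuallyEq h1 _).self_of_nhds]
  exact pd_const_mul c (diffAt_of_smooth hU (pd_contDiffOn hU hf _) hx) _

lemma lap_sub {f g : Euc n → ℝ} {U : Set (Euc n)} (hU : IsOpen U) (hf : ContDiffOn ℝ ∞ f U)
    (hg : ContDiffOn ℝ ∞ g U) {x : Euc n} (hx : x ∈ U) :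
    lap (fun y => f y - g y) x = lap f x - lap g x := by
  have := lap_add hU hf (contDiffOn_const.mul hg : ContDiffOn ℝ ∞ (fun y => (-1 : ℝ) * g y) U) hx
  rw [lap_const_mul _ hU hg hx] at this
  convert this using 1
  · congr 1; ext y; ring
  · ring

lemma lap_comp_sub_left (f : Euc n → ℝ) (a x : Euc n) :
    lap (fun y => f (a - y)) x = lap f (a - x) := by
  simp only [lap]
  refine Finset.sum_congr rfl fun i _ => ?_
  have h1 : pd (fun y => f (a - y)) (bv i) = fun y => - pd f (bv i) (a - y) := by
    ext y; exact pd_comp_sub_left _ _ _ _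
  rw [h1]
  have h2 := pd_comp_sub_left (pd f (bv i)) a (bv i) x
  simp only [pd] at h2 ⊢
  rw [fderiv_fun_neg]
  simp [h2]

lemma lap_comp_sub_right (f : Euc n → ℝ) (a x : Euc n) :
    lap (fun y => f (y - a)) x = lap f (x - a) := by
  have h : ∀ (g : Euc n → ℝ) v, pd (fun y => g (y - a)) v = fun y => pd g v (y - a) := by
    intro g v
    ext y
    simp only [pd, fderiv_comp_sub]
  simp only [lap, h]

lemma lap_hasCompactSupport {f : Euc n → ℝ} (hf : HasCompactSupport f) :
    HasCompactSupport (lap f) := by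
  refine HasCompactSupport.of_support_subset_isCompact hf fun x hx => ?_
  by_contra h
  exact hx (lap_zero_of_eventually (notMem_tsupport_iff_eventuallyEq.1 h))

/-- The Laplacian is formally self-adjoint. -/
lemma integral_mul_lap {f g : Euc n → ℝ} (hf : ContDiff ℝ ∞ f) (hg : ContDiff ℝ ∞ g)
    (hgs : HasCompactSupport g) : ∫ x, f x * lap g x = ∫ x, lap f x * g x := by
  have int : ∀ {a b : Euc n → ℝ}, ContDiff ℝ ∞ a → ContDiff ℝ ∞ b → HasCompactSupport b →
      Integrable (fun x => a x * b x) := fun ha hb hbs =>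
    (ha.continuous.mul hb.continuous).integrable_of_hasCompactSupport hbs.mul_left
  have parts : ∀ {a b : Euc n → ℝ}, ContDiff ℝ ∞ a → ContDiff ℝ ∞ b → HasCompactSupport b →
      ∀ v, ∫ x, a x * pd b v x = - ∫ x, pd a v x * b x := fun ha hb hbs v =>
    integral_mul_fderiv_eq_neg_fderiv_mul_of_integrable (int (pd_contDiff ha v) hb hbs)
      (int ha (pd_contDiff hb v) (pd_hasCompactSupport hbs v)) (int ha hb hbs)
      (fun x _ => ha.contDiffAt.differentiableAt (by simp))
      (fun x _ => hb.contDiffAt.differentiableAt (by simp))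
  simp only [lap, Finset.mul_sum, Finset.sum_mul]
  rw [integral_finsetSum, integral_finsetSum]
  · refine Finset.sum_congr rfl fun i _ => ?_
    rw [parts hf (pd_contDiff hg _) (pd_hasCompactSupport hgs _),
      parts (pd_contDiff hf _) hg hgs, neg_neg]
  · exact fun i _ => int (pd_contDiff (pd_contDiff hf _) _) hg hgs
  · exact fun i _ => int hf (pd_contDiff (pd_contDiff hg _) _)
      (pd_hasCompactSupport (pd_hasCompactSupport hgs _) _)

/-- The convolution `x ↦ ∫ g(t) f(x - t) dt`. -/
noncomputable def conv (g f : Euc n → ℝ) : Euc n → ℝ :=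
  g ⋆[ContinuousLinearMap.mul ℝ ℝ, volume] f

lemma conv_apply (g f : Euc n → ℝ) (x : Euc n) : conv g f x = ∫ t, g t * f (x - t) := by
  simp [conv, convolution]

lemma conv_contDiff {g f : Euc n → ℝ} (hg : LocallyIntegrable g) (hf : ContDiff ℝ ∞ f)
    (hfs : HasCompactSupport f) : ContDiff ℝ ∞ (conv g f) :=
  hfs.contDiff_convolution_right _ hg hf

lemma pd_conv {g f : Euc n → ℝ} (hg : LocallyIntegrable g) (hf : ContDiff ℝ ∞ f)
    (hfs : HasCompactSupport f) (v : Euc n) : pd (conv g f) v = conv g (pd f v) := by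
  ext x
  have h := hfs.hasFDerivAt_convolution_right (ContinuousLinearMap.mul ℝ ℝ) hg
    (hf.of_le (by simp)) x
  have h2 := h.fderiv
  change fderiv ℝ (conv g f) x v = (g ⋆[ContinuousLinearMap.mul ℝ ℝ, volume] _) x
  rw [conv, h2, convolution_precompR_apply _ hg (hfs.fderiv ℝ) (hf.continuous_fderiv (by simp))]
  rfl

lemma lap_conv {g f : Euc n → ℝ} (hg : LocallyIntegrable g) (hf : ContDiff ℝ ∞ f)
    (hfs : HasCompactSupport f) : lap (conv g f) = conv g (lap f) := by
  ext x
  have hI : ∀ i : Fin n, Integrable fun t => g t * pd (pd f (bv i)) (bv i) (x - t) := by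
    intro i
    have hs := pd_hasCompactSupport (pd_hasCompactSupport hfs (bv i)) (bv i)
    have hc := (pd_contDiff (pd_contDiff hf (bv i)) (bv i)).continuous
    exact hs.convolutionExists_right (ContinuousLinearMap.mul ℝ ℝ) hg hc x
  simp only [lap]
  rw [conv_apply]
  simp only [lap, Finset.mul_sum]
  rw [integral_finsetSum _ fun i _ => hI i]
  refine Finset.sum_congr rfl fun i _ => ?_
  rw [pd_conv hg hf hfs, pd_conv hg (pd_contDiff hf _) (pd_hasCompactSupport hfs _), conv_apply]

lemma exists_cutoff {K O : Set (Euc n)} (hK : IsCompact K) (hO : IsOpen O) (hKO : K ⊆ O) :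
    ∃ χ : Euc n → ℝ, ContDiff ℝ ∞ χ ∧ HasCompactSupport χ ∧ tsupport χ ⊆ O ∧
      ∀ᶠ x in 𝓝ˢ K, χ x = 1 := by
  obtain ⟨L, hL, hKL, hLO⟩ := exists_compact_between hK hO hKO
  obtain ⟨f, h1, h0, -⟩ := exists_contMDiffMap_one_nhds_of_subset_interior (n := ⊤)
    (modelWithCornersSelf ℝ (Euc n)) hK.isClosed hKL
  have hts : tsupport f ⊆ L := closure_minimal (fun x hx => by
    by_contra h; exact hx (h0 x h)) hL.isClosed
  exact ⟨f, f.contMDiff.contDiff, hL.of_isClosed_subset (isClosed_tsupport _) hts,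
    hts.trans hLO, h1⟩

/-- Multiplying by a cutoff function turns a locally defined smooth function into a global one. -/
lemma contDiff_cutoff_mul {χ f : Euc n → ℝ} {O : Set (Euc n)} (hO : IsOpen O)
    (hχ : ContDiff ℝ ∞ χ) (hs : tsupport χ ⊆ O) (hf : ContDiffOn ℝ ∞ f O) :
    ContDiff ℝ ∞ (fun x => χ x * f x) := by
  rw [contDiff_iff_contDiffAt]
  intro x
  by_cases hx : x ∈ O
  · exact hχ.contDiffAt.mul (hf.contDiffAt (hO.mem_nhds hx))
  · have : (fun x => χ x * f x) =ᶠ[𝓝 x] fun _ => 0 := by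
      filter_upwards [notMem_tsupport_iff_eventuallyEq.1 fun h => hx (hs h)] with y hy
      simp [hy]
    exact contDiffAt_const.congr_of_eventuallyEq this

end Lap

/-! ### The Newtonian kernel -/

section Kernel

variable {n : ℕ}

/-- The kernel `(|x|² + a)^{-(n-2)/2}`. For `a = 0` it is the Newtonian kernel `|x|^{-(n-2)}` up to
normalisation, with junk value at the origin; for `a > 0` it is a smooth regularisation. -/
noncomputable def ker (n : ℕ) (a : ℝ) (x : Euc n) : ℝ := (‖x‖ ^ 2 + a) ^ (-((n : ℝ) - 2) / 2)

lemma isOpen_pos (a : ℝ) : IsOpen {x : Euc n | 0 < ‖x‖ ^ 2 + a} :=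
  isOpen_lt continuous_const (by fun_prop)

lemma normSq_rpow_contDiffOn (a r : ℝ) :
    ContDiffOn ℝ ∞ (fun x : Euc n => (‖x‖ ^ 2 + a) ^ r) {x | 0 < ‖x‖ ^ 2 + a} := by
  intro x hx
  exact ((((contDiff_norm_sq ℝ).add contDiff_const).contDiffAt).rpow_const_of_ne
    (ne_of_gt hx)).contDiffWithinAt

lemma pd_normSq_rpow {a r : ℝ} {x : Euc n} (hx : 0 < ‖x‖ ^ 2 + a) (i : Fin n) :
    pd (fun y : Euc n => (‖y‖ ^ 2 + a) ^ r) (bv i) x = 2 * r * (x i * (‖x‖ ^ 2 + a) ^ (r - 1)) := by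
  have h1 : HasFDerivAt (fun y : Euc n => ‖y‖ ^ 2 + a) (2 • innerSL ℝ x) x :=
    (hasStrictFDerivAt_norm_sq x).hasFDerivAt.add_const a
  have h2 := h1.rpow_const (p := r) (Or.inl hx.ne')
  rw [pd, h2.fderiv]
  simp [EuclideanSpace.inner_single_right]
  ring

lemma pd_coord (i j : Fin n) (x : Euc n) : pd (fun y : Euc n => y i) (bv j) x = if i = j then 1 else 0 := by
  have : HasFDerivAt (fun y : Euc n => y i) (EuclideanSpace.proj (𝕜 := ℝ) i : Euc n →L[ℝ] ℝ) x :=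
    (EuclideanSpace.proj (𝕜 := ℝ) i : Euc n →L[ℝ] ℝ).hasFDerivAt
  rw [pd, this.fderiv]
  simp

lemma contDiff_coord (i : Fin n) : ContDiff ℝ ∞ (fun y : Euc n => y i) :=
  (EuclideanSpace.proj (𝕜 := ℝ) i : Euc n →L[ℝ] ℝ).contDiff

lemma lap_normSq_rpow {a r : ℝ} {x : Euc n} (hx : 0 < ‖x‖ ^ 2 + a) :
    lap (fun y : Euc n => (‖y‖ ^ 2 + a) ^ r) x =
      2 * r * (n * (‖x‖ ^ 2 + a) + 2 * (r - 1) * ‖x‖ ^ 2) * (‖x‖ ^ 2 + a) ^ (r - 2) := by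
  have key : ∀ i : Fin n, pd (pd (fun y : Euc n => (‖y‖ ^ 2 + a) ^ r) (bv i)) (bv i) x =
      2 * r * ((‖x‖ ^ 2 + a) + 2 * (r - 1) * x i ^ 2) * (‖x‖ ^ 2 + a) ^ (r - 2) := by
    intro i
    have h1 : pd (fun y : Euc n => (‖y‖ ^ 2 + a) ^ r) (bv i) =ᶠ[𝓝 x]
        fun y => 2 * r * (y i * (‖y‖ ^ 2 + a) ^ (r - 1)) := by
      filter_upwards [(isOpen_pos a).mem_nhds hx] with y hy using pd_normSq_rpow hy i
    have d1 : DifferentiableAt ℝ (fun y : Euc n => y i) x :=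
      (contDiff_coord i).contDiffAt.differentiableAt (by simp)
    have d2 : DifferentiableAt ℝ (fun y : Euc n => (‖y‖ ^ 2 + a) ^ (r - 1)) x :=
      diffAt_of_smooth (isOpen_pos a) (normSq_rpow_contDiffOn a (r - 1)) hx
    rw [(pd_eventuallyEq h1 _).self_of_nhds, pd_const_mul _ (d1.fun_mul d2), pd_mul d1 d2, pd_coord,
      pd_normSq_rpow hx]
    have : (‖x‖ ^ 2 + a) ^ (r - 1) = (‖x‖ ^ 2 + a) ^ (r - 2) * (‖x‖ ^ 2 + a) := by
      rw [← Real.rpow_add_one hx.ne']; congr 1; ring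
    have h3 : r - 1 - 1 = r - 2 := by ring
    rw [h3, this]
    simp
    ring
  simp only [lap, key]
  rw [← Finset.sum_mul, ← Finset.mul_sum, Finset.sum_add_distrib, ← Finset.mul_sum,
    ← EuclideanSpace.real_norm_sq_eq]
  simp only [Finset.sum_const, Finset.card_univ, Fintype.card_fin, nsmul_eq_mul]

lemma lap_ker {a : ℝ} {x : Euc n} (hx : 0 < ‖x‖ ^ 2 + a) :
    lap (ker n a) x = -(n * (n - 2)) * (a * (‖x‖ ^ 2 + a) ^ (-((n : ℝ) + 2) / 2)) := by
  change lap (fun y : Euc n => (‖y‖ ^ 2 + a) ^ (-((n : ℝ) - 2) / 2)) x = _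
  rw [lap_normSq_rpow hx]
  have : -((n : ℝ) - 2) / 2 - 2 = -((n : ℝ) + 2) / 2 := by ring
  rw [this]
  ring

lemma ker_contDiffOn (a : ℝ) : ContDiffOn ℝ ∞ (ker n a) {x | 0 < ‖x‖ ^ 2 + a} :=
  normSq_rpow_contDiffOn _ _

lemma ker_contDiff {a : ℝ} (ha : 0 < a) : ContDiff ℝ ∞ (ker n a) :=
  contDiffOn_univ.1 ((ker_contDiffOn a).mono fun x _ => by
    have := sq_nonneg ‖x‖
    simp only [mem_ofPred_eq]; linarith)

lemma ker_zero_contDiffOn : ContDiffOn ℝ ∞ (ker n 0) {x | x ≠ 0} :=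
  (ker_contDiffOn 0).mono fun x hx => by
    have : 0 < ‖x‖ := norm_pos_iff.2 hx
    simp only [mem_ofPred_eq]; positivity

lemma lap_ker_zero {x : Euc n} (hx : x ≠ 0) : lap (ker n 0) x = 0 := by
  have : 0 < ‖x‖ := norm_pos_iff.2 hx
  rw [lap_ker (by positivity)]
  simp

lemma ker_zero_eq (x : Euc n) : ker n 0 x = ‖x‖ ^ (-((n : ℝ) - 2)) := by
  rw [ker, add_zero, ← Real.rpow_natCast, ← Real.rpow_mul (norm_nonneg _)]
  congr 1
  push_cast
  ring

lemma measurable_ker (a : ℝ) : Measurable (ker n a) := by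
  unfold ker
  fun_prop

lemma ker_locallyIntegrable (hn : 3 ≤ n) : LocallyIntegrable (ker n 0) := by
  refine locallyIntegrable_of_norm_le_rpow (C := 1) (α := (n : ℝ) - 2) ?_ ?_ ?_
    (measurable_ker 0).aestronglyMeasurable
  · simp; omega
  · simp
  · refine Eventually.of_forall fun x => ?_
    rw [ker_zero_eq, one_mul, Real.norm_of_nonneg (by positivity)]

lemma ker_le (hn : 3 ≤ n) {a : ℝ} (ha : 0 ≤ a) {x : Euc n} (hx : x ≠ 0) :
    ker n a x ≤ ker n 0 x := by
  have : 0 < ‖x‖ := norm_pos_iff.2 hx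
  have hn' : (3 : ℝ) ≤ n := by exact_mod_cast hn
  exact Real.rpow_le_rpow_of_nonpos (by positivity) (by linarith) (by linarith)

lemma ker_nonneg {a : ℝ} (ha : 0 ≤ a) (x : Euc n) : 0 ≤ ker n a x := by
  unfold ker; positivity

/-- The constant `c` with `-Δ |x|^{-(n-2)} = c δ₀`, computed as the total mass of `-Δ` applied to the
regularised kernel. -/
noncomputable def kerConst (n : ℕ) : ℝ :=
  n * (n - 2) * ∫ z : Euc n, (1 + ‖z‖ ^ 2) ^ (-((n : ℝ) + 2) / 2)

lemma integrable_bracket : Integrable fun z : Euc n => (1 + ‖z‖ ^ 2) ^ (-((n : ℝ) + 2) / 2) :=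
  integrable_rpow_neg_one_add_norm_sq (by simp)

lemma kerConst_pos (hn : 3 ≤ n) : 0 < kerConst n := by
  have hn' : (3 : ℝ) ≤ n := by exact_mod_cast hn
  refine mul_pos (mul_pos (by linarith) (by linarith)) ?_
  rw [integral_pos_iff_support_of_nonneg (fun z => by positivity) integrable_bracket]
  have : Function.support (fun z : Euc n => (1 + ‖z‖ ^ 2) ^ (-((n : ℝ) + 2) / 2)) = univ := by
    ext z
    simp only [Function.mem_support, mem_univ, iff_true]
    positivity
  rw [this]
  exact Measure.measure_univ_pos.2 (NeZero.ne _)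

/-- Rescaling `y = ε z` turns the Laplacian of the regularised kernel into a fixed profile. -/
lemma integral_lap_ker_mul {ε : ℝ} (hε : 0 < ε) (f : Euc n → ℝ) :
    ∫ y, lap (ker n (ε ^ 2)) y * f y =
      -(n * (n - 2)) * ∫ z : Euc n, (1 + ‖z‖ ^ 2) ^ (-((n : ℝ) + 2) / 2) * f (ε • z) := by
  have h := Measure.integral_comp_smul_of_nonneg volume
    (fun y : Euc n => lap (ker n (ε ^ 2)) y * f y) ε (hR := hε.le)
  have h1 : ∀ z : Euc n, lap (ker n (ε ^ 2)) (ε • z) = -(n * (n - 2)) *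
      ((ε ^ n)⁻¹ * (1 + ‖z‖ ^ 2) ^ (-((n : ℝ) + 2) / 2)) := by
    intro z
    rw [lap_ker (by positivity)]
    congr 1
    have : ‖ε • z‖ ^ 2 + ε ^ 2 = ε ^ 2 * (1 + ‖z‖ ^ 2) := by
      rw [norm_smul, Real.norm_of_nonneg hε.le]; ring
    rw [this, Real.mul_rpow (by positivity) (by positivity), ← mul_assoc]
    congr 1
    rw [← Real.rpow_natCast ε 2, ← Real.rpow_mul hε.le, ← Real.rpow_add hε, ← Real.rpow_natCast ε n,
      ← Real.rpow_neg hε.le]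
    congr 1
    push_cast
    ring
  simp only [h1] at h
  simp only [finrank_euclideanSpace, Fintype.card_fin, smul_eq_mul] at h
  have h2 : ∫ y, lap (ker n (ε ^ 2)) y * f y = ε ^ n * ∫ z : Euc n, -(n * (n - 2)) *
      ((ε ^ n)⁻¹ * (1 + ‖z‖ ^ 2) ^ (-((n : ℝ) + 2) / 2)) * f (ε • z) := by
    rw [h]; field_simp
  rw [h2, ← integral_const_mul, ← integral_const_mul]
  congr 1
  ext z
  field_simp

/-- `ker n 0` is, up to a constant, a fundamental solution of the Laplacian: `ker n ε²` decreases in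
`ε`, and its Laplacian is an approximate identity, so both sides are limits of
`∫ ker n ε² * lap f` as `ε → 0`. -/
lemma integral_ker_mul_lap (hn : 3 ≤ n) {f : Euc n → ℝ} (hf : ContDiff ℝ ∞ f)
    (hfs : HasCompactSupport f) : ∫ y, ker n 0 y * lap f y = - kerConst n * f 0 := by
  have : NeZero n := ⟨by omega⟩
  obtain ⟨C, hC⟩ := hfs.exists_bound_of_continuous hf.continuous
  have hgc : Continuous (lap f) := (lap_contDiff hf).continuous
  have hgs := lap_hasCompactSupport hfs
  let ε : ℕ → ℝ := fun k => 1 / ((k : ℝ) + 1)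
  have hε : ∀ k, 0 < ε k := fun k => by positivity
  have hε0 : Tendsto ε atTop (𝓝 0) := tendsto_one_div_add_atTop_nhds_zero_nat
  have hne : ∀ᵐ x : Euc n, x ≠ 0 := by
    rw [ae_iff]; simp
  have T1 : Tendsto (fun k => ∫ y, ker n (ε k ^ 2) y * lap f y) atTop
      (𝓝 (∫ y, ker n 0 y * lap f y)) := by
    have hI : Integrable fun y => ker n 0 y * lap f y := by
      have := (ker_locallyIntegrable hn).integrable_smul_right_of_hasCompactSupport hgc hgs
      simpa using this
    refine tendsto_integral_of_dominated_convergence _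
      (fun k => ((measurable_ker _).mul hgc.measurable).aestronglyMeasurable) hI.norm ?_ ?_
    · intro k
      filter_upwards [hne] with x hx
      rw [norm_mul, norm_mul, Real.norm_of_nonneg (ker_nonneg (sq_nonneg _) x),
        Real.norm_of_nonneg (ker_nonneg le_rfl x)]
      gcongr
      exact ker_le hn (sq_nonneg _) hx
    · filter_upwards [hne] with x hx
      refine Tendsto.mul_const _ ?_
      have hx' : 0 < ‖x‖ := norm_pos_iff.2 hx
      have h0 : Tendsto (fun k => ‖x‖ ^ 2 + ε k ^ 2) atTop (𝓝 (‖x‖ ^ 2 + 0)) := by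
        simpa using tendsto_const_nhds.add (hε0.pow 2)
      exact h0.rpow_const (Or.inl (by positivity))
  have T2 : Tendsto (fun k => ∫ y, ker n (ε k ^ 2) y * lap f y) atTop
      (𝓝 (- kerConst n * f 0)) := by
    have e : ∀ k, ∫ y, ker n (ε k ^ 2) y * lap f y = -(n * (n - 2)) *
        ∫ z : Euc n, (1 + ‖z‖ ^ 2) ^ (-((n : ℝ) + 2) / 2) * f (ε k • z) := fun k => by
      rw [integral_mul_lap (ker_contDiff (by have := hε k; positivity)) hf hfs,
        integral_lap_ker_mul (hε k)]
    simp only [e]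
    have : - kerConst n * f 0 = -(n * (n - 2)) *
        ∫ z : Euc n, (1 + ‖z‖ ^ 2) ^ (-((n : ℝ) + 2) / 2) * f 0 := by
      rw [integral_mul_const, kerConst]; ring
    rw [this]
    refine Tendsto.const_mul _ ?_
    refine tendsto_integral_of_dominated_convergence
      (fun z => (1 + ‖z‖ ^ 2) ^ (-((n : ℝ) + 2) / 2) * C) ?_ (integrable_bracket.mul_const C) ?_ ?_
    · intro k
      exact (integrable_bracket.aestronglyMeasurable).mul
        (hf.continuous.comp (continuous_const_smul _)).aestronglyMeasurable
    · intro k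
      refine Eventually.of_forall fun z => ?_
      rw [norm_mul, Real.norm_of_nonneg (by positivity)]
      gcongr
      exact hC _
    · refine Eventually.of_forall fun z => ?_
      refine Tendsto.const_mul _ ?_
      have : Tendsto (fun k => ε k • z) atTop (𝓝 ((0 : ℝ) • z)) := hε0.smul_const z
      rw [zero_smul] at this
      exact (hf.continuous.tendsto 0).comp this
  exact tendsto_nhds_unique T1 T2

lemma conv_ker_lap (hn : 3 ≤ n) {f : Euc n → ℝ} (hf : ContDiff ℝ ∞ f)
    (hfs : HasCompactSupport f) (x : Euc n) : conv (ker n 0) (lap f) x = - kerConst n * f x := by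
  have hs : HasCompactSupport (fun y => f (x - y)) :=
    hfs.comp_homeomorph (Homeomorph.subLeft x)
  have := integral_ker_mul_lap hn (f := fun y => f (x - y)) (hf.comp (by fun_prop)) hs
  simp only [lap_comp_sub_left, sub_zero] at this
  rw [conv_apply, this]

/-- Poisson's equation with a compactly supported right-hand side. -/
lemma exists_lap_eq_of_compactSupport (hn : 3 ≤ n) {f : Euc n → ℝ} (hf : ContDiff ℝ ∞ f)
    (hfs : HasCompactSupport f) : ∃ u : Euc n → ℝ, ContDiff ℝ ∞ u ∧ ∀ x, lap u x = f x := by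
  refine ⟨fun x => (- kerConst n)⁻¹ * conv (ker n 0) f x,
    contDiff_const.mul (conv_contDiff (ker_locallyIntegrable hn) hf hfs), fun x => ?_⟩
  have := kerConst_pos hn
  rw [lap_const_mul _ isOpen_univ
    (conv_contDiff (ker_locallyIntegrable hn) hf hfs).contDiffOn (mem_univ x),
    lap_conv (ker_locallyIntegrable hn) hf hfs, conv_ker_lap hn hf hfs]
  field_simp

end Kernel

/-! ### Limits of harmonic functions -/

section Regularity

variable {n : ℕ}

lemma conv_comm (f g : Euc n → ℝ) : conv f g = conv g f := by
  ext x
  rw [conv_apply, conv_apply, ← integral_sub_left_eq_self _ volume x]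
  simp [mul_comm]

/-- A smooth mean value property: convolution with a fixed test function `φ` reproduces `f` at the
centre of every ball of radius `r` on which `f` is harmonic. Up to a constant, `φ` is the Laplacian
of the Newtonian kernel with its singularity cut off. -/
lemma exists_reproducing (hn : 3 ≤ n) {r : ℝ} (hr : 0 < r) :
    ∃ φ : Euc n → ℝ, ContDiff ℝ ∞ φ ∧ HasCompactSupport φ ∧
      ∀ f : Euc n → ℝ, ContDiff ℝ ∞ f → HasCompactSupport f →
        ∀ x, (∀ y ∈ Metric.ball x r, lap f y = 0) → f x = conv f φ x := by
  have hsub : {(0 : Euc n)} ⊆ Metric.ball (0 : Euc n) r := by simpa using hr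
  obtain ⟨ψ, hψ, hψs, hψr, hψ1⟩ := exists_cutoff isCompact_singleton Metric.isOpen_ball hsub
  rw [nhdsSet_singleton] at hψ1
  have hc := kerConst_pos hn
  set P : Euc n → ℝ := fun x => (1 - ψ x) * ker n 0 x with hPdef
  have hP : ContDiff ℝ ∞ P := by
    rw [contDiff_iff_contDiffAt]
    intro x
    by_cases hx : x = 0
    · subst hx
      have : P =ᶠ[𝓝 0] fun _ => 0 := by
        filter_upwards [hψ1] with y hy
        simp [hPdef, hy]
      exact contDiffAt_const.congr_of_eventuallyEq this
    · exact (contDiff_const.sub hψ).contDiffAt.mul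
        (ker_zero_contDiffOn.contDiffAt (isOpen_ne.mem_nhds hx))
  have hlap : HasCompactSupport (lap P) := by
    refine HasCompactSupport.of_support_subset_isCompact (K := tsupport ψ) hψs fun x hx => ?_
    by_contra h
    have hx0 : x ≠ 0 := by
      rintro rfl
      exact h (subset_tsupport _ (by simp [hψ1.self_of_nhds]))
    have : P =ᶠ[𝓝 x] ker n 0 := by
      filter_upwards [notMem_tsupport_iff_eventuallyEq.1 h] with y hy
      simp [hPdef, hy]
    exact hx (by rw [(lap_eventuallyEq this).self_of_nhds, lap_ker_zero hx0])
  have key : ∀ f : Euc n → ℝ, ContDiff ℝ ∞ f → HasCompactSupport f →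
      (∀ y ∈ Metric.ball 0 r, lap f y = 0) → - kerConst n * f 0 = ∫ y, lap P y * f y := by
    intro f hf hfs h
    rw [← integral_ker_mul_lap hn hf hfs, ← integral_mul_lap hP hf hfs]
    congr 1
    ext y
    by_cases hy : ψ y = 0
    · simp [hPdef, hy]
    · simp [h y (hψr (subset_tsupport _ hy))]
  refine ⟨fun x => (- kerConst n)⁻¹ * lap P x, contDiff_const.mul (lap_contDiff hP),
    hlap.mul_left, fun f hf hfs x h => ?_⟩
  have := key (fun y => f (x - y)) (hf.comp (by fun_prop))
    (hfs.comp_homeomorph (Homeomorph.subLeft x)) (fun y hy => by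
      rw [lap_comp_sub_left]
      exact h _ (by simpa [dist_eq_norm] using hy))
  rw [conv_comm, conv_apply]
  simp only [mul_assoc, integral_const_mul, ← this, sub_zero]
  field_simp

/-- Locally uniform limits of harmonic functions are smooth and harmonic, because the reproducing
identity of `exists_reproducing` and its Laplacian pass to the limit. -/
lemma harmonic_of_tendsto (hn : 3 ≤ n) {O : Set (Euc n)} (hO : IsOpen O)
    {h : ℕ → Euc n → ℝ} {u : Euc n → ℝ} (hh : ∀ k, ContDiffOn ℝ ∞ (h k) O)
    (hl : ∀ k, ∀ x ∈ O, lap (h k) x = 0) (hu : TendstoLocallyUniformlyOn h u atTop O) :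
    ContDiffOn ℝ ∞ u O ∧ ∀ x ∈ O, lap u x = 0 := by
  have huc : ContinuousOn u O := hu.continuousOn (Frequently.of_forall fun k => (hh k).continuousOn)
  have main : ∀ x₀ ∈ O, ContDiffAt ℝ ∞ u x₀ ∧ lap u x₀ = 0 := by
    intro x₀ hx₀
    obtain ⟨r', hr', hball⟩ := Metric.isOpen_iff.1 hO x₀ hx₀
    obtain ⟨r, hr, hrr⟩ : ∃ r, 0 < r ∧ 2 * r < r' := ⟨r' / 4, by positivity, by linarith⟩
    obtain ⟨χ, hχ, hχs, hχO, hχ1⟩ := exists_cutoff (isCompact_closedBall x₀ (2 * r)) hO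
      ((Metric.closedBall_subset_ball hrr).trans hball)
    have hχb : ∀ y ∈ Metric.closedBall x₀ (2 * r), ∀ᶠ z in 𝓝 y, χ z = 1 := fun y hy =>
      hχ1.filter_mono (nhds_le_nhdsSet hy)
    obtain ⟨φ, hφ, hφs, hrep⟩ := exists_reproducing hn hr
    set g : Euc n → ℝ := fun x => χ x * u x with hg
    let f : ℕ → Euc n → ℝ := fun k x => χ x * h k x
    have hf : ∀ k, ContDiff ℝ ∞ (f k) := fun k => contDiff_cutoff_mul hO hχ hχO (hh k)
    have hfs : ∀ k, HasCompactSupport (f k) := fun k => hχs.mul_right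
    have hgc : Continuous g := by
      refine continuous_of_tsupport fun x hx => ?_
      have hx' : x ∈ O := hχO (tsupport_mul_subset_left hx)
      exact hχ.continuous.continuousAt.mul (huc.continuousAt (hO.mem_nhds hx'))
    have hfh : ∀ k, ∀ x ∈ Metric.ball x₀ r, conv (f k) φ x = h k x := by
      intro k x hx
      have e : ∀ y ∈ Metric.closedBall x₀ (2 * r), f k =ᶠ[𝓝 y] h k := by
        intro y hy
        filter_upwards [hχb y hy] with z hz
        simp [f, hz]
      have hsub : ∀ y ∈ Metric.ball x r, y ∈ Metric.closedBall x₀ (2 * r) := by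
        intro y hy
        rw [Metric.mem_closedBall]
        rw [Metric.mem_ball] at hx hy
        linarith [dist_triangle y x x₀]
      rw [← hrep (f k) (hf k) (hfs k) x fun y hy => ?_]
      · exact (e x (hsub x (Metric.mem_ball_self hr))).self_of_nhds
      · rw [(lap_eventuallyEq (e y (hsub y hy))).self_of_nhds]
        exact hl k y (hball (Metric.closedBall_subset_ball hrr (hsub y hy)))
    have hunif : TendstoUniformlyOn h u atTop (tsupport χ) :=
      (tendstoLocallyUniformlyOn_iff_forall_isCompact hO).1 hu _ hχO hχs
    -- Convolving the cut-off functions against any test function passes to the limit.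
    have hlim : ∀ φ : Euc n → ℝ, Continuous φ → HasCompactSupport φ → ∀ x,
        Tendsto (fun k => conv (f k) φ x) atTop (𝓝 (conv g φ x)) := by
      intro φ hφ hφs x
      simp only [conv_apply]
      have hsx : HasCompactSupport fun t => φ (x - t) :=
        hφs.comp_homeomorph (Homeomorph.subLeft x)
      have hcx : Continuous fun t => φ (x - t) := by fun_prop
      refine tendsto_integral_filter_of_dominated_convergence
        (fun t => (‖g t‖ + ‖χ t‖) * ‖φ (x - t)‖) ?_ ?_ ?_ ?_
      · exact Eventually.of_forall fun k =>
          ((hf k).continuous.mul hcx).aestronglyMeasurable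
      · filter_upwards [Metric.tendstoUniformlyOn_iff.1 hunif 1 one_pos] with k hk
        refine Eventually.of_forall fun t => ?_
        rw [norm_mul]
        gcongr
        by_cases ht : t ∈ tsupport χ
        · have h1 := hk t ht
          rw [dist_comm, dist_eq_norm] at h1
          have h2 : ‖h k t‖ ≤ ‖u t‖ + 1 := by
            have := norm_sub_norm_le (h k t) (u t)
            linarith
          calc ‖f k t‖ = ‖χ t‖ * ‖h k t‖ := norm_mul _ _
            _ ≤ ‖χ t‖ * (‖u t‖ + 1) := by gcongr
            _ = ‖g t‖ + ‖χ t‖ := by rw [hg, norm_mul]; ring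
        · simp [f, image_eq_zero_of_notMem_tsupport ht]
      · exact ((hgc.norm.add hχ.continuous.norm).mul hcx.norm).integrable_of_hasCompactSupport
          hsx.norm.mul_left
      · refine Eventually.of_forall fun t => Tendsto.mul_const _ ?_
        by_cases ht : t ∈ tsupport χ
        · exact (hunif.tendsto_at ht).const_mul _
        · simp [f, hg, image_eq_zero_of_notMem_tsupport ht]
    have hug : ∀ x ∈ Metric.ball x₀ r, u x = conv g φ x := by
      intro x hx
      have hxO : x ∈ O := hball (Metric.ball_subset_ball (by linarith) hx)
      refine tendsto_nhds_unique (hu.tendsto_at hxO) ?_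
      simpa only [hfh _ x hx] using hlim φ hφ.continuous hφs x
    have hue : u =ᶠ[𝓝 x₀] conv g φ := by
      filter_upwards [Metric.ball_mem_nhds x₀ hr] with x hx using hug x hx
    have hgi := hgc.locallyIntegrable (μ := volume)
    refine ⟨(conv_contDiff hgi hφ hφs).contDiffAt.congr_of_eventuallyEq hue, ?_⟩
    rw [(lap_eventuallyEq hue).self_of_nhds, lap_conv hgi hφ hφs]
    refine tendsto_nhds_unique (hlim (lap φ) (lap_contDiff hφ).continuous
      (lap_hasCompactSupport hφs) x₀) ?_
    have : ∀ k, conv (f k) (lap φ) x₀ = 0 := by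
      intro k
      rw [← lap_conv ((hf k).continuous.locallyIntegrable) hφ hφs]
      have e : conv (f k) φ =ᶠ[𝓝 x₀] h k := by
        filter_upwards [Metric.ball_mem_nhds x₀ hr] with x hx using hfh k x hx
      rw [(lap_eventuallyEq e).self_of_nhds]
      exact hl k x₀ hx₀
    simp [this]
  exact ⟨fun x hx => (main x hx).1.contDiffWithinAt, fun x hx => (main x hx).2⟩

end Regularity

/-! ### Real powers in `C(K, ℝ)` -/

section AnalyticPower

variable {K : Type*} [TopologicalSpace K] [CompactSpace K]

lemma binomialSeries_radius_ge [Nonempty K] (a : ℝ) : 1 ≤ (binomialSeries C(K, ℝ) a).radius := by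
  have h : (binomialSeries C(K, ℝ) a).radius = (binomialSeries ℝ a).radius := by
    unfold FormalMultilinearSeries.radius binomialSeries
    simp only [FormalMultilinearSeries.ofScalars_norm]
  rw [h]
  exact binomialSeries_radius_ge_one

/-- Real powers act analytically near the constant function `1` of the Banach algebra `C(K, ℝ)`,
through the binomial series. -/
lemma exists_analyticAt_rpow [Nonempty K] (a : ℝ) : ∃ G : C(K, ℝ) → C(K, ℝ), AnalyticAt ℝ G 0 ∧
    ∀ᶠ w in 𝓝 0, ∀ x, G w x = (1 + w x) ^ a := by
  have hr := binomialSeries_radius_ge (K := K) a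
  have hG := (binomialSeries C(K, ℝ) a).hasFPowerSeriesOnBall (one_pos.trans_le hr)
  refine ⟨_, hG.analyticAt, ?_⟩
  filter_upwards [Metric.eball_mem_nhds (0 : C(K, ℝ)) one_pos] with w hw x
  have h1 := hG.hasSum (Metric.eball_subset_eball hr hw)
  have h2 := (ContinuousMap.evalCLM ℝ x : C(K, ℝ) →L[ℝ] ℝ).hasSum h1
  have hwx : w x ∈ Metric.eball (0 : ℝ) 1 := by
    rw [Metric.mem_eball, edist_zero_right, enorm_eq_nnnorm] at hw ⊢
    refine lt_of_le_of_lt ?_ hw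
    exact_mod_cast w.norm_coe_le_norm x
  have h3 := Real.one_add_rpow_hasFPowerSeriesOnBall_zero (a := a) |>.hasSum hwx
  rw [zero_add] at h2 h3
  refine h2.unique ?_
  have e : ∀ k, (ContinuousMap.evalCLM ℝ x : C(K, ℝ) →L[ℝ] ℝ)
      (binomialSeries C(K, ℝ) a k fun _ => w) = binomialSeries ℝ a k fun _ => w x := by
    intro k
    rw [binomialSeries_apply, binomialSeries_apply]
    simp
  simpa only [e] using h3

/-- If `q` is an analytic curve in `C(K, ℝ)` with `q(t₀) > 0`, then `qᵃ` is analytic at `t₀`: write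
`q(t) = q(t₀) (1 + w(t))` with `w(t₀) = 0`. -/
lemma analyticAt_rpow {a : ℝ} {q Φ : ℝ → C(K, ℝ)} {t₀ : ℝ} (hq : AnalyticAt ℝ q t₀)
    (hpos : ∀ x, 0 < q t₀ x) (hΦ : ∀ᶠ t in 𝓝 t₀, ∀ x, Φ t x = (q t x) ^ a) :
    AnalyticAt ℝ Φ t₀ := by
  rcases isEmpty_or_nonempty K with hK | hK
  · have : Φ = fun _ => 0 := by
      ext t x; exact hK.elim x
    rw [this]; exact analyticAt_const
  obtain ⟨G, hG, hGv⟩ := exists_analyticAt_rpow (K := K) a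
  let b : C(K, ℝ) := ⟨fun x => (q t₀ x) ^ a, (q t₀).continuous.rpow_const
    fun x => Or.inl (hpos x).ne'⟩
  let i : C(K, ℝ) := ⟨fun x => (q t₀ x)⁻¹, (q t₀).continuous.inv₀ fun x => (hpos x).ne'⟩
  let w : ℝ → C(K, ℝ) := fun t => i * q t - 1
  have hw0 : w t₀ = 0 := by
    ext x; simp [w, i, inv_mul_cancel₀ (hpos x).ne']
  have hwa : AnalyticAt ℝ w t₀ := (analyticAt_const.mul hq).sub analyticAt_const
  have hcomp : AnalyticAt ℝ (fun t => b * G (w t)) t₀ := by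
    refine analyticAt_const.mul (AnalyticAt.fun_comp ?_ hwa)
    rw [hw0]; exact hG
  refine hcomp.congr ?_
  have ht : Tendsto w (𝓝 t₀) (𝓝 0) := hw0 ▸ hwa.continuousAt.tendsto
  have hsmall : ∀ᶠ v : C(K, ℝ) in 𝓝 0, ‖v‖ < 1 := by
    filter_upwards [Metric.ball_mem_nhds (0 : C(K, ℝ)) one_pos] with v hv
    simpa using hv
  filter_upwards [hΦ, ht.eventually hGv, ht.eventually hsmall] with t h1 h2 h3
  ext x
  have h4 : |w t x| < 1 := ((w t).norm_coe_le_norm x).trans_lt h3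
  have h5 : 1 + w t x = (q t₀ x)⁻¹ * q t x := by simp [w, i]
  have h6 : 0 < 1 + w t x := by have := (abs_lt.1 h4).1; linarith
  have h7 : q t x = q t₀ x * (1 + w t x) := by rw [h5, mul_inv_cancel_left₀ (hpos x).ne']
  rw [h1, h7, Real.mul_rpow (hpos x).le h6.le]
  simp [b, h2]

end AnalyticPower

/-! ### Runge approximation -/

section Runge

variable {n : ℕ}

/-- The function `x ↦ ker n 0 (x - y)` on `K`, as an element of `C(K, ℝ)`; the value is `0` when it
is not continuous, which can only happen if `y ∈ K`. -/
noncomputable def kerC (K : Set (Euc n)) (y : Euc n) : C(K, ℝ) :=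
  open Classical in
  if h : Continuous (fun x : K => ker n 0 ((x : Euc n) - y)) then ⟨_, h⟩ else 0

lemma kerC_apply {K : Set (Euc n)} {y : Euc n} (hy : y ∉ K) (x : K) :
    kerC K y x = ker n 0 (x - y) := by
  have h : Continuous (fun x : K => ker n 0 ((x : Euc n) - y)) := by
    refine ker_zero_contDiffOn.continuousOn.comp_continuous (by fun_prop) fun x => ?_
    rw [mem_ofPred_eq, sub_ne_zero]
    rintro h
    exact hy (h ▸ x.2)
  simp [kerC, h]

lemma normSq_sub_smul (x y : Euc n) (t : ℝ) :
    ‖x - t • y‖ ^ 2 = ‖x‖ ^ 2 - (2 * t) * inner ℝ x y + t ^ 2 * ‖y‖ ^ 2 := by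
  rw [norm_sub_sq_real, inner_smul_right, norm_smul, mul_pow, Real.norm_eq_abs, sq_abs]
  ring

/-- As an element of `C(K, ℝ)`, the translated kernel depends analytically on the position of its
pole along a ray, as long as the pole stays off `K`. -/
lemma analyticAt_kerC {K : Set (Euc n)} (hK : IsCompact K) {y : Euc n} {t₀ : ℝ}
    (hy : t₀ • y ∉ K) : haveI := isCompact_iff_compactSpace.1 hK
      AnalyticAt ℝ (fun t : ℝ => kerC K (t • y)) t₀ := by
  have := isCompact_iff_compactSpace.1 hK
  let A : C(K, ℝ) := ⟨fun x => ‖(x : Euc n)‖ ^ 2, by fun_prop⟩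
  let B : C(K, ℝ) := ⟨fun x => inner ℝ (x : Euc n) y, by fun_prop⟩
  let D : C(K, ℝ) := ⟨fun _ => ‖y‖ ^ 2, by fun_prop⟩
  let q : ℝ → C(K, ℝ) := fun t => A - (2 * t) • B + t ^ 2 • D
  have hqx : ∀ t x, q t x = ‖(x : Euc n) - t • y‖ ^ 2 := by
    intro t x
    rw [normSq_sub_smul]
    simp [q, A, B, D]
  have hq : AnalyticAt ℝ q t₀ := by
    refine (analyticAt_const.sub ?_).add ?_
    · exact (analyticAt_const.mul analyticAt_id).smul analyticAt_const
    · exact (analyticAt_id.pow 2).smul analyticAt_const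
  refine analyticAt_rpow (a := -((n : ℝ) - 2) / 2) hq (fun x => ?_) ?_
  · rw [hqx]
    have : (x : Euc n) - t₀ • y ≠ 0 := sub_ne_zero.2 fun h => hy (h ▸ x.2)
    have := norm_pos_iff.2 this
    positivity
  · have hc : Continuous fun t : ℝ => t • y := by fun_prop
    filter_upwards [hc.continuousAt.eventually (hK.isClosed.isOpen_compl.mem_nhds hy)] with t ht x
    rw [kerC_apply ht, hqx, ker, add_zero]

/-- Restrictions to `K` of the functions that are harmonic on `ball 0 R`. -/
def harmonicRestrict (K : Set (Euc n)) (R : ℝ) : Submodule ℝ C(K, ℝ) where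
  carrier := {v | ∃ g : Euc n → ℝ, ContDiffOn ℝ ∞ g (Metric.ball 0 R) ∧
    (∀ x ∈ Metric.ball 0 R, lap g x = 0) ∧ ∀ x : K, v x = g x}
  zero_mem' := ⟨fun _ => 0, contDiffOn_const,
    fun x _ => lap_zero_of_eventually (Eventually.of_forall fun _ => rfl), fun x => rfl⟩
  add_mem' := by
    rintro v w ⟨g, hg, hgl, hgv⟩ ⟨g', hg', hgl', hgv'⟩
    refine ⟨fun x => g x + g' x, hg.add hg', fun x hx => ?_, fun x => ?_⟩
    · rw [lap_add Metric.isOpen_ball hg hg' hx, hgl x hx, hgl' x hx, add_zero]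
    · simp [hgv, hgv']
  smul_mem' := by
    rintro c v ⟨g, hg, hgl, hgv⟩
    refine ⟨fun x => c * g x, contDiffOn_const.mul hg, fun x hx => ?_, fun x => ?_⟩
    · rw [lap_const_mul c Metric.isOpen_ball hg hx, hgl x hx, mul_zero]
    · simp [hgv]

lemma kerC_mem {K : Set (Euc n)} {R : ℝ} {y : Euc n} (hy : y ∉ K) (hyR : R ≤ ‖y‖) :
    kerC K y ∈ harmonicRestrict K R := by
  have hne : ∀ x ∈ Metric.ball (0 : Euc n) R, x - y ≠ 0 := by
    intro x hx h
    rw [sub_eq_zero] at h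
    rw [mem_ball_zero_iff, h] at hx
    linarith
  refine ⟨fun x => ker n 0 (x - y), ?_, fun x hx => ?_, fun x => kerC_apply hy x⟩
  · exact ker_zero_contDiffOn.comp (by fun_prop) hne
  · rw [lap_comp_sub_right, lap_ker_zero (hne x hx)]

/-- Pole pushing: a functional that kills the functions harmonic on a ball kills every translate of
the kernel with pole off `K`, because the pole can be moved to infinity along a ray that avoids the
star-shaped set `K`. -/
lemma apply_kerC_eq_zero {K : Set (Euc n)} (hK : IsCompact K) (hK0 : 0 ∈ K)
    (hstar : StarConvex ℝ 0 K) {R : ℝ} (ℓ : haveI := isCompact_iff_compactSpace.1 hK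
      C(K, ℝ) →L[ℝ] ℝ) (hℓ : ∀ v ∈ harmonicRestrict K R, ℓ v = 0) {y : Euc n} (hy : y ∉ K) :
    ℓ (kerC K y) = 0 := by
  have := isCompact_iff_compactSpace.1 hK
  have hy0 : 0 < ‖y‖ := norm_pos_iff.2 fun h => hy (h ▸ hK0)
  have hray : ∀ t : ℝ, 1 ≤ t → t • y ∉ K := by
    intro t ht h
    have := hstar.smul_mem h (inv_nonneg.2 (by linarith)) (inv_le_one_of_one_le₀ ht)
    rw [smul_smul, inv_mul_cancel₀ (by linarith), one_smul] at this
    exact hy this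
  have ha : AnalyticOnNhd ℝ (fun t : ℝ => ℓ (kerC K (t • y))) (Ici 1) := fun t ht =>
    (ℓ.analyticAt _).fun_comp (analyticAt_kerC hK (hray t ht))
  have hz0 : 1 ≤ |R| / ‖y‖ + 2 := by
    have : 0 ≤ |R| / ‖y‖ := by positivity
    linarith
  have := ha.eqOn_zero_of_preconnected_of_eventuallyEq_zero isPreconnected_Ici
    (z₀ := |R| / ‖y‖ + 2) hz0 (by
      filter_upwards [Ioi_mem_nhds (show |R| / ‖y‖ + 1 < |R| / ‖y‖ + 2 by linarith)] with t ht
      have ht' : |R| / ‖y‖ + 1 < t := ht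
      have h0 : 0 ≤ |R| / ‖y‖ := by positivity
      refine hℓ _ (kerC_mem (hray t (by linarith)) ?_)
      rw [norm_smul, Real.norm_of_nonneg (by linarith)]
      calc R ≤ |R| := le_abs_self R
        _ = |R| / ‖y‖ * ‖y‖ := by field_simp
        _ ≤ t * ‖y‖ := by gcongr; linarith)
  simpa using this (mem_Ici.2 le_rfl)

/-- A functional that kills all translates of the kernel with pole off `K` kills every function
harmonic near `K`. Such a function is a superposition of these translates: if `f` is its product
with a cutoff equal to `1` near `K`, then `f = -c⁻¹ ∫ lap f(y) ker(· - y) dy`, and `lap f` vanishes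
near `K`. -/
lemma apply_eq_zero_of_kerC (hn : 3 ≤ n) {K O : Set (Euc n)} (hK : IsCompact K) (hO : IsOpen O)
    (hKO : K ⊆ O) {h : Euc n → ℝ} (hh : ContDiffOn ℝ ∞ h O) (hl : ∀ x ∈ O, lap h x = 0)
    (ℓ : haveI := isCompact_iff_compactSpace.1 hK
      C(K, ℝ) →L[ℝ] ℝ) (hℓ : ∀ y ∉ K, ℓ (kerC K y) = 0) (v : C(K, ℝ)) (hv : ∀ x : K, v x = h x) :
    ℓ v = 0 := by
  have := isCompact_iff_compactSpace.1 hK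
  obtain ⟨χ, hχ, hχs, hχO, hχ1⟩ := exists_cutoff hK hO hKO
  set f : Euc n → ℝ := fun x => χ x * h x with hfdef
  have hf : ContDiff ℝ ∞ f := contDiff_cutoff_mul hO hχ hχO hh
  have hfs : HasCompactSupport f := hχs.mul_right
  obtain ⟨W, hW, hKW, hW1⟩ := eventually_nhdsSet_iff_exists.1 hχ1
  obtain ⟨δ, hδ, hδW⟩ := hK.exists_cthickening_subset_open (hW.inter hO) (subset_inter hKW hKO)
  have hfh : ∀ x ∈ W ∩ O, f =ᶠ[𝓝 x] h := by
    intro x hx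
    filter_upwards [hW.mem_nhds hx.1] with y hy
    simp [hfdef, hW1 y hy]
  have hfar : ∀ y, lap f y ≠ 0 → ∀ x : K, δ < ‖(x : Euc n) - y‖ := by
    intro y hy x
    by_contra! hc
    have : y ∈ W ∩ O := hδW (Metric.mem_cthickening_of_dist_le y x δ K x.2 (by
      rwa [dist_comm, dist_eq_norm]))
    exact hy (by rw [(lap_eventuallyEq (hfh y this)).self_of_nhds]; exact hl y this.2)
  -- `Ψ` truncates the singularity of the kernel; it agrees with the kernel on the support of `lap f`
  -- and makes the integrand a continuous map into `C(K, ℝ)`.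
  let Ψ : C(Euc n × K, ℝ) :=
    ⟨fun p => (max (‖(p.2 : Euc n) - p.1‖ ^ 2) (δ ^ 2)) ^ (-((n : ℝ) - 2) / 2), by
      refine Continuous.rpow_const (by fun_prop) fun p => Or.inl (ne_of_gt ?_)
      exact lt_max_of_lt_right (by positivity)⟩
  have hΨ : ∀ y (x : K), δ < ‖(x : Euc n) - y‖ → Ψ (y, x) = ker n 0 (x - y) := by
    intro y x hxy
    simp only [Ψ, ContinuousMap.coe_mk, ker, add_zero]
    rw [max_eq_left (by gcongr)]
  have hρ : ∀ y, lap f y • Ψ.curry y = lap f y • kerC K y := by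
    intro y
    by_cases hy : lap f y = 0
    · simp [hy]
    · have hyK : y ∉ K := fun h => by
        have := hfar y hy ⟨y, h⟩
        simp at this
        linarith
      ext x
      simp only [ContinuousMap.smul_apply, ContinuousMap.curry_apply, hΨ y x (hfar y hy x),
        kerC_apply hyK]
  have hI : Integrable fun y => lap f y • Ψ.curry y :=
    ((lap_contDiff hf).continuous.smul Ψ.curry.continuous).integrable_of_hasCompactSupport
      (lap_hasCompactSupport hfs).smul_right
  have hrep : ∫ y, lap f y • Ψ.curry y = (- kerConst n) • v := by
    ext x
    rw [ContinuousMap.integral_apply hI]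
    have hx : x.1 ∈ W ∩ O := ⟨hKW x.2, hKO x.2⟩
    have := conv_ker_lap hn hf hfs x
    rw [(hfh x hx).self_of_nhds, ← hv, conv_comm, conv_apply] at this
    rw [ContinuousMap.smul_apply, smul_eq_mul, ← this]
    congr 1
    ext y
    by_cases hy : lap f y = 0
    · simp [hy]
    · simp [hΨ y x (hfar y hy x)]
  have h0 : ℓ (∫ y, lap f y • Ψ.curry y) = 0 := by
    rw [← ContinuousLinearMap.integral_comp_comm ℓ hI]
    have : ∀ y, ℓ (lap f y • Ψ.curry y) = 0 := by
      intro y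
      by_cases hy : y ∈ K
      · have : lap f y = 0 := by
          by_contra hne
          have := hfar y hne ⟨y, hy⟩
          simp at this
          linarith
        simp [this]
      · rw [hρ, map_smul, hℓ y hy, smul_zero]
    simp [this]
  rw [hrep, map_smul, smul_eq_mul] at h0
  have := kerConst_pos hn
  exact (mul_eq_zero.1 h0).resolve_left (by linarith)

/-- **Runge approximation**: a function harmonic near a star-shaped compact set is a uniform limit
there of functions harmonic on arbitrarily large balls. By Hahn–Banach, it suffices that a functional
killing the latter also kills the former. -/
lemma runge (hn : 3 ≤ n) {K O : Set (Euc n)} (hK : IsCompact K)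
    (hstar : StarConvex ℝ 0 K) (hO : IsOpen O) (hKO : K ⊆ O) {h : Euc n → ℝ}
    (hh : ContDiffOn ℝ ∞ h O) (hl : ∀ x ∈ O, lap h x = 0) (R : ℝ) {ε : ℝ} (hε : 0 < ε) :
    ∃ g : Euc n → ℝ, ContDiffOn ℝ ∞ g (Metric.ball 0 R) ∧
      (∀ x ∈ Metric.ball 0 R, lap g x = 0) ∧ ∀ x ∈ K, |h x - g x| < ε := by
  rcases K.eq_empty_or_nonempty with rfl | hne
  · exact ⟨fun _ => 0, contDiffOn_const,
      fun x _ => lap_zero_of_eventually (Eventually.of_forall fun _ => rfl), by simp⟩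
  have hK0 : 0 ∈ K := hstar.mem hne
  have := isCompact_iff_compactSpace.1 hK
  let v : C(K, ℝ) := ⟨fun x => h x, (hh.continuousOn.mono hKO).domRestrict⟩
  have hmem : v ∈ closure (harmonicRestrict K R : Set C(K, ℝ)) := by
    by_contra hv
    obtain ⟨ℓ, u, hu, huv⟩ := geometric_hahn_banach_closed_point
      (harmonicRestrict K R).convex.closure isClosed_closure hv
    have hu0 : 0 < u := by simpa using hu 0 (subset_closure (zero_mem _))
    have hz : ∀ w ∈ harmonicRestrict K R, ℓ w = 0 := by
      intro w hw
      by_contra hne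
      have := hu ((u / ℓ w) • w) (subset_closure (Submodule.smul_mem _ _ hw))
      rw [map_smul, smul_eq_mul, div_mul_cancel₀ _ hne] at this
      exact lt_irrefl _ this
    have : ℓ v = 0 := apply_eq_zero_of_kerC hn hK hO hKO hh hl ℓ
      (fun y hy => apply_kerC_eq_zero hK hK0 hstar ℓ hz hy) v fun x => rfl
    linarith
  obtain ⟨w, ⟨g, hg, hgl, hgw⟩, hw⟩ := Metric.mem_closure_iff.1 hmem ε hε
  refine ⟨g, hg, hgl, fun x hx => ?_⟩
  have := (ContinuousMap.dist_apply_le_dist (f := v) (g := w) ⟨x, hx⟩).trans_lt hw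
  rwa [Real.dist_eq, hgw] at this

end Runge

/-! ### Poisson's equation on star-shaped open sets -/

section Poisson

variable {n : ℕ}

/-- A star-shaped open set is exhausted by star-shaped compact sets: take the points of norm at most
`m` whose whole segment to the origin keeps distance `1 / (m + 1)` from the complement. -/
lemma exists_exhaustion {U : Set (Euc n)} (hU : IsOpen U) (hstar : StarConvex ℝ 0 U) :
    ∃ K : ℕ → Set (Euc n), (∀ m, IsCompact (K m)) ∧ (∀ m, StarConvex ℝ 0 (K m)) ∧
      (∀ m, K m ⊆ interior (K (m + 1))) ∧ (∀ m, K m ⊆ U) ∧ ∀ x ∈ U, ∃ m, x ∈ K m := by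
  let K : ℕ → Set (Euc n) := fun m => Metric.closedBall 0 m ∩
    {x | ∀ t ∈ Icc (0 : ℝ) 1, ∀ z ∉ U, 1 / ((m : ℝ) + 1) ≤ ‖t • x - z‖}
  refine ⟨K, fun m => ?_, fun m => ?_, fun m x hx => ?_, fun m x hx => ?_, fun x hx => ?_⟩
  · refine (isCompact_closedBall _ _).inter_right ?_
    simp only [ofPred_forall]
    exact isClosed_iInter fun t => isClosed_iInter fun _ => isClosed_iInter fun z =>
      isClosed_iInter fun _ => isClosed_le continuous_const (by fun_prop)
  · rw [starConvex_zero_iff]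
    rintro x ⟨hx, hx'⟩ a ha0 ha1
    refine ⟨?_, fun t ht z hz => ?_⟩
    · rw [mem_closedBall_zero_iff] at hx ⊢
      rw [norm_smul, Real.norm_of_nonneg ha0]
      exact (mul_le_of_le_one_left (norm_nonneg _) ha1).trans hx
    · rw [smul_smul]
      exact hx' _ ⟨mul_nonneg ht.1 ha0, mul_le_one₀ ht.2 ha0 ha1⟩ z hz
  · have hd : 1 / (((m + 1 : ℕ) : ℝ) + 1) < 1 / ((m : ℝ) + 1) := by
      push_cast
      gcongr
      linarith
    have hd1 : 1 / ((m : ℝ) + 1) ≤ 1 := by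
      rw [div_le_one (by positivity)]; linarith [(Nat.cast_nonneg m : (0 : ℝ) ≤ m)]
    have hp : 0 < 1 / (((m + 1 : ℕ) : ℝ) + 1) := by positivity
    rw [mem_interior_iff_mem_nhds]
    filter_upwards [Metric.ball_mem_nhds x (sub_pos.2 hd)] with y hy
    rw [mem_ball_iff_norm] at hy
    refine ⟨?_, fun t ht z hz => ?_⟩
    · have := hx.1
      rw [mem_closedBall_zero_iff] at this ⊢
      have h2 := norm_sub_norm_le y x
      push_cast
      linarith
    · have h1 := hx.2 t ht z hz
      have h2 : ‖t • x - z‖ ≤ ‖t • y - z‖ + ‖t • (y - x)‖ := by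
        rw [smul_sub, ← norm_neg (t • y - t • x)]
        refine le_trans (le_of_eq ?_) (norm_add_le _ _)
        congr 1; abel
      have h3 : ‖t • (y - x)‖ ≤ ‖y - x‖ := by
        rw [norm_smul, Real.norm_of_nonneg ht.1]
        exact mul_le_of_le_one_left (norm_nonneg _) ht.2
      linarith
  · by_contra hxU
    have := hx.2 1 ⟨zero_le_one, le_rfl⟩ x hxU
    have hp : 0 < 1 / ((m : ℝ) + 1) := by positivity
    simp only [one_smul, sub_self, norm_zero] at this
    linarith
  · have hS : IsCompact ((fun t : ℝ => t • x) '' Icc 0 1) := isCompact_Icc.image (by fun_prop)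
    obtain ⟨δ, hδ, hδU⟩ := hS.exists_cthickening_subset_open hU (by
      rintro _ ⟨t, ht, rfl⟩
      exact hstar.smul_mem hx ht.1 ht.2)
    obtain ⟨m₁, hm₁⟩ := exists_nat_one_div_lt hδ
    obtain ⟨m₂, hm₂⟩ := exists_nat_ge ‖x‖
    refine ⟨max m₁ m₂, ?_, fun t ht z hz => ?_⟩
    · rw [mem_closedBall_zero_iff]
      exact hm₂.trans (by exact_mod_cast le_max_right _ _)
    · by_contra! hlt
      refine hz (hδU (Metric.mem_cthickening_of_dist_le z (t • x) δ _ ⟨t, ht, rfl⟩ ?_))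
      rw [dist_comm, dist_eq_norm]
      refine hlt.le.trans (le_trans ?_ hm₁.le)
      gcongr
      exact le_max_left _ _

/-- **Poisson's equation** is solvable on star-shaped open sets, for every smooth right-hand
side. The Mittag-Leffler argument: solve on the sets of an exhaustion, and use `runge` to make
consecutive solutions differ by at most `2⁻ᵐ`. -/
lemma exists_lap_eq (hn : 3 ≤ n) {U : Set (Euc n)} (hU : IsOpen U) (hstar : StarConvex ℝ 0 U)
    {f : Euc n → ℝ} (hf : ContDiffOn ℝ ∞ f U) :
    ∃ u : Euc n → ℝ, ContDiffOn ℝ ∞ u U ∧ ∀ x ∈ U, lap u x = f x := by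
  obtain ⟨K, hK, hKs, hKi, hKU, hUK⟩ := exists_exhaustion hU hstar
  have hmono : Monotone K := monotone_nat_of_le_succ fun m => (hKi m).trans interior_subset
  let P : ℕ → (Euc n → ℝ) → Prop := fun m u => ContDiffOn ℝ ∞ u (interior (K (m + 1))) ∧
    ∀ x ∈ interior (K (m + 1)), lap u x = f x
  have hv : ∀ m, ∃ v, ContDiff ℝ ∞ v ∧ P m v := by
    intro m
    obtain ⟨χ, hχ, hχs, hχU, hχ1⟩ := exists_cutoff (hK (m + 1)) hU (hKU (m + 1))
    obtain ⟨v, hv, hvl⟩ := exists_lap_eq_of_compactSupport hn (contDiff_cutoff_mul hU hχ hχU hf)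
      hχs.mul_right
    refine ⟨v, hv, hv.contDiffOn, fun x hx => ?_⟩
    rw [hvl, hχ1.self_of_nhdsSet x (interior_subset hx), one_mul]
  -- Each local solution is corrected by a harmonic function so as to be close to the previous one.
  have hstep : ∀ (m : ℕ) (u : {u // P m u}), ∃ u' : {u // P (m + 1) u},
      ∀ x ∈ K m, |u'.1 x - u.1 x| < (1 / 2) ^ m := by
    rintro m ⟨u, hu, hul⟩
    obtain ⟨v, hv, hvs, hvl⟩ := hv (m + 1)
    have hsub : interior (K (m + 1)) ⊆ interior (K (m + 1 + 1)) :=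
      interior_mono (hmono (Nat.le_succ _))
    obtain ⟨R, hR⟩ := (hK (m + 1 + 1)).isBounded.subset_ball 0
    obtain ⟨g, hg, hgl, hgε⟩ := runge hn (hK m) (hKs m) isOpen_interior (hKi m)
      (h := fun x => v x - u x) (hv.contDiffOn.sub hu) (fun x hx => by
        rw [lap_sub isOpen_interior hv.contDiffOn hu hx, hvl x (hsub hx), hul x hx, sub_self])
      R (ε := (1 / 2) ^ m) (by positivity)
    have hgs := hg.mono (interior_subset.trans hR)
    refine ⟨⟨fun x => v x - g x, hv.contDiffOn.sub hgs, fun x hx => ?_⟩, fun x hx => ?_⟩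
    · rw [lap_sub isOpen_interior hv.contDiffOn hgs hx, hvl x hx, hgl x (hR (interior_subset hx)),
        sub_zero]
    · convert hgε x hx using 2
      ring
  choose next hnext using hstep
  obtain ⟨v₀, -, hv₀⟩ := hv 0
  let s : ∀ m, {u // P m u} := fun m => Nat.rec ⟨v₀, hv₀⟩ next m
  have hs : ∀ m, ∀ x ∈ K m, |(s (m + 1)).1 x - (s m).1 x| < (1 / 2) ^ m := fun m x hx =>
    hnext m (s m) x hx
  let u : Euc n → ℝ := fun x => limUnder atTop fun m => (s m).1 x
  have hgeo : ∀ M, ∀ x ∈ K M, ∀ k, dist ((s (k + M)).1 x) ((s (k + 1 + M)).1 x) ≤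
      (1 / 2) ^ M * (1 / 2) ^ k := by
    intro M x hx k
    have := (hs (k + M) x (hmono (Nat.le_add_left _ _) hx)).le
    rw [dist_comm, Real.dist_eq, ← pow_add, add_comm M k, add_right_comm]
    exact this
  have hlim : ∀ M, ∀ x ∈ K M, Tendsto (fun k => (s (k + M)).1 x) atTop (𝓝 (u x)) := by
    intro M x hx
    have h1 := cauchySeq_of_le_geometric (1 / 2) ((1 / 2) ^ M) (by norm_num) (hgeo M x hx)
    obtain ⟨l, hl⟩ := cauchySeq_tendsto_of_complete h1
    have h2 : Tendsto (fun k => (s k).1 x) atTop (𝓝 l) := (tendsto_add_atTop_iff_nat M).1 hl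
    rwa [show u x = l from h2.limUnder_eq]
  have hloc : ∀ M, ContDiffOn ℝ ∞ u (interior (K M)) ∧ ∀ x ∈ interior (K M), lap u x = f x := by
    intro M
    have hsk : ∀ k, ContDiffOn ℝ ∞ (s (k + M)).1 (interior (K M)) ∧
        ∀ x ∈ interior (K M), lap (s (k + M)).1 x = f x := by
      intro k
      have hsub : interior (K M) ⊆ interior (K (k + M + 1)) := interior_mono (hmono (by omega))
      exact ⟨(s (k + M)).2.1.mono hsub, fun x hx => (s (k + M)).2.2 x (hsub hx)⟩
    have hs0 := hsk 0
    rw [zero_add] at hs0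
    have hunif : TendstoUniformlyOn (fun k x => (s (k + M)).1 x - (s M).1 x)
        (fun x => u x - (s M).1 x) atTop (interior (K M)) := by
      rw [Metric.tendstoUniformlyOn_iff]
      intro ε hε
      have h0 : Tendsto (fun k : ℕ => (1 / 2 : ℝ) ^ M * (1 / 2) ^ k / (1 - 1 / 2)) atTop (𝓝 0) := by
        have := ((tendsto_pow_atTop_nhds_zero_of_lt_one (r := (1 / 2 : ℝ)) (by norm_num)
          (by norm_num)).const_mul ((1 / 2 : ℝ) ^ M)).div_const (1 - 1 / 2)
        simpa using this
      filter_upwards [h0.eventually (gt_mem_nhds hε)] with k hk x hx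
      have hx' := interior_subset hx
      have := dist_le_of_le_geometric_of_tendsto (1 / 2) ((1 / 2) ^ M) (by norm_num)
        (hgeo M x hx') (hlim M x hx') k
      rw [dist_sub_right, dist_comm]
      exact this.trans_lt hk
    obtain ⟨h1, h2⟩ := harmonic_of_tendsto hn isOpen_interior
      (fun k => (hsk k).1.sub hs0.1) (fun k x hx => by
        rw [lap_sub isOpen_interior (hsk k).1 hs0.1 hx, (hsk k).2 x hx, hs0.2 x hx, sub_self])
      hunif.tendstoLocallyUniformlyOn
    -- `u - s M` is a uniform limit of the harmonic functions `s (k + M) - s M`.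
    have hu : u = fun x => (u x - (s M).1 x) + (s M).1 x := by ext; ring
    rw [hu]
    refine ⟨h1.add hs0.1, fun x hx => ?_⟩
    rw [lap_add isOpen_interior h1 hs0.1 hx, h2 x hx, hs0.2 x hx, zero_add]
  refine ⟨u, fun x hx => ?_, fun x hx => ?_⟩
  · obtain ⟨m, hm⟩ := hUK x hx
    exact (((hloc (m + 1)).1 x (hKi m hm)).contDiffAt
      (isOpen_interior.mem_nhds (hKi m hm))).contDiffWithinAt
  · obtain ⟨m, hm⟩ := hUK x hx
    exact (hloc (m + 1)).2 x (hKi m hm)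

end Poisson

/-! ### Radial potentials -/

section RadialIntegral

variable {n : ℕ} {H : Type} [NormedAddCommGroup H] [NormedSpace ℝ H]

/-- The radial moment `x ↦ ∫₀¹ tᵐ α(t x) dt`. -/
noncomputable def radial (m : ℕ) (α : Euc n → H) (x : Euc n) : H :=
  ∫ t in (0 : ℝ)..1, t ^ m • α (t • x)

lemma radial_continuousOn {U : Set (Euc n)} (hstar : StarConvex ℝ 0 U) {α : Euc n → H}
    (hα : ContinuousOn α U) (m : ℕ) {x : Euc n} (hx : x ∈ U) :
    ContinuousOn (fun t : ℝ => t ^ m • α (t • x)) (Icc 0 1) := by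
  refine (continuous_pow m).continuousOn.smul (hα.comp (by fun_prop) fun t ht => ?_)
  exact hstar.smul_mem hx ht.1 ht.2

/-- Differentiation under the integral sign, the derivative raising the weight by one. -/
lemma hasFDerivAt_radial {U : Set (Euc n)} (hU : IsOpen U) (hstar : StarConvex ℝ 0 U)
    {α : Euc n → H} (hα : ContDiffOn ℝ ∞ α U) (m : ℕ) {x : Euc n} (hx : x ∈ U) :
    HasFDerivAt (radial m α) (radial (m + 1) (fderiv ℝ α) x) x := by
  have hα' : ContinuousOn (fderiv ℝ α) U := hα.continuousOn_fderiv_of_isOpen hU (by simp)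
  have hS : IsCompact ((fun t : ℝ => t • x) '' Icc 0 1) := isCompact_Icc.image (by fun_prop)
  obtain ⟨δ, hδ, hδU⟩ := hS.exists_cthickening_subset_open hU (by
    rintro _ ⟨t, ht, rfl⟩
    exact hstar.smul_mem hx ht.1 ht.2)
  obtain ⟨C, hC⟩ := hS.cthickening.exists_bound_of_continuousOn (hα'.mono hδU)
  have hmem : ∀ t ∈ Icc (0 : ℝ) 1, ∀ y ∈ Metric.ball x δ,
      t • y ∈ Metric.cthickening δ ((fun t : ℝ => t • x) '' Icc 0 1) := by
    intro t ht y hy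
    refine Metric.mem_cthickening_of_dist_le _ (t • x) δ _ ⟨t, ht, rfl⟩ ?_
    rw [dist_eq_norm, ← smul_sub, norm_smul, Real.norm_of_nonneg ht.1]
    rw [mem_ball_iff_norm] at hy
    exact (mul_le_of_le_one_left (norm_nonneg _) ht.2).trans hy.le
  have hbU : ∀ y ∈ Metric.ball x δ, y ∈ U := fun y hy => by
    simpa using hδU (hmem 1 ⟨zero_le_one, le_rfl⟩ y hy)
  have hu : uIoc (0 : ℝ) 1 ⊆ Icc 0 1 := by
    rw [uIoc_of_le zero_le_one]; exact Ioc_subset_Icc_self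
  have hii : ∀ {V : Type} [NormedAddCommGroup V] {g : ℝ → V}, ContinuousOn g (Icc 0 1) →
      IntervalIntegrable g volume 0 1 := fun hg =>
    ContinuousOn.intervalIntegrable (by rwa [uIcc_of_le zero_le_one])
  refine intervalIntegral.hasFDerivAt_integral_of_dominated_of_fderiv_le
    (F' := fun y t => t ^ (m + 1) • fderiv ℝ α (t • y)) (bound := fun _ => C)
    (Metric.ball_mem_nhds x hδ) ?_ ?_ ?_ ?_ ?_ ?_
  · filter_upwards [Metric.ball_mem_nhds x hδ] with y hy
    exact (intervalIntegrable_iff.1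
      (hii (radial_continuousOn hstar hα.continuousOn m (hbU y hy)))).aestronglyMeasurable
  · exact hii (radial_continuousOn hstar hα.continuousOn m hx)
  · exact (intervalIntegrable_iff.1
      (hii (radial_continuousOn hstar hα' (m + 1) hx))).aestronglyMeasurable
  · refine Eventually.of_forall fun t ht y hy => ?_
    have ht' := hu ht
    rw [norm_smul, norm_pow, Real.norm_of_nonneg ht'.1]
    exact (mul_le_of_le_one_left (norm_nonneg _) (pow_le_one₀ ht'.1 ht'.2)).trans
      (hC _ (hmem t ht' y hy))
  · exact intervalIntegrable_const
  · refine Eventually.of_forall fun t ht y hy => ?_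
    have hd : HasFDerivAt α (fderiv ℝ α (t • y)) (t • y) :=
      (diffAt_of_smooth hU hα (hδU (hmem t (hu ht) y hy))).hasFDerivAt
    have hs : HasFDerivAt (fun y : Euc n => t • y) (t • ContinuousLinearMap.id ℝ (Euc n)) y :=
      (hasFDerivAt_id y).const_smul t
    have := (hd.comp y hs).const_smul (t ^ m)
    have he : t ^ (m + 1) • fderiv ℝ α (t • y) =
        t ^ m • (fderiv ℝ α (t • y)).comp (t • ContinuousLinearMap.id ℝ (Euc n)) := by
      ext v
      simp [pow_succ, mul_smul]
    rw [he]
    exact this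

/-- Smoothness of the radial moments, by induction on the order; the derivative is again a radial
moment, with values in a different space. -/
lemma radial_contDiffOn {U : Set (Euc n)} (hU : IsOpen U) (hstar : StarConvex ℝ 0 U)
    {α : Euc n → H} (hα : ContDiffOn ℝ ∞ α U) (m : ℕ) : ContDiffOn ℝ ∞ (radial m α) U := by
  have main : ∀ (k : ℕ) (H : Type) [NormedAddCommGroup H] [NormedSpace ℝ H] (α : Euc n → H)
      (_ : ContDiffOn ℝ ∞ α U) (m : ℕ), ContDiffOn ℝ k (radial m α) U := by
    intro k
    induction k with
    | zero =>
      intro H _ _ α hα m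
      exact contDiffOn_zero.2 fun x hx =>
        (hasFDerivAt_radial hU hstar hα m hx).continuousAt.continuousWithinAt
    | succ k ih =>
      intro H _ _ α hα m
      push_cast
      rw [contDiffOn_succ_iff_fderiv_of_isOpen hU]
      refine ⟨fun x hx => (hasFDerivAt_radial hU hstar hα m hx).differentiableAt.differentiableWithinAt,
        by simp, ?_⟩
      exact (ih _ (fderiv ℝ α) (hα.fderiv_of_isOpen hU (by simp)) (m + 1)).congr
        fun x hx => (hasFDerivAt_radial hU hstar hα m hx).fderiv
  exact contDiffOn_infty.2 fun k => main k H α hα m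

lemma fderiv_radial_apply {U : Set (Euc n)} (hU : IsOpen U) (hstar : StarConvex ℝ 0 U)
    {α : Euc n → ℝ} (hα : ContDiffOn ℝ ∞ α U) (m : ℕ) {x : Euc n} (hx : x ∈ U) (v : Euc n) :
    fderiv ℝ (radial m α) x v = ∫ t in (0 : ℝ)..1, t ^ (m + 1) * fderiv ℝ α (t • x) v := by
  have hα' : ContinuousOn (fderiv ℝ α) U := hα.continuousOn_fderiv_of_isOpen hU (by simp)
  rw [(hasFDerivAt_radial hU hstar hα m hx).fderiv, radial,
    ContinuousLinearMap.intervalIntegral_apply]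
  · simp
  · exact ContinuousOn.intervalIntegrable (by
      rw [uIcc_of_le zero_le_one]; exact radial_continuousOn hstar hα' (m + 1) hx)

lemma pd_radial {U : Set (Euc n)} (hU : IsOpen U) (hstar : StarConvex ℝ 0 U)
    {α : Euc n → ℝ} (hα : ContDiffOn ℝ ∞ α U) (m : ℕ) {x : Euc n} (hx : x ∈ U) (v : Euc n) :
    pd (radial m α) v x = radial (m + 1) (pd α v) x := by
  rw [pd, fderiv_radial_apply hU hstar hα m hx]
  simp [radial, pd]

/-- The Euler operator `∑ⱼ xⱼ ∂ⱼ`. -/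
lemma sum_coord_mul_pd (f : Euc n → ℝ) (x : Euc n) :
    ∑ j, x j * pd f (bv j) x = fderiv ℝ f x x := by
  have h : ∑ j, x j • bv j = x := by
    simpa using (EuclideanSpace.basisFun (Fin n) ℝ).sum_repr x
  have h2 := congrArg (fderiv ℝ f x) h
  simpa [pd, map_sum] using h2

/-- Euler's identity for the radial moments, from integrating `d/dt (tᵐ⁺¹ α(t x))`. -/
lemma radial_euler {U : Set (Euc n)} (hU : IsOpen U) (hstar : StarConvex ℝ 0 U)
    {α : Euc n → ℝ} (hα : ContDiffOn ℝ ∞ α U) (m : ℕ) {x : Euc n} (hx : x ∈ U) :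
    (m + 1) * radial m α x + ∑ j, x j * pd (radial m α) (bv j) x = α x := by
  have hα' : ContinuousOn (fderiv ℝ α) U := hα.continuousOn_fderiv_of_isOpen hU (by simp)
  have hu : uIcc (0 : ℝ) 1 = Icc 0 1 := uIcc_of_le zero_le_one
  have i1 : IntervalIntegrable (fun t : ℝ => (m + 1) * (t ^ m * α (t • x))) volume 0 1 := by
    refine ContinuousOn.intervalIntegrable ?_
    rw [hu]
    exact continuousOn_const.mul (radial_continuousOn hstar hα.continuousOn m hx)
  have i2 : IntervalIntegrable (fun t : ℝ => t ^ (m + 1) * fderiv ℝ α (t • x) x) volume 0 1 := by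
    refine ContinuousOn.intervalIntegrable ?_
    rw [hu]
    exact radial_continuousOn hstar (hα'.clm_apply continuousOn_const) (m + 1) hx
  rw [sum_coord_mul_pd, fderiv_radial_apply hU hstar hα m hx]
  simp only [radial, smul_eq_mul]
  rw [← intervalIntegral.integral_const_mul, ← intervalIntegral.integral_add i1 i2,
    intervalIntegral.integral_eq_sub_of_hasDerivAt (f := fun t : ℝ => t ^ (m + 1) * α (t • x)) ?_
      (i1.add i2)]
  · simp
  · intro t ht
    rw [hu] at ht
    have hd : HasFDerivAt α (fderiv ℝ α (t • x)) (t • x) :=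
      (diffAt_of_smooth hU hα (hstar.smul_mem hx ht.1 ht.2)).hasFDerivAt
    have h1 : HasDerivAt (fun t : ℝ => t • x) x t := by
      simpa using (hasDerivAt_id t).smul_const x
    have h2 := (hasDerivAt_pow (m + 1) t).mul (hd.comp_hasDerivAt t h1)
    have he : (m + 1) * (t ^ m * α (t • x)) + t ^ (m + 1) * fderiv ℝ α (t • x) x =
        ((m + 1 : ℕ) : ℝ) * t ^ (m + 1 - 1) * α (t • x) +
          t ^ (m + 1) * fderiv ℝ α (t • x) x := by
      rw [Nat.add_sub_cancel]
      push_cast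
      ring
    rw [he]
    exact h2

end RadialIntegral

section Homotopy

variable {n : ℕ}

/-- The radial potential `C_{ij} = xᵢ Gⱼ - xⱼ Gᵢ`, where `G(x) = ∫₀¹ tⁿ⁻² α(t x) dt`. -/
noncomputable def radialPot (α : Fin n → Euc n → ℝ) (i j : Fin n) (x : Euc n) : ℝ :=
  x i * radial (n - 2) (α j) x - x j * radial (n - 2) (α i) x

variable {U : Set (Euc n)} {α : Fin n → Euc n → ℝ}

lemma radialPot_contDiffOn (hU : IsOpen U) (hstar : StarConvex ℝ 0 U)
    (hα : ∀ i, ContDiffOn ℝ ∞ (α i) U) (i j : Fin n) : ContDiffOn ℝ ∞ (radialPot α i j) U :=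
  ((contDiff_coord i).contDiffOn.mul (radial_contDiffOn hU hstar (hα j) _)).sub
    ((contDiff_coord j).contDiffOn.mul (radial_contDiffOn hU hstar (hα i) _))

lemma pd_radialPot (hU : IsOpen U) (hstar : StarConvex ℝ 0 U)
    (hα : ∀ i, ContDiffOn ℝ ∞ (α i) U) {x : Euc n} (hx : x ∈ U) (i j k : Fin n) :
    pd (radialPot α i j) (bv k) x =
      x i * pd (radial (n - 2) (α j)) (bv k) x + radial (n - 2) (α j) x * (if i = k then 1 else 0) -
      (x j * pd (radial (n - 2) (α i)) (bv k) x +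
        radial (n - 2) (α i) x * (if j = k then 1 else 0)) := by
  have hc : ∀ i : Fin n, DifferentiableAt ℝ (fun y : Euc n => y i) x := fun i =>
    (contDiff_coord i).contDiffAt.differentiableAt (by simp)
  have hr : ∀ i, DifferentiableAt ℝ (radial (n - 2) (α i)) x := fun i =>
    diffAt_of_smooth hU (radial_contDiffOn hU hstar (hα i) _) hx
  change pd (fun y => y i * radial (n - 2) (α j) y - y j * radial (n - 2) (α i) y) _ _ = _
  rw [pd_sub ((hc i).fun_mul (hr j)) ((hc j).fun_mul (hr i)), pd_mul (hc i) (hr j),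
    pd_mul (hc j) (hr i), pd_coord, pd_coord]

/-- `radialPot α` is a potential for a divergence-free field `α`: its divergence is
`(n - 1) Gᵢ + ∑ⱼ xⱼ ∂ⱼ Gᵢ - xᵢ ∑ⱼ ∂ⱼ Gⱼ`, where the last sum vanishes and the rest is `αᵢ` by
`radial_euler`. -/
lemma radialPot_div (hn : 2 ≤ n) (hU : IsOpen U) (hstar : StarConvex ℝ 0 U)
    (hα : ∀ i, ContDiffOn ℝ ∞ (α i) U) (hdiv : ∀ x ∈ U, ∑ i, pd (α i) (bv i) x = 0)
    {x : Euc n} (hx : x ∈ U) (i : Fin n) : ∑ j, pd (radialPot α j i) (bv j) x = α i x := by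
  have hG : ∑ j, pd (radial (n - 2) (α j)) (bv j) x = 0 := by
    simp only [pd_radial hU hstar (hα _) _ hx, radial]
    rw [← intervalIntegral.integral_finsetSum fun j _ => ContinuousOn.intervalIntegrable (by
      rw [uIcc_of_le zero_le_one]
      exact radial_continuousOn hstar (pd_contDiffOn hU (hα j) _).continuousOn _ hx)]
    simp only [← Finset.smul_sum]
    refine intervalIntegral.integral_zero_ae (Eventually.of_forall fun t ht => ?_)
    rw [uIoc_of_le zero_le_one] at ht
    rw [hdiv _ (hstar.smul_mem hx ht.1.le ht.2), smul_zero]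
  have hE := radial_euler hU hstar (hα i) (n - 2) hx
  -- `hn` makes the truncated subtraction `n - 2` the true one.
  rw [Nat.cast_sub hn] at hE
  simp only [pd_radialPot hU hstar hα hx, Finset.sum_add_distrib, Finset.sum_sub_distrib,
    ← Finset.mul_sum, hG]
  simp
  linear_combination hE

/-- If `α` is curl-free then so is `G`, and all terms in the cyclic sum cancel. -/
lemma radialPot_closed (hU : IsOpen U) (hstar : StarConvex ℝ 0 U)
    (hα : ∀ i, ContDiffOn ℝ ∞ (α i) U)
    (hcurl : ∀ x ∈ U, ∀ i j, pd (α i) (bv j) x = pd (α j) (bv i) x)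
    {x : Euc n} (hx : x ∈ U) (i j k : Fin n) :
    pd (radialPot α i j) (bv k) x + pd (radialPot α j k) (bv i) x
      + pd (radialPot α k i) (bv j) x = 0 := by
  have hG : ∀ i j, pd (radial (n - 2) (α i)) (bv j) x = pd (radial (n - 2) (α j)) (bv i) x := by
    intro i j
    rw [pd_radial hU hstar (hα _) _ hx, pd_radial hU hstar (hα _) _ hx, radial, radial]
    refine intervalIntegral.integral_congr fun t ht => ?_
    rw [uIcc_of_le zero_le_one] at ht
    simp only [hcurl _ (hstar.smul_mem hx ht.1 ht.2) i j]
  simp only [pd_radialPot hU hstar hα hx]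
  rw [hG k j, hG k i, hG j i]
  simp only [eq_comm (a := k), eq_comm (a := j) (b := i)]
  ring

end Homotopy

/-! ### Construction of the closed potential -/

section Assembly

variable {n : ℕ} {U : Set (Euc n)}

lemma pd_lap {f : Euc n → ℝ} (hU : IsOpen U) (hf : ContDiffOn ℝ ∞ f U) (v : Euc n) {x : Euc n}
    (hx : x ∈ U) : pd (lap f) v x = lap (pd f v) x := by
  have h2 : ∀ w, ContDiffOn ℝ ∞ (pd (pd f w) w) U := fun w =>
    pd_contDiffOn hU (pd_contDiffOn hU hf w) w
  change pd (fun y => ∑ i, pd (pd f (bv i)) (bv i) y) v x = _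
  rw [pd_sum _ fun i _ => diffAt_of_smooth hU (h2 (bv i)) hx]
  refine Finset.sum_congr rfl fun i _ => ?_
  rw [pd_comm hU (pd_contDiffOn hU hf _) hx]
  have h : pd (pd f (bv i)) v =ᶠ[𝓝 x] pd (pd f v) (bv i) := by
    filter_upwards [hU.mem_nhds hx] with y hy using pd_comm hU hf hy _ _
  exact (pd_eventuallyEq h _).self_of_nhds

/-- In dimension two the radial potential works, since every antisymmetric 2-tensor field is closed. -/
lemma potential_two {U : Set (Euc 2)} (hU : IsOpen U) (hstar : StarConvex ℝ 0 U)
    {f : Fin 2 → Euc 2 → ℝ} (hf : ∀ i, ContDiffOn ℝ ∞ (f i) U)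
    (hdiv : ∀ x ∈ U, ∑ i, pd (f i) (bv i) x = 0) :
    ∃ C : Fin 2 → Fin 2 → Euc 2 → ℝ, (∀ i j, ContDiffOn ℝ ∞ (C i j) U) ∧
      (∀ i j x, C i j x = - C j i x) ∧
      (∀ x ∈ U, ∀ i, ∑ j, pd (C j i) (bv j) x = f i x) ∧
      ∀ x ∈ U, ∀ i j k, pd (C i j) (bv k) x + pd (C j k) (bv i) x + pd (C k i) (bv j) x = 0 := by
  refine ⟨radialPot f, radialPot_contDiffOn hU hstar hf, fun i j x => by simp [radialPot],
    fun x hx i => radialPot_div le_rfl hU hstar hf hdiv hx i, fun x hx i j k => ?_⟩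
  have hanti : ∀ i j v, pd (radialPot f i j) v x = - pd (radialPot f j i) v x := by
    intro i j v
    have : radialPot f i j = fun y => - radialPot f j i y := by ext y; simp [radialPot]
    rw [this]
    simp [pd]
  have hself : ∀ i v, pd (radialPot f i i) v x = 0 := fun i v => by linarith [hanti i i v]
  -- Two of the three indices agree, so one term vanishes and the other two cancel.
  have hcases : i = j ∨ j = k ∨ k = i := by omega
  rcases hcases with rfl | rfl | rfl
  · linarith [hself i (bv k), hanti i k (bv i)]
  · linarith [hself j (bv i), hanti i j (bv j)]
  · linarith [hself k (bv j), hanti k j (bv k)]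

/-- In dimension at least three, the potential is `∂ᵢ Aⱼ - ∂ⱼ Aᵢ` corrected by the radial potential of
`∇ ∑ⱼ ∂ⱼ Aⱼ`, where `lap Aᵢ = fᵢ`. -/
lemma potential_three (hn : 3 ≤ n) (hU : IsOpen U) (hstar : StarConvex ℝ 0 U)
    {f : Fin n → Euc n → ℝ} (hf : ∀ i, ContDiffOn ℝ ∞ (f i) U)
    (hdiv : ∀ x ∈ U, ∑ i, pd (f i) (bv i) x = 0) :
    ∃ C : Fin n → Fin n → Euc n → ℝ, (∀ i j, ContDiffOn ℝ ∞ (C i j) U) ∧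
      (∀ i j x, C i j x = - C j i x) ∧
      (∀ x ∈ U, ∀ i, ∑ j, pd (C j i) (bv j) x = f i x) ∧
      ∀ x ∈ U, ∀ i j k, pd (C i j) (bv k) x + pd (C j k) (bv i) x + pd (C k i) (bv j) x = 0 := by
  choose A hA hlap using fun i => exists_lap_eq hn hU hstar (hf i)
  have hdA : ∀ i v, ContDiffOn ℝ ∞ (pd (A i) v) U := fun i v => pd_contDiffOn hU (hA i) v
  set φ : Euc n → ℝ := fun y => ∑ j, pd (A j) (bv j) y with hφdef
  have hφ : ContDiffOn ℝ ∞ φ U := ContDiffOn.sum fun j _ => hdA j _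
  set α : Fin n → Euc n → ℝ := fun i => pd φ (bv i) with hαdef
  have hα : ∀ i, ContDiffOn ℝ ∞ (α i) U := fun i => pd_contDiffOn hU hφ _
  have hcurl : ∀ x ∈ U, ∀ i j, pd (α i) (bv j) x = pd (α j) (bv i) x := fun x hx i j =>
    pd_comm hU hφ hx _ _
  have hpφ : ∀ x ∈ U, ∀ v, pd φ v x = ∑ j, pd (pd (A j) (bv j)) v x := fun x hx v =>
    pd_sum _ (fun j _ => diffAt_of_smooth hU (hdA j _) hx) v
  -- `φ` is harmonic: its Laplacian is the divergence of the field `f`.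
  have hdivα : ∀ x ∈ U, ∑ i, pd (α i) (bv i) x = 0 := by
    intro x hx
    have h1 : ∀ i, pd (α i) (bv i) x = ∑ j, pd (pd (pd (A j) (bv j)) (bv i)) (bv i) x := by
      intro i
      have h : α i =ᶠ[𝓝 x] fun y => ∑ j, pd (pd (A j) (bv j)) (bv i) y := by
        filter_upwards [hU.mem_nhds hx] with y hy using hpφ y hy _
      rw [(pd_eventuallyEq h _).self_of_nhds]
      exact pd_sum _ (fun j _ => diffAt_of_smooth hU (pd_contDiffOn hU (hdA j _) _) hx) _
    simp only [h1]
    rw [Finset.sum_comm, ← hdiv x hx]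
    refine Finset.sum_congr rfl fun j _ => ?_
    change lap (pd (A j) (bv j)) x = _
    rw [← pd_lap hU (hA j) _ hx]
    have h : lap (A j) =ᶠ[𝓝 x] f j := by
      filter_upwards [hU.mem_nhds hx] with y hy using hlap j y hy
    exact (pd_eventuallyEq h _).self_of_nhds
  have hR := radialPot_contDiffOn hU hstar hα
  have hpC : ∀ x ∈ U, ∀ i j v, pd (fun y => (pd (A j) (bv i) y - pd (A i) (bv j) y) +
      radialPot α i j y) v x =
      (pd (pd (A j) (bv i)) v x - pd (pd (A i) (bv j)) v x) + pd (radialPot α i j) v x := by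
    intro x hx i j v
    rw [pd_add (diffAt_of_smooth hU ((hdA j _).sub (hdA i _)) hx) (diffAt_of_smooth hU (hR i j) hx),
      pd_sub (diffAt_of_smooth hU (hdA j _) hx) (diffAt_of_smooth hU (hdA i _) hx)]
  refine ⟨fun i j y => (pd (A j) (bv i) y - pd (A i) (bv j) y) + radialPot α i j y,
    fun i j => ((hdA j _).sub (hdA i _)).add (hR i j), fun i j x => ?_, fun x hx i => ?_,
    fun x hx i j k => ?_⟩
  · simp only [radialPot]; ring
  · simp only [hpC x hx, Finset.sum_add_distrib, Finset.sum_sub_distrib]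
    rw [radialPot_div (by omega) hU hstar hα hdivα hx i]
    have h1 : ∑ j, pd (pd (A i) (bv j)) (bv j) x = f i x := hlap i x hx
    have h2 : ∑ j, pd (pd (A j) (bv i)) (bv j) x = α i x := by
      simp only [hαdef, hpφ x hx]
      exact Finset.sum_congr rfl fun j _ => pd_comm hU (hA j) hx _ _
    rw [h1, h2]
    ring
  · have h := radialPot_closed hU hstar hα hcurl hx i j k
    simp only [hpC x hx]
    rw [pd_comm hU (hA j) hx (bv i) (bv k), pd_comm hU (hA i) hx (bv j) (bv k),
      pd_comm hU (hA k) hx (bv j) (bv i)]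
    linarith

end Assembly

end DualPoincare

/-- **Strong dual Poincaré lemma for divergence-free vector fields.** On an open
star-shaped subset `U` of `ℝⁿ`, a smooth divergence-free vector field is the divergence
of a smooth antisymmetric 2-tensor field which is moreover closed. -/
theorem strong_dual_poincare_lemma_vector_fields (n : ℕ) (hn : 2 ≤ n)
    (U : Set (EuclideanSpace ℝ (Fin n))) (hU : IsOpen U)
    (c : EuclideanSpace ℝ (Fin n)) (hc : c ∈ U) (hstar : StarConvex ℝ c U)
    (F : EuclideanSpace ℝ (Fin n) → EuclideanSpace ℝ (Fin n))
    (hF : ContDiffOn ℝ (⊤ : ℕ∞) F U)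
    (hdiv : ∀ x ∈ U, ∑ i : Fin n, pd (fun y => F y i) (EuclideanSpace.single i 1) x = 0) :
    ∃ B : EuclideanSpace ℝ (Fin n) → Fin n → Fin n → ℝ, ContDiffOn ℝ (⊤ : ℕ∞) B U ∧
      (∀ x ∈ U, ∀ i j : Fin n, B x i j = - B x j i) ∧
      (∀ x ∈ U, ∀ i : Fin n,
        F x i = ∑ j : Fin n, pd (fun y => B y j i) (EuclideanSpace.single j 1) x) ∧
      (∀ x ∈ U, ∀ i j k : Fin n,
        pd (fun y => B y i j) (EuclideanSpace.single k 1) x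
          + pd (fun y => B y j k) (EuclideanSpace.single i 1) x
          + pd (fun y => B y k i) (EuclideanSpace.single j 1) x = 0) := by
  -- Translate the star centre to the origin.
  have hV : IsOpen ((fun x => x + c) ⁻¹' U) := hU.preimage (by fun_prop)
  have hVstar : StarConvex ℝ 0 ((fun x => x + c) ⁻¹' U) := by
    have h := StarConvex.preimage_add_left (x := (0 : EuclideanSpace ℝ (Fin n))) (z := c)
      (s := U) (by simpa using hstar)
    exact h
  have hG : ∀ i, ContDiffOn ℝ (⊤ : ℕ∞) (fun x => F (x + c) i) ((fun x => x + c) ⁻¹' U) := by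
    intro i
    have h1 : ContDiffOn ℝ (⊤ : ℕ∞) (fun x => F (x + c)) ((fun x => x + c) ⁻¹' U) :=
      hF.comp (by fun_prop) (fun x hx => hx)
    exact (EuclideanSpace.proj (𝕜 := ℝ) i).contDiff.comp_contDiffOn h1
  have hGdiv : ∀ x ∈ (fun x => x + c) ⁻¹' U,
      ∑ i, pd (fun x => F (x + c) i) (EuclideanSpace.single i 1) x = 0 := by
    intro x hx
    rw [← hdiv (x + c) hx]
    refine Finset.sum_congr rfl fun i _ => ?_
    have h := fderiv_comp_add_right (𝕜 := ℝ) (f := fun y => F y i) (x := x) c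
    simp only [pd]
    rw [h]
  obtain ⟨C, hC, hanti, hpot, hclosed⟩ : ∃ C : Fin n → Fin n → EuclideanSpace ℝ (Fin n) → ℝ,
      (∀ i j, ContDiffOn ℝ (⊤ : ℕ∞) (C i j) ((fun x => x + c) ⁻¹' U)) ∧
      (∀ i j x, C i j x = - C j i x) ∧
      (∀ x ∈ (fun x => x + c) ⁻¹' U, ∀ i,
        ∑ j, pd (C j i) (EuclideanSpace.single j 1) x = F (x + c) i) ∧
      ∀ x ∈ (fun x => x + c) ⁻¹' U, ∀ i j k, pd (C i j) (EuclideanSpace.single k 1) x +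
        pd (C j k) (EuclideanSpace.single i 1) x + pd (C k i) (EuclideanSpace.single j 1) x = 0 := by
    obtain rfl | h3 := hn.eq_or_lt
    · exact DualPoincare.potential_two hV hVstar hG hGdiv
    · exact DualPoincare.potential_three h3 hV hVstar hG hGdiv
  have hmem : ∀ x ∈ U, x - c ∈ (fun x => x + c) ⁻¹' U := fun x hx => by simpa using hx
  have htr : ∀ i j v x, pd (fun y => C i j (y - c)) v x = pd (C i j) v (x - c) := by
    intro i j v x
    simp only [pd, fderiv_comp_sub]
  refine ⟨fun y i j => C i j (y - c), ?_, fun x _ i j => hanti i j _, fun x hx i => ?_,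
    fun x hx i j k => ?_⟩
  · exact contDiffOn_pi.2 fun i => contDiffOn_pi.2 fun j =>
      (hC i j).comp (by fun_prop) hmem
  · simp only [htr]
    rw [hpot _ (hmem x hx) i, sub_add_cancel]
  · simp only [htr]
    exact hclosed _ (hmem x hx) i j k
end
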